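/- There exists a constant c_ρ > 0 depending only on ρ (and an absolute constant c for the case ρ = 1) such that the following Berry–Esseen bound under the conjugate measure holds. For each n, let the martingale differences (X_i)_{1≤i≤n} satisfy conditions (A1) and (A4). Set ξ_i = X_i/B_n, ζ_i(λ) = λ ξ_i − λ² ξ_i²/2, Z_n(λ) = ∏_{i=1}^n e^{ζ_i(λ)} / E[e^{ζ_i(λ)} | 𝓕_{i-1}], and let P_λ be the probability measure on (Ω, 𝓕) with density Z_n(λ) with respect to P. Set b_i(λ) = E[ζ_i(λ) e^{ζ_i(λ)} | 𝓕_{i-1}] / E[e^{ζ_i(λ)} | 𝓕_{i-1}], η_i(λ) = ζ_i(λ) − b_i(λ), and Y_n(λ) = Σ_{i=1}^n η_i(λ), with the convention Y_n(0)/0 = Σ_{i=1}^n ξ_i. Then for any sequence (λ_n) with λ_n ≥ 0 and λ_n γ_n → 0 (i.e. λ_n = o(γ_n^{-1})): [i] if ρ ∈ (0, 1), for all sufficiently large n, sup_{x ∈ ℝ} | P_{λ_n}( Y_n(λ_n)/λ_n ≤ x ) − Φ(x) | ≤ c_ρ ( λ_n^ρ γ_n^ρ + γ_n^ρ + δ_n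 ); [ii] if ρ = 1, for all sufficiently large n, sup_{x ∈ ℝ} | P_{λ_n}( Y_n(λ_n)/λ_n ≤ x ) − Φ(x) | ≤ c ( λ_n γ_n + γ_n |ln γ_n| + δ_n ). -/

import Mathlib

open MeasureTheory Filter
open scoped Topology ENNReal

noncomputable def stdNormalCDF (x : ℝ) : ℝ :=
  (Real.sqrt (2 * Real.pi))⁻¹ * ∫ t in Set.Iic x, Real.exp (-(t ^ 2) / 2)

/-- A finite sequence of square-integrable martingale differences
`X 1, ..., X n` adapted to a filtration `F 0 ⊆ F 1 ⊆ ... ⊆ F n`, with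
`F 0` trivial, `E[X i | F (i-1)] = 0` and `0 < E[(X i)^2] < ∞`. -/
structure MDS (Ω : Type) [mΩ : MeasurableSpace Ω] (P : Measure Ω) where
  n : ℕ
  npos : 0 < n
  F : ℕ → MeasurableSpace Ω
  F_mono : Monotone F
  F_le : ∀ i, F i ≤ mΩ
  F_zero : F 0 = ⊥
  X : ℕ → Ω → ℝ
  meas : ∀ i, 1 ≤ i → i ≤ n → StronglyMeasurable[F i] (X i)
  sq_int : ∀ i, 1 ≤ i → i ≤ n → Integrable (fun ω => (X i ω) ^ 2) P
  mean_zero : ∀ i, 1 ≤ i → i ≤ n → P[X i|F (i - 1)] =ᵐ[P] 0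
  var_pos : ∀ i, 1 ≤ i → i ≤ n → 0 < ∫ ω, (X i ω) ^ 2 ∂P

namespace MDS

variable {Ω : Type} [mΩ : MeasurableSpace Ω] {P : Measure Ω}

/-- `S_n = ∑_{i=1}^n X_i`. -/
noncomputable def S (A : MDS Ω P) : Ω → ℝ := fun ω => ∑ i ∈ Finset.Icc 1 A.n, A.X i ω

/-- `B_n² = ∑_{i=1}^n E[X_i²]`. -/
noncomputable def Bsq (A : MDS Ω P) : ℝ := ∑ i ∈ Finset.Icc 1 A.n, ∫ ω, (A.X i ω) ^ 2 ∂P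

/-- `[S]_n = ∑_{i=1}^n X_i²`. -/
noncomputable def QV (A : MDS Ω P) : Ω → ℝ := fun ω => ∑ i ∈ Finset.Icc 1 A.n, (A.X i ω) ^ 2

/-- `⟨S⟩_n = ∑_{i=1}^n E[X_i² | F_{i-1}]`. -/
noncomputable def CV (A : MDS Ω P) : Ω → ℝ :=
  fun ω => ∑ i ∈ Finset.Icc 1 A.n, (P[fun ω' => (A.X i ω') ^ 2|A.F (i - 1)]) ω

/-- `W_n = S_n / √[S]_n`. -/
noncomputable def W (A : MDS Ω P) : Ω → ℝ := fun ω => A.S ω / Real.sqrt (A.QV ω)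

/-- Condition (A1): `|⟨S⟩_n − B_n²| ≤ δ² B_n²` a.s., with `δ ∈ [0, 1/4]`. -/
def CondA1 (A : MDS Ω P) (δ : ℝ) : Prop :=
  0 ≤ δ ∧ δ ≤ 1 / 4 ∧ ∀ᵐ ω ∂P, |A.CV ω - A.Bsq| ≤ δ ^ 2 * A.Bsq

/-- Condition (A2): `∑_{i=1}^n E[|X_i|^{2+ρ} | F_{i-1}] ≤ ε^ρ B_n^{2+ρ}` a.s.,
with `ε ∈ (0, 1/4]`. -/
def CondA2 (A : MDS Ω P) (ρ ε : ℝ) : Prop :=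
  0 < ε ∧ ε ≤ 1 / 4 ∧
    (∀ i, 1 ≤ i → i ≤ A.n → Integrable (fun ω => |A.X i ω| ^ (2 + ρ)) P) ∧
    ∀ᵐ ω ∂P,
      ∑ i ∈ Finset.Icc 1 A.n, (P[fun ω' => |A.X i ω'| ^ (2 + ρ)|A.F (i - 1)]) ω ≤
        ε ^ ρ * A.Bsq ^ ((2 + ρ) / 2)

/-- Condition (A3): `E[X_i² | F_{i-1}] ≤ κ² B_n²` a.s. for each `i`, with `κ ∈ (0, 1/4]`. -/
def CondA3 (A : MDS Ω P) (κ : ℝ) : Prop :=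
  0 < κ ∧ κ ≤ 1 / 4 ∧
    ∀ i, 1 ≤ i → i ≤ A.n →
      ∀ᵐ ω ∂P, (P[fun ω' => (A.X i ω') ^ 2|A.F (i - 1)]) ω ≤ κ ^ 2 * A.Bsq

/-- Condition (A4): `E[|X_i|^{2+ρ} | F_{i-1}] ≤ (γ B_n)^ρ E[X_i² | F_{i-1}]` a.s.
for each `i`, with `γ ∈ (0, 1/4]`. -/
def CondA4 (A : MDS Ω P) (ρ γ : ℝ) : Prop :=
  0 < γ ∧ γ ≤ 1 / 4 ∧
    (∀ i, 1 ≤ i → i ≤ A.n → Integrable (fun ω => |A.X i ω| ^ (2 + ρ)) P) ∧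
    ∀ i, 1 ≤ i → i ≤ A.n →
      ∀ᵐ ω ∂P,
        (P[fun ω' => |A.X i ω'| ^ (2 + ρ)|A.F (i - 1)]) ω ≤
          (γ * Real.sqrt A.Bsq) ^ ρ * (P[fun ω' => (A.X i ω') ^ 2|A.F (i - 1)]) ω

end MDS


namespace MDS

variable {Ω : Type} [mΩ : MeasurableSpace Ω] {P : Measure Ω}

/-- `ξ_i = X_i / B_n`. -/
noncomputable def xi (A : MDS Ω P) (i : ℕ) : Ω → ℝ := fun ω => A.X i ω / Real.sqrt A.Bsq

/-- `ζ_i(λ) = λ ξ_i − λ² ξ_i² / 2`. -/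
noncomputable def zetaFn (A : MDS Ω P) (lam : ℝ) (i : ℕ) : Ω → ℝ :=
  fun ω => lam * A.xi i ω - lam ^ 2 * (A.xi i ω) ^ 2 / 2

/-- `b_i(λ) = E[ζ_i(λ) e^{ζ_i(λ)} | F_{i-1}] / E[e^{ζ_i(λ)} | F_{i-1}]`. -/
noncomputable def bCoef (A : MDS Ω P) (lam : ℝ) (i : ℕ) : Ω → ℝ := fun ω =>
  (P[fun ω' => A.zetaFn lam i ω' * Real.exp (A.zetaFn lam i ω')|A.F (i - 1)]) ω /
    (P[fun ω' => Real.exp (A.zetaFn lam i ω')|A.F (i - 1)]) ω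

/-- The drift process `B_n(λ) = ∑_{i=1}^n b_i(λ)`. -/
noncomputable def drift (A : MDS Ω P) (lam : ℝ) : Ω → ℝ :=
  fun ω => ∑ i ∈ Finset.Icc 1 A.n, A.bCoef lam i ω

/-- `⟨M⟩_n = ∑_{i=1}^n E[ξ_i² | F_{i-1}]`. -/
noncomputable def McondVar (A : MDS Ω P) : Ω → ℝ :=
  fun ω => ∑ i ∈ Finset.Icc 1 A.n, (P[fun ω' => (A.xi i ω') ^ 2|A.F (i - 1)]) ω

end MDS

namespace MDS

variable {Ω : Type} [mΩ : MeasurableSpace Ω] {P : Measure Ω}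

/-- The exponential multiplicative martingale
`Z_n(λ) = ∏_{i=1}^n e^{ζ_i(λ)} / E[e^{ζ_i(λ)} | F_{i-1}]`. -/
noncomputable def Zmult (A : MDS Ω P) (lam : ℝ) : Ω → ℝ := fun ω =>
  ∏ i ∈ Finset.Icc 1 A.n,
    Real.exp (A.zetaFn lam i ω) / (P[fun ω' => Real.exp (A.zetaFn lam i ω')|A.F (i - 1)]) ω

/-- The conjugate probability measure `dP_λ = Z_n(λ) dP`. -/
noncomputable def Pconj (A : MDS Ω P) (lam : ℝ) : Measure Ω :=
  P.withDensity fun ω => ENNReal.ofReal (A.Zmult lam ω)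

/-- `Y_n(λ)/λ = (∑_{i=1}^n (ζ_i(λ) − b_i(λ)))/λ`, with the convention
`Y_n(0)/0 = ∑_{i=1}^n ξ_i`. -/
noncomputable def Ynorm (A : MDS Ω P) (lam : ℝ) : Ω → ℝ :=
  if lam = 0 then fun ω => ∑ i ∈ Finset.Icc 1 A.n, A.xi i ω
  else fun ω => (∑ i ∈ Finset.Icc 1 A.n, (A.zetaFn lam i ω - A.bCoef lam i ω)) / lam

end MDS

/-!
Under the conjugate measure the variables `(ζ_i(λ) - b_i(λ)) / λ` are again martingale differences.
Expanding the exponential to second order shows that their conditional variances differ from those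
of `ξ_i` only by a relative error of order `(λγ)^ρ`, and that their conditional moments of order
`2 + ρ` stay of order `γ^ρ` times the variance. What is needed is therefore a Berry–Esseen bound for
martingale differences `U_i` whose conditional variances `w_i` are known approximately.

This bound comes from Lindeberg's method. Let `S_k = ∑_{i < k} U_i` and let `s_k` be the remaining
variance `∑_{i ≥ k} w_i` plus a smoothing variance `a²`. Passing from `Φ ((x - S_k) / √s_k)` to the
same expression at time `k + 1` replaces one normal increment by `U_k`; the first two orders cancel
in conditional expectation, and the remainder is at most `γ^ρ w_k (s_k + (x - S_k)²)^(-1-ρ/2)` up to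
a constant. Since `s_k + (x - S_j)²` grows little in conditional mean after time `k`, the powers may
be evaluated at time `n` instead, where the sum over `k` telescopes to `(a² + (x - S_n)²)^(-ρ/2)`.
The expectation of the latter is controlled by the concentration of `S_n` around `x`, hence by the
distance of `S_n` from normality itself, and choosing `a` a large multiple of `γ` absorbs this
distance. The logarithm for `ρ = 1` is the one in `∫ (a² + y²)^(-1/2) dy`.
-/

open ProbabilityTheory

local notation "φ" => gaussianPDFReal 0 1

local notation "Φ" => stdNormalCDF

section NormalDistribution

lemma gaussianPDFReal_zero_one (z : ℝ) :
    φ z = (√(2 * Real.pi))⁻¹ * Real.exp (-(z ^ 2) / 2) := by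
  simp [gaussianPDFReal]

lemma gaussianPDFReal_zero_one_pos (z : ℝ) : 0 < φ z :=
  gaussianPDFReal_pos 0 1 z one_ne_zero

lemma gaussianPDFReal_zero_one_le_exp (z : ℝ) : φ z ≤ Real.exp (-(z ^ 2 / 2)) := by
  have hsqrt : 1 ≤ √(2 * Real.pi) := by
    rw [Real.one_le_sqrt]
    linarith [Real.pi_gt_three]
  rw [gaussianPDFReal_zero_one, neg_div]
  exact mul_le_of_le_one_left (Real.exp_pos _).le (inv_le_one_of_one_le₀ hsqrt)

lemma gaussianPDFReal_zero_one_le_one (z : ℝ) : φ z ≤ 1 :=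
  (gaussianPDFReal_zero_one_le_exp z).trans
    (Real.exp_le_one_iff.2 (neg_nonpos.2 (by positivity)))

lemma gaussianPDFReal_zero_one_le_inv_pow (z : ℝ) : φ z ≤ 4096 / (1 + z ^ 2) ^ 4 := by
  have hexp : (1 + z ^ 2) ^ 4 ≤ 4096 * Real.exp (z ^ 2 / 2) :=
    calc (1 + z ^ 2) ^ 4 ≤ (8 * (z ^ 2 / 8 + 1)) ^ 4 := by
          gcongr
          nlinarith [sq_nonneg z]
      _ ≤ (8 * Real.exp (z ^ 2 / 8)) ^ 4 := by
          gcongr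
          exact Real.add_one_le_exp _
      _ = 4096 * Real.exp (z ^ 2 / 2) := by
          rw [mul_pow, ← Real.exp_nat_mul]
          norm_num
          ring
  refine (gaussianPDFReal_zero_one_le_exp z).trans ?_
  rw [Real.exp_neg, le_div_iff₀ (by positivity), inv_mul_le_iff₀ (Real.exp_pos _)]
  linarith

lemma continuous_gaussianPDFReal_zero_one : Continuous φ := by
  simp only [gaussianPDFReal_def]
  fun_prop

lemma hasDerivAt_gaussianPDFReal_zero_one (z : ℝ) : HasDerivAt φ (-z * φ z) z := by
  have hexponent : HasDerivAt (fun z : ℝ ↦ -(z ^ 2) / 2) (-z) z :=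
    ((hasDerivAt_pow 2 z).neg.div_const 2).congr_deriv (by norm_num; ring)
  rw [funext gaussianPDFReal_zero_one]
  exact (hexponent.exp.const_mul _).congr_deriv (by ring)

lemma hasDerivAt_neg_mul_gaussianPDFReal_zero_one (z : ℝ) :
    HasDerivAt (fun z ↦ -z * φ z) ((z ^ 2 - 1) * φ z) z :=
  ((hasDerivAt_id z).neg.mul (hasDerivAt_gaussianPDFReal_zero_one z)).congr_deriv
    (by simp; ring)

lemma abs_le_one_add_sq (z : ℝ) : |z| ≤ 1 + z ^ 2 := by
  nlinarith [sq_abs z, sq_nonneg (|z| - 1)]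

lemma abs_neg_mul_gaussianPDFReal_zero_one_le (z : ℝ) :
    |-z * φ z| ≤ 4096 / (1 + z ^ 2) ^ 3 := by
  rw [abs_mul, abs_neg, abs_of_pos (gaussianPDFReal_zero_one_pos z)]
  calc |z| * φ z ≤ (1 + z ^ 2) * (4096 / (1 + z ^ 2) ^ 4) :=
        mul_le_mul (abs_le_one_add_sq z) (gaussianPDFReal_zero_one_le_inv_pow z)
          (gaussianPDFReal_zero_one_pos z).le (by positivity)
    _ = 4096 / (1 + z ^ 2) ^ 3 := by field_simp

lemma abs_sq_sub_one_mul_gaussianPDFReal_zero_one_le (z : ℝ) :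
    |(z ^ 2 - 1) * φ z| ≤ 4096 / (1 + z ^ 2) ^ 3 := by
  have hcoef : |z ^ 2 - 1| ≤ 1 + z ^ 2 := by
    rw [abs_le]
    constructor <;> nlinarith [sq_nonneg z]
  rw [abs_mul, abs_of_pos (gaussianPDFReal_zero_one_pos z)]
  calc |z ^ 2 - 1| * φ z ≤ (1 + z ^ 2) * (4096 / (1 + z ^ 2) ^ 4) :=
        mul_le_mul hcoef (gaussianPDFReal_zero_one_le_inv_pow z)
          (gaussianPDFReal_zero_one_pos z).le (by positivity)
    _ = 4096 / (1 + z ^ 2) ^ 3 := by field_simp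

lemma stdNormalCDF_eq_setIntegral (x : ℝ) : Φ x = ∫ t in Set.Iic x, φ t := by
  simp only [stdNormalCDF, gaussianPDFReal_zero_one, integral_const_mul]

lemma stdNormalCDF_eq_cdf (x : ℝ) : Φ x = cdf (gaussianReal 0 1) x := by
  rw [stdNormalCDF_eq_setIntegral, cdf_eq_real, measureReal_def,
    gaussianReal_apply_eq_integral _ one_ne_zero, ENNReal.toReal_ofReal]
  exact setIntegral_nonneg measurableSet_Iic fun t _ ↦ gaussianPDFReal_nonneg _ _ _

lemma stdNormalCDF_nonneg (x : ℝ) : 0 ≤ Φ x :=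
  stdNormalCDF_eq_cdf x ▸ cdf_nonneg _ x

lemma stdNormalCDF_le_one (x : ℝ) : Φ x ≤ 1 :=
  stdNormalCDF_eq_cdf x ▸ cdf_le_one _ x

lemma abs_stdNormalCDF_le_one (x : ℝ) : |Φ x| ≤ 1 :=
  (abs_of_nonneg (stdNormalCDF_nonneg x)).trans_le (stdNormalCDF_le_one x)

lemma hasDerivAt_stdNormalCDF (x : ℝ) : HasDerivAt Φ (φ x) x := by
  have hint : ∀ y, IntegrableOn φ (Set.Iic y) := fun y ↦
    (integrable_gaussianPDFReal 0 1).integrableOn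
  have hsplit : Φ = fun y ↦ (∫ t in Set.Iic (0 : ℝ), φ t) + ∫ t in (0 : ℝ)..y, φ t := by
    ext y
    rw [stdNormalCDF_eq_setIntegral, ← intervalIntegral.integral_Iic_sub_Iic (hint 0) (hint y)]
    ring
  have hcont := continuous_gaussianPDFReal_zero_one
  rw [hsplit]
  exact (intervalIntegral.integral_hasDerivAt_right (hcont.intervalIntegrable _ _)
    (hcont.stronglyMeasurableAtFilter _ _) hcont.continuousAt).const_add _

lemma continuous_stdNormalCDF : Continuous Φ :=
  continuous_iff_continuousAt.2 fun x ↦ (hasDerivAt_stdNormalCDF x).continuousAt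

end NormalDistribution

section TaylorRemainders

variable {f f₁ f₂ f₃ : ℝ → ℝ} {M x y : ℝ}

lemma abs_sub_le_of_abs_hasDerivAt_le (hf : ∀ t ∈ Set.uIcc x y, HasDerivAt f (f₁ t) t)
    (hM : ∀ t ∈ Set.uIcc x y, |f₁ t| ≤ M) : |f y - f x| ≤ M * |y - x| :=
  (convex_uIcc x y).norm_image_sub_le_of_norm_hasDerivWithin_le
    (fun t ht ↦ (hf t ht).hasDerivWithinAt) hM Set.left_mem_uIcc Set.right_mem_uIcc

lemma abs_taylor_one_le (hf : ∀ t ∈ Set.uIcc x y, HasDerivAt f (f₁ t) t)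
    (hf₁ : ∀ t ∈ Set.uIcc x y, HasDerivAt f₁ (f₂ t) t)
    (hM : ∀ t ∈ Set.uIcc x y, |f₂ t| ≤ M) :
    |f y - f x - (y - x) * f₁ x| ≤ M * |y - x| ^ 2 := by
  have hM0 : 0 ≤ M := (abs_nonneg _).trans (hM x Set.left_mem_uIcc)
  have hderiv : ∀ t ∈ Set.uIcc x y, |f₁ t - f₁ x| ≤ M * |y - x| := by
    intro t ht
    have hsub : Set.uIcc x t ⊆ Set.uIcc x y := Set.uIcc_subset_uIcc_left ht
    refine (abs_sub_le_of_abs_hasDerivAt_le (fun r hr ↦ hf₁ r (hsub hr))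
      fun r hr ↦ hM r (hsub hr)).trans ?_
    exact mul_le_mul_of_nonneg_left (Set.abs_sub_left_of_mem_uIcc ht) hM0
  have hmvt := abs_sub_le_of_abs_hasDerivAt_le (f := fun t ↦ f t - (t - x) * f₁ x)
    (fun t ht ↦ ((hf t ht).sub (((hasDerivAt_id t).sub_const x).mul_const (f₁ x))).congr_deriv
      (by simp : _ = f₁ t - f₁ x)) hderiv
  calc |f y - f x - (y - x) * f₁ x|
      = |f y - (y - x) * f₁ x - (f x - (x - x) * f₁ x)| := by congr 1; ring
    _ ≤ M * |y - x| * |y - x| := hmvt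
    _ = M * |y - x| ^ 2 := by ring

lemma abs_taylor_two_le (hf : ∀ t ∈ Set.uIcc x y, HasDerivAt f (f₁ t) t)
    (hf₁ : ∀ t ∈ Set.uIcc x y, HasDerivAt f₁ (f₂ t) t)
    (hf₂ : ∀ t ∈ Set.uIcc x y, HasDerivAt f₂ (f₃ t) t)
    (hM : ∀ t ∈ Set.uIcc x y, |f₃ t| ≤ M) :
    |f y - f x - (y - x) * f₁ x - (y - x) ^ 2 / 2 * f₂ x| ≤ M * |y - x| ^ 3 := by
  have hM0 : 0 ≤ M := (abs_nonneg _).trans (hM x Set.left_mem_uIcc)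
  have hderiv : ∀ t ∈ Set.uIcc x y, |f₁ t - f₁ x - (t - x) * f₂ x| ≤ M * |y - x| ^ 2 := by
    intro t ht
    have hsub : Set.uIcc x t ⊆ Set.uIcc x y := Set.uIcc_subset_uIcc_left ht
    refine (abs_taylor_one_le (fun r hr ↦ hf₁ r (hsub hr)) (fun r hr ↦ hf₂ r (hsub hr))
      fun r hr ↦ hM r (hsub hr)).trans ?_
    have hdist := Set.abs_sub_left_of_mem_uIcc ht
    exact mul_le_mul_of_nonneg_left (pow_le_pow_left₀ (abs_nonneg _) hdist 2) hM0
  have hmvt := abs_sub_le_of_abs_hasDerivAt_le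
    (f := fun t ↦ f t - (t - x) * f₁ x - (t - x) ^ 2 / 2 * f₂ x)
    (fun t ht ↦ (((hf t ht).sub (((hasDerivAt_id t).sub_const x).mul_const (f₁ x))).sub
      (((((hasDerivAt_id t).sub_const x).pow 2).div_const 2).mul_const (f₂ x))).congr_deriv
      (by simp : _ = f₁ t - f₁ x - (t - x) * f₂ x)) hderiv
  calc |f y - f x - (y - x) * f₁ x - (y - x) ^ 2 / 2 * f₂ x|
      = |f y - (y - x) * f₁ x - (y - x) ^ 2 / 2 * f₂ x
          - (f x - (x - x) * f₁ x - (x - x) ^ 2 / 2 * f₂ x)| := by congr 1; ring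
    _ ≤ M * |y - x| ^ 2 * |y - x| := hmvt
    _ = M * |y - x| ^ 3 := by ring

end TaylorRemainders

lemma abs_stdNormalCDF_sub_le (x y : ℝ) : |Φ x - Φ y| ≤ |x - y| := by
  have h := abs_sub_le_of_abs_hasDerivAt_le (x := y) (y := x)
    (fun t _ ↦ hasDerivAt_stdNormalCDF t) fun t _ ↦
      (abs_of_pos (gaussianPDFReal_zero_one_pos t)).trans_le (gaussianPDFReal_zero_one_le_one t)
  rwa [one_mul] at h

section RealPowers

lemma sq_div_rpow_eq {q : ℝ} (hq : 0 < q) (u ρ : ℝ) :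
    (u ^ 2 / q) ^ (1 + ρ / 2) = |u| ^ (2 + ρ) * q ^ (-(1 + ρ / 2)) := by
  rw [Real.div_rpow (sq_nonneg u) hq.le, Real.rpow_neg hq.le, div_eq_mul_inv, ← sq_abs,
    ← Real.rpow_natCast, ← Real.rpow_mul (abs_nonneg u)]
  congr 2
  push_cast
  ring

lemma le_four_mul_rpow_one_add {t ρ : ℝ} (ht : 1 / 16 ≤ t) (hρ0 : 0 ≤ ρ) (hρ1 : ρ ≤ 1) :
    t ≤ 4 * t ^ (1 + ρ / 2) := by
  have ht0 : 0 < t := by linarith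
  have hquarter : 1 / 4 ≤ t ^ (ρ / 2) :=
    calc (1 / 4 : ℝ) = (1 / 16 : ℝ) ^ (1 / 2 : ℝ) := by
          rw [← Real.sqrt_eq_rpow, show (1 / 16 : ℝ) = (1 / 4) ^ 2 by norm_num,
            Real.sqrt_sq (by norm_num)]
      _ ≤ (1 / 16 : ℝ) ^ (ρ / 2) :=
          Real.rpow_le_rpow_of_exponent_ge (by norm_num) (by norm_num) (by linarith)
      _ ≤ t ^ (ρ / 2) := Real.rpow_le_rpow (by norm_num) ht (by linarith)
  rw [Real.rpow_add ht0, Real.rpow_one]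
  nlinarith

lemma rpow_neg_tangent_le {t m p : ℝ} (ht : 0 < t) (hm : 0 < m) (hp : 0 ≤ p) :
    m ^ (-p) - p * m ^ (-(p + 1)) * (t - m) ≤ t ^ (-p) := by
  have hratio : 1 - p * (t / m - 1) ≤ (t / m) ^ (-p) := by
    rw [Real.rpow_def_of_pos (by positivity)]
    have hexp := Real.add_one_le_exp (Real.log (t / m) * -p)
    have hlog := Real.log_le_sub_one_of_pos (by positivity : 0 < t / m)
    nlinarith
  have hscale : t ^ (-p) = (t / m) ^ (-p) * m ^ (-p) := by
    rw [← Real.mul_rpow (by positivity) hm.le, div_mul_cancel₀ t hm.ne']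
  have hpred : m ^ (-(p + 1)) = m ^ (-p) / m := by
    rw [neg_add, ← sub_eq_add_neg, Real.rpow_sub_one hm.ne']
  rw [hscale, hpred]
  calc m ^ (-p) - p * (m ^ (-p) / m) * (t - m) = (1 - p * (t / m - 1)) * m ^ (-p) := by
        field_simp
    _ ≤ (t / m) ^ (-p) * m ^ (-p) := by gcongr

end RealPowers

section NormalCDFExpansion

/-- The second derivative of `y ↦ Φ (y / √s)`, a Gaussian distribution function of variance `s`.
By the heat equation it is also twice the derivative with respect to `s`. -/
noncomputable def normalCDFHess (s y : ℝ) : ℝ := -(y / √s) * φ (y / √s) / s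

lemma one_add_div_sqrt_sq {s : ℝ} (hs : 0 < s) (y : ℝ) :
    s * (1 + (y / √s) ^ 2) = s + y ^ 2 := by
  rw [div_pow, Real.sq_sqrt hs.le]
  field_simp

/-- The difference between `Φ (y - u)` and its second order Taylor polynomial at `y`. -/
noncomputable def stdNormalCDFRemainder (y u : ℝ) : ℝ :=
  Φ (y - u) - Φ y + u * φ y - u ^ 2 / 2 * (-y * φ y)

lemma abs_third_deriv_stdNormalCDF_le {y z : ℝ} (hz : (z - y) ^ 2 ≤ (1 + y ^ 2) / 16) :
    |(z ^ 2 - 1) * φ z| ≤ 65536 / (1 + y ^ 2) ^ 2 := by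
  have hcomp : 1 + y ^ 2 ≤ 4 * (1 + z ^ 2) := by
    nlinarith [sq_nonneg (y - 2 * z), sq_nonneg (2 * y - 3 * z)]
  calc |(z ^ 2 - 1) * φ z| ≤ 4096 / (1 + z ^ 2) ^ 3 :=
        abs_sq_sub_one_mul_gaussianPDFReal_zero_one_le z
    _ ≤ 4096 / (1 + z ^ 2) ^ 2 := by
        gcongr
        · exact le_add_of_nonneg_right (sq_nonneg z)
        · norm_num
    _ = 65536 / (4 * (1 + z ^ 2)) ^ 2 := by field_simp; norm_num
    _ ≤ 65536 / (1 + y ^ 2) ^ 2 := by gcongr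

lemma abs_stdNormalCDFRemainder_le_of_small {y u ρ : ℝ} (hρ0 : 0 ≤ ρ) (hρ1 : ρ ≤ 1)
    (hu : u ^ 2 / (1 + y ^ 2) ≤ 1 / 16) :
    |stdNormalCDFRemainder y u| ≤ 65536 * (u ^ 2 / (1 + y ^ 2)) ^ (1 + ρ / 2) := by
  set q := 1 + y ^ 2 with hq
  have hq1 : 1 ≤ q := le_add_of_nonneg_right (sq_nonneg y)
  have hthird : ∀ z ∈ Set.uIcc y (y - u), |(z ^ 2 - 1) * φ z| ≤ 65536 / q ^ 2 := by
    intro z hz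
    apply abs_third_deriv_stdNormalCDF_le
    have hzu : |z - y| ≤ |u| := by simpa using Set.abs_sub_left_of_mem_uIcc hz
    rw [div_le_iff₀ (by positivity)] at hu
    linarith [sq_le_sq.2 hzu]
  have htaylor := abs_taylor_two_le (fun z _ ↦ hasDerivAt_stdNormalCDF z)
    (fun z _ ↦ hasDerivAt_gaussianPDFReal_zero_one z)
    (fun z _ ↦ hasDerivAt_neg_mul_gaussianPDFReal_zero_one z) hthird
  calc |stdNormalCDFRemainder y u| ≤ 65536 / q ^ 2 * |u| ^ 3 := by
        rw [sub_sub_cancel_left, abs_neg] at htaylor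
        convert htaylor using 2
        rw [stdNormalCDFRemainder]
        ring
    _ = 65536 * (|u| ^ (2 + 1 : ℝ) * q ^ (-2 : ℝ)) := by
        rw [show (2 + 1 : ℝ) = (3 : ℕ) by norm_num, Real.rpow_natCast,
          Real.rpow_neg (by positivity), Real.rpow_two]
        ring
    _ ≤ 65536 * (|u| ^ (2 + 1 : ℝ) * q ^ (-(1 + 1 / 2 : ℝ))) := by
        gcongr
        · norm_num
    _ = 65536 * (u ^ 2 / q) ^ (1 + 1 / 2 : ℝ) := by rw [sq_div_rpow_eq (by positivity)]
    _ ≤ 65536 * (u ^ 2 / q) ^ (1 + ρ / 2) := by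
        rcases (by positivity : 0 ≤ u ^ 2 / q).eq_or_lt with h0 | hpos
        · rw [← h0, Real.zero_rpow (by norm_num), Real.zero_rpow (by positivity)]
        · gcongr 65536 * ?_
          exact Real.rpow_le_rpow_of_exponent_ge hpos (hu.trans (by norm_num)) (by linarith)

lemma abs_stdNormalCDFRemainder_le_of_large {y u ρ : ℝ} (hρ0 : 0 ≤ ρ) (hρ1 : ρ ≤ 1)
    (hu : 1 / 16 ≤ u ^ 2 / (1 + y ^ 2)) :
    |stdNormalCDFRemainder y u| ≤ 80000 * (u ^ 2 / (1 + y ^ 2)) ^ (1 + ρ / 2) := by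
  set q := 1 + y ^ 2
  have hq1 : 1 ≤ q := le_add_of_nonneg_right (sq_nonneg y)
  set t := u ^ 2 / q with ht
  have hut : u ^ 2 = t * q := by rw [ht, div_mul_cancel₀ _ (by positivity)]
  have hincr : |Φ (y - u) - Φ y| ≤ 16 * t := by
    refine (abs_sub_le_of_le_of_le (stdNormalCDF_nonneg _) (stdNormalCDF_le_one _)
      (stdNormalCDF_nonneg _) (stdNormalCDF_le_one _)).trans ?_
    linarith
  have hfirst : |u * φ y| ≤ 16384 * t := by
    have habs : |u| ≤ 4 * u ^ 2 := by
      have : (1 / 4) ^ 2 ≤ |u| ^ 2 := by rw [sq_abs]; nlinarith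
      nlinarith [abs_le_of_sq_le_sq' this (abs_nonneg u), sq_abs u]
    calc |u * φ y| = |u| * φ y := by rw [abs_mul, abs_of_pos (gaussianPDFReal_zero_one_pos y)]
      _ ≤ 4 * u ^ 2 * (4096 / q ^ 4) :=
          mul_le_mul habs (gaussianPDFReal_zero_one_le_inv_pow y)
            (gaussianPDFReal_zero_one_pos y).le (by positivity)
      _ ≤ 4 * u ^ 2 * (4096 / q ^ 1) := by gcongr; norm_num
      _ = 16384 * t := by rw [ht]; ring
  have hsecond : |u ^ 2 / 2 * (-y * φ y)| ≤ 2048 * t :=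
    calc |u ^ 2 / 2 * (-y * φ y)| = u ^ 2 / 2 * |-y * φ y| := by
          rw [abs_mul, abs_of_nonneg (by positivity)]
      _ ≤ u ^ 2 / 2 * (4096 / q ^ 3) := by
          gcongr
          exact abs_neg_mul_gaussianPDFReal_zero_one_le y
      _ ≤ u ^ 2 / 2 * (4096 / q ^ 1) := by gcongr; norm_num
      _ = 2048 * t := by rw [ht]; ring
  calc |stdNormalCDFRemainder y u|
      ≤ |Φ (y - u) - Φ y| + |u * φ y| + |u ^ 2 / 2 * (-y * φ y)| :=
        (abs_sub _ _).trans (by gcongr; exact abs_add_le _ _)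
    _ ≤ 18448 * t := by linarith
    _ ≤ 80000 * t ^ (1 + ρ / 2) := by
        linarith [le_four_mul_rpow_one_add hu hρ0 hρ1, Real.rpow_nonneg
          (by linarith : 0 ≤ t) (1 + ρ / 2)]

lemma abs_stdNormalCDFRemainder_le (y u : ℝ) {ρ : ℝ} (hρ0 : 0 ≤ ρ) (hρ1 : ρ ≤ 1) :
    |stdNormalCDFRemainder y u| ≤ 80000 * (u ^ 2 / (1 + y ^ 2)) ^ (1 + ρ / 2) := by
  rcases le_total (u ^ 2 / (1 + y ^ 2)) (1 / 16) with hsmall | hlarge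
  · refine (abs_stdNormalCDFRemainder_le_of_small hρ0 hρ1 hsmall).trans ?_
    gcongr
    norm_num
  · exact abs_stdNormalCDFRemainder_le_of_large hρ0 hρ1 hlarge

lemma abs_normalCDF_space_expansion_le {s ρ : ℝ} (hs : 0 < s) (hρ0 : 0 ≤ ρ) (hρ1 : ρ ≤ 1)
    (y u : ℝ) :
    |Φ ((y - u) / √s) - Φ (y / √s) + u * (φ (y / √s) / √s) - u ^ 2 / 2 * normalCDFHess s y| ≤
      80000 * (|u| ^ (2 + ρ) * (s + y ^ 2) ^ (-(1 + ρ / 2))) := by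
  have hscaled := abs_stdNormalCDFRemainder_le (y / √s) (u / √s) hρ0 hρ1
  have hratio : (u / √s) ^ 2 / (1 + (y / √s) ^ 2) = u ^ 2 / (s + y ^ 2) := by
    rw [← one_add_div_sqrt_sq hs y, div_pow u, Real.sq_sqrt hs.le, div_div]
  rw [hratio, sq_div_rpow_eq (by positivity)] at hscaled
  convert hscaled using 2
  rw [stdNormalCDFRemainder, normalCDFHess, ← sub_div, div_pow, Real.sq_sqrt hs.le]
  ring

lemma hasDerivAt_div_sqrt (y : ℝ) {s : ℝ} (hs : 0 < s) :
    HasDerivAt (fun s : ℝ ↦ y / √s) (-(y / √s) / (2 * s)) s := by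
  have hsqrt : 0 < √s := Real.sqrt_pos.2 hs
  refine ((hasDerivAt_const s y).div (Real.hasDerivAt_sqrt hs.ne') hsqrt.ne').congr_deriv ?_
  rw [Real.sq_sqrt hs.le]
  field_simp
  simp

lemma hasDerivAt_normalCDF_variance (y : ℝ) {s : ℝ} (hs : 0 < s) :
    HasDerivAt (fun s ↦ Φ (y / √s)) (normalCDFHess s y / 2) s := by
  refine ((hasDerivAt_stdNormalCDF (y / √s)).comp s (hasDerivAt_div_sqrt y hs)).congr_deriv ?_
  rw [normalCDFHess]
  ring

lemma hasDerivAt_normalCDFHess_variance (y : ℝ) {s : ℝ} (hs : 0 < s) :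
    HasDerivAt (fun s ↦ normalCDFHess s y / 2)
      (y / √s * φ (y / √s) * (3 - (y / √s) ^ 2) / (4 * s ^ 2)) s := by
  refine ((((hasDerivAt_neg_mul_gaussianPDFReal_zero_one (y / √s)).comp s
    (hasDerivAt_div_sqrt y hs)).div (hasDerivAt_id s) hs.ne').div_const 2).congr_deriv ?_
  simp only [Function.comp, id]
  field_simp
  ring

lemma abs_deriv_normalCDFHess_variance_le (y : ℝ) {s : ℝ} (hs : 0 < s) :
    |y / √s * φ (y / √s) * (3 - (y / √s) ^ 2) / (4 * s ^ 2)| ≤ 3072 / (s + y ^ 2) ^ 2 := by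
  rw [← one_add_div_sqrt_sq hs y]
  generalize y / √s = z
  have hφ := gaussianPDFReal_zero_one_pos z
  have hcoef : |3 - z ^ 2| ≤ 3 * (1 + z ^ 2) := by
    rw [abs_le]
    constructor <;> nlinarith [sq_nonneg z]
  calc |z * φ z * (3 - z ^ 2) / (4 * s ^ 2)| = |z| * φ z * |3 - z ^ 2| / (4 * s ^ 2) := by
        rw [abs_div, abs_mul, abs_mul, abs_of_pos hφ, abs_of_pos (by positivity : 0 < 4 * s ^ 2)]
    _ ≤ (1 + z ^ 2) * (4096 / (1 + z ^ 2) ^ 4) * (3 * (1 + z ^ 2)) / (4 * s ^ 2) := by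
        gcongr
        · exact abs_le_one_add_sq z
        · exact gaussianPDFReal_zero_one_le_inv_pow z
    _ = 3072 / (s * (1 + z ^ 2)) ^ 2 := by field_simp; norm_num

lemma abs_normalCDF_variance_expansion_le {s w ρ : ℝ} (hs : 0 < s) (hw0 : 0 ≤ w) (hws : w ≤ s)
    (hρ1 : ρ ≤ 1) (y : ℝ) :
    |Φ (y / √(s + w)) - Φ (y / √s) - w / 2 * normalCDFHess s y| ≤
      3072 * (w ^ (1 + ρ / 2) * (s + y ^ 2) ^ (-(1 + ρ / 2))) := by
  have hpos : ∀ r ∈ Set.uIcc s (s + w), s ≤ r := fun r hr ↦ by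
    rw [Set.uIcc_of_le (by linarith)] at hr
    exact hr.1
  have htaylor := abs_taylor_one_le (M := 3072 / (s + y ^ 2) ^ 2)
    (fun r hr ↦ hasDerivAt_normalCDF_variance y (hs.trans_le (hpos r hr)))
    (fun r hr ↦ hasDerivAt_normalCDFHess_variance y (hs.trans_le (hpos r hr)))
    (fun r hr ↦ (abs_deriv_normalCDFHess_variance_le y (hs.trans_le (hpos r hr))).trans
      (by gcongr; exact hpos r hr))
  have hratio0 : 0 ≤ w / (s + y ^ 2) := by positivity
  have hratio1 : w / (s + y ^ 2) ≤ 1 :=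
    div_le_one_of_le₀ (hws.trans (le_add_of_nonneg_right (sq_nonneg y))) (by positivity)
  calc |Φ (y / √(s + w)) - Φ (y / √s) - w / 2 * normalCDFHess s y|
      ≤ 3072 / (s + y ^ 2) ^ 2 * w ^ 2 := by
        rw [add_sub_cancel_left, abs_of_nonneg hw0] at htaylor
        convert htaylor using 2
        ring
    _ = 3072 * (w / (s + y ^ 2)) ^ (1 + 1 : ℝ) := by
        rw [one_add_one_eq_two, Real.rpow_two, div_pow]
        ring
    _ ≤ 3072 * (w / (s + y ^ 2)) ^ (1 + ρ / 2) := by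
        gcongr 3072 * ?_
        exact Real.rpow_le_rpow_of_exponent_ge_of_imp hratio0 hratio1 (by linarith)
          fun _ h ↦ absurd h (by norm_num)
    _ = 3072 * (w ^ (1 + ρ / 2) * (s + y ^ 2) ^ (-(1 + ρ / 2))) := by
        rw [Real.div_rpow hw0 (by positivity), Real.rpow_neg (by positivity), div_eq_mul_inv]

lemma abs_normalCDFHess_le {s : ℝ} (hs : 0 < s) (hs16 : s ≤ 16) (y : ℝ) :
    |normalCDFHess s y| ≤ 8192 * (s + y ^ 2) ^ (-(5 / 4 : ℝ)) := by
  rw [← one_add_div_sqrt_sq hs y, normalCDFHess]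
  generalize y / √s = z
  have hz : 1 ≤ 1 + z ^ 2 := le_add_of_nonneg_right (sq_nonneg z)
  have hdensity : |-z * φ z| ≤ 4096 * (1 + z ^ 2) ^ (-(5 / 4 : ℝ)) := by
    refine (abs_neg_mul_gaussianPDFReal_zero_one_le z).trans ?_
    rw [div_eq_mul_inv, ← Real.rpow_natCast, ← Real.rpow_neg (by positivity)]
    gcongr
    norm_num
  have hvariance : s⁻¹ ≤ 2 * s ^ (-(5 / 4 : ℝ)) := by
    have hroot : s ^ (1 / 4 : ℝ) ≤ 2 :=
      calc s ^ (1 / 4 : ℝ) ≤ (2 ^ (4 : ℝ)) ^ (1 / 4 : ℝ) := by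
            gcongr
            linarith
        _ = 2 := by rw [← Real.rpow_mul (by norm_num)]; norm_num
    have hsplit : s⁻¹ = s ^ (1 / 4 : ℝ) * s ^ (-(5 / 4 : ℝ)) := by
      rw [← Real.rpow_neg_one, ← Real.rpow_add hs]
      norm_num
    rw [hsplit]
    gcongr
  rw [abs_div, abs_of_pos hs, div_eq_mul_inv, Real.mul_rpow hs.le (by positivity)]
  calc |-z * φ z| * s⁻¹
      ≤ 4096 * (1 + z ^ 2) ^ (-(5 / 4 : ℝ)) * (2 * s ^ (-(5 / 4 : ℝ))) := by gcongr
    _ = 8192 * (s ^ (-(5 / 4 : ℝ)) * (1 + z ^ 2) ^ (-(5 / 4 : ℝ))) := by ring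

end NormalCDFExpansion

section ConditionalExpectation

variable {Ω : Type*} {m mΩ : MeasurableSpace Ω} {μ : Measure Ω} {f g : Ω → ℝ}

lemma condExp_const_mul (c : ℝ) (f : Ω → ℝ) :
    μ[fun ω ↦ c * f ω | m] =ᵐ[μ] fun ω ↦ c * (μ[f | m]) ω :=
  condExp_smul c f m

lemma integral_mul_condExp (hm : m ≤ mΩ) [SigmaFinite (μ.trim hm)]
    (hg : StronglyMeasurable[m] g) (hf : Integrable f μ) (hgf : Integrable (g * f) μ) :
    ∫ ω, g ω * (μ[f | m]) ω ∂μ = ∫ ω, g ω * f ω ∂μ := by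
  rw [← integral_condExp hm (f := fun ω ↦ g ω * f ω)]
  exact integral_congr_ae (condExp_mul_of_stronglyMeasurable_left hg hgf hf).symm

end ConditionalExpectation

/-- The partial sums `∑_{i < k} u_i` of a sequence of random variables. -/
def partialSum {Ω : Type*} (u : ℕ → Ω → ℝ) (k : ℕ) (ω : Ω) : ℝ := ∑ i ∈ Finset.range k, u i ω

lemma partialSum_succ {Ω : Type*} (u : ℕ → Ω → ℝ) (k : ℕ) (ω : Ω) :
    partialSum u (k + 1) ω = partialSum u k ω + u k ω :=
  Finset.sum_range_succ (u · ω) k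

lemma monotone_partialSum {Ω : Type*} {u : ℕ → Ω → ℝ} {ω : Ω} (hu : ∀ i, 0 ≤ u i ω) :
    Monotone (partialSum u · ω) :=
  monotone_nat_of_le_succ fun k ↦ by
    rw [partialSum_succ]
    exact le_add_of_nonneg_right (hu k)

/-- Martingale differences `U_0, U_1, …` satisfying a Lyapunov condition of order `2 + ρ`, together
with a predictable sequence `w` that approximates their conditional variances up to the relative
error `ε` and whose first `n` terms sum to `1` up to `δ²`. Here `U_i` is `ℱ_{i+1}`-measurable. -/
structure IsLyapunovMDS {Ω : Type*} {mΩ : MeasurableSpace Ω} (Q : Measure Ω)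
    (ℱ : Filtration ℕ mΩ) (U w : ℕ → Ω → ℝ) (n : ℕ) (ρ γ ε δ C : ℝ) : Prop where
  stronglyMeasurable_increment : ∀ i, StronglyMeasurable[ℱ (i + 1)] (U i)
  stronglyMeasurable_variance : ∀ i, StronglyMeasurable[ℱ i] (w i)
  variance_nonneg : ∀ i ω, 0 ≤ w i ω
  variance_le : ∀ i ω, w i ω ≤ γ ^ 2
  variance_sum : ∀ᵐ ω ∂Q, |partialSum w n ω - 1| ≤ δ ^ 2
  integrable_sq : ∀ i, Integrable (fun ω ↦ U i ω ^ 2) Q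
  integrable_rpow : ∀ i, Integrable (fun ω ↦ |U i ω| ^ (2 + ρ)) Q
  condExp_eq_zero : ∀ i, Q[U i | ℱ i] =ᵐ[Q] 0
  condExp_sq : ∀ i, ∀ᵐ ω ∂Q, |(Q[fun ω' ↦ U i ω' ^ 2 | ℱ i]) ω - w i ω| ≤ ε * w i ω
  condExp_rpow : ∀ i, ∀ᵐ ω ∂Q, (Q[fun ω' ↦ |U i ω'| ^ (2 + ρ) | ℱ i]) ω ≤ C * γ ^ ρ * w i ω
  exponent_pos : 0 < ρ
  exponent_le_one : ρ ≤ 1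
  scale_pos : 0 < γ
  error_nonneg : 0 ≤ ε
  error_le_one : ε ≤ 1
  const_nonneg : 0 ≤ C

namespace IsLyapunovMDS

variable {Ω : Type*} {mΩ : MeasurableSpace Ω} {Q : Measure Ω} {ℱ : Filtration ℕ mΩ}
  {U w : ℕ → Ω → ℝ} {n : ℕ} {ρ γ ε δ C : ℝ}

section Regularity

lemma measurable_partialSum_increment (h : IsLyapunovMDS Q ℱ U w n ρ γ ε δ C) (k : ℕ) :
    Measurable[ℱ k] (partialSum U k) :=
  Finset.measurable_sum _ fun i hi ↦
    ((h.stronglyMeasurable_increment i).mono (ℱ.mono (Finset.mem_range.1 hi))).measurable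

lemma measurable_partialSum_variance (h : IsLyapunovMDS Q ℱ U w n ρ γ ε δ C) (k : ℕ) :
    Measurable[ℱ k] (partialSum w (k + 1)) :=
  Finset.measurable_sum _ fun i hi ↦
    ((h.stronglyMeasurable_variance i).mono
      (ℱ.mono (Finset.mem_range_succ_iff.1 hi))).measurable

lemma measurable_sum (h : IsLyapunovMDS Q ℱ U w n ρ γ ε δ C) (k : ℕ) :
    Measurable (partialSum U k) :=
  (h.measurable_partialSum_increment k).mono (ℱ.le k) le_rfl

lemma memLp_increment (h : IsLyapunovMDS Q ℱ U w n ρ γ ε δ C) (i : ℕ) : MemLp (U i) 2 Q :=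
  (memLp_two_iff_integrable_sq
    ((h.stronglyMeasurable_increment i).mono (ℱ.le (i + 1))).aestronglyMeasurable).2
    (h.integrable_sq i)

lemma integrable_increment [IsFiniteMeasure Q] (h : IsLyapunovMDS Q ℱ U w n ρ γ ε δ C) (i : ℕ) :
    Integrable (U i) Q := (h.memLp_increment i).integrable one_le_two

lemma memLp_partialSum (h : IsLyapunovMDS Q ℱ U w n ρ γ ε δ C) (k : ℕ) :
    MemLp (partialSum U k) 2 Q :=
  memLp_finsetSum _ fun i _ ↦ h.memLp_increment i

lemma integrable_variance [IsFiniteMeasure Q] (h : IsLyapunovMDS Q ℱ U w n ρ γ ε δ C) (i : ℕ) :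
    Integrable (w i) Q :=
  .of_bound ((h.stronglyMeasurable_variance i).mono (ℱ.le i)).aestronglyMeasurable (γ ^ 2)
    (Eventually.of_forall fun ω ↦ by
      rw [Real.norm_of_nonneg (h.variance_nonneg i ω)]
      exact h.variance_le i ω)

lemma integrable_partialSum_variance [IsFiniteMeasure Q]
    (h : IsLyapunovMDS Q ℱ U w n ρ γ ε δ C) (k : ℕ) : Integrable (partialSum w k) Q :=
  integrable_finsetSum _ fun i _ ↦ h.integrable_variance i

end Regularity

section BoundedWeights

variable [IsFiniteMeasure Q] {i k : ℕ} {g : Ω → ℝ} {M : ℝ}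

lemma integral_mul_increment (h : IsLyapunovMDS Q ℱ U w n ρ γ ε δ C)
    (hg : StronglyMeasurable[ℱ i] g) (hM : ∀ ω, |g ω| ≤ M) : ∫ ω, g ω * U i ω ∂Q = 0 := by
  rw [← integral_mul_condExp (ℱ.le i) hg (h.integrable_increment i)
    ((h.integrable_increment i).bdd_mul (hg.mono (ℱ.le i)).aestronglyMeasurable
      (Eventually.of_forall hM)), integral_eq_zero_of_ae]
  filter_upwards [h.condExp_eq_zero i] with ω hω
  simp [hω]

lemma abs_integral_mul_sq_sub_le (h : IsLyapunovMDS Q ℱ U w n ρ γ ε δ C)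
    (hg : StronglyMeasurable[ℱ i] g) (hM : ∀ ω, |g ω| ≤ M) :
    |∫ ω, g ω * (U i ω ^ 2 - w i ω) ∂Q| ≤ ε * ∫ ω, |g ω| * w i ω ∂Q := by
  have hgQ := (hg.mono (ℱ.le i)).aestronglyMeasurable (μ := Q)
  have hMQ : ∀ᵐ ω ∂Q, ‖g ω‖ ≤ M := Eventually.of_forall hM
  have hsq := (h.integrable_sq i).bdd_mul hgQ hMQ
  have hvar := (h.integrable_variance i).bdd_mul hgQ hMQ
  have hcond : Integrable (fun ω ↦ g ω * (Q[fun ω' ↦ U i ω' ^ 2 | ℱ i]) ω) Q :=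
    integrable_condExp.bdd_mul hgQ hMQ
  have hreplace : ∫ ω, g ω * (U i ω ^ 2 - w i ω) ∂Q =
      ∫ ω, g ω * ((Q[fun ω' ↦ U i ω' ^ 2 | ℱ i]) ω - w i ω) ∂Q := by
    simp only [mul_sub]
    rw [integral_sub hsq hvar, integral_sub hcond hvar,
      integral_mul_condExp (ℱ.le i) hg (h.integrable_sq i) hsq]
  rw [hreplace, ← integral_const_mul]
  refine abs_integral_le_integral_abs.trans (integral_mono_ae ?_ ?_ ?_)
  · simp only [mul_sub]
    exact (hcond.sub hvar).abs
  · exact ((h.integrable_variance i).bdd_mul hgQ.norm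
      (hMQ.mono fun ω hω ↦ (norm_norm (g ω)).trans_le hω)).const_mul ε
  · filter_upwards [h.condExp_sq i] with ω hω
    rw [abs_mul, mul_left_comm]
    gcongr

lemma integral_mul_rpow_le (h : IsLyapunovMDS Q ℱ U w n ρ γ ε δ C)
    (hg : StronglyMeasurable[ℱ i] g) (hg0 : ∀ ω, 0 ≤ g ω) (hM : ∀ ω, |g ω| ≤ M) :
    ∫ ω, g ω * |U i ω| ^ (2 + ρ) ∂Q ≤ C * γ ^ ρ * ∫ ω, g ω * w i ω ∂Q := by
  have hgQ := (hg.mono (ℱ.le i)).aestronglyMeasurable (μ := Q)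
  have hMQ : ∀ᵐ ω ∂Q, ‖g ω‖ ≤ M := Eventually.of_forall hM
  rw [← integral_mul_condExp (ℱ.le i) hg (h.integrable_rpow i)
    ((h.integrable_rpow i).bdd_mul hgQ hMQ), ← integral_const_mul]
  refine integral_mono_ae (integrable_condExp.bdd_mul hgQ hMQ)
    (((h.integrable_variance i).bdd_mul hgQ hMQ).const_mul _) ?_
  filter_upwards [h.condExp_rpow i] with ω hω
  rw [mul_left_comm]
  exact mul_le_mul_of_nonneg_left hω (hg0 ω)

end BoundedWeights

section Supermartingale

variable [IsFiniteMeasure Q]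

lemma condExp_centered_mul_increment (h : IsLyapunovMDS Q ℱ U w n ρ γ ε δ C) (x : ℝ) (i : ℕ) :
    Q[fun ω ↦ (x - partialSum U i ω) * U i ω | ℱ i] =ᵐ[Q] 0 := by
  have hmeas : StronglyMeasurable[ℱ i] (fun ω ↦ x - partialSum U i ω) :=
    stronglyMeasurable_const.sub (h.measurable_partialSum_increment i).stronglyMeasurable
  have hint : Integrable ((fun ω ↦ x - partialSum U i ω) * U i) Q :=
    ((memLp_const x).sub (h.memLp_partialSum i)).integrable_mul (h.memLp_increment i)
  filter_upwards [condExp_mul_of_stronglyMeasurable_left hmeas hint (h.integrable_increment i),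
    h.condExp_eq_zero i] with ω hpull hzero
  exact hpull.trans (by simp [hzero])

lemma integrable_sq_sub_variance (h : IsLyapunovMDS Q ℱ U w n ρ γ ε δ C) (x : ℝ) (k : ℕ) :
    Integrable (fun ω ↦ (x - partialSum U k ω) ^ 2 - 2 * partialSum w k ω) Q :=
  ((memLp_const x).sub (h.memLp_partialSum k)).integrable_sq.sub
    ((h.integrable_partialSum_variance k).const_mul 2)

lemma supermartingale_sq_sub_variance (h : IsLyapunovMDS Q ℱ U w n ρ γ ε δ C) (x : ℝ) :
    Supermartingale (fun k ω ↦ (x - partialSum U k ω) ^ 2 - 2 * partialSum w k ω) ℱ Q := by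
  refine supermartingale_of_condExp_sub_nonneg_nat (fun k ↦ ?_)
    (h.integrable_sq_sub_variance x) fun i ↦ ?_
  · have hvar : Measurable[ℱ k] (partialSum w k) := Finset.measurable_sum _ fun i hi ↦
      ((h.stronglyMeasurable_variance i).mono (ℱ.mono (Finset.mem_range.1 hi).le)).measurable
    exact (((measurable_const.sub (h.measurable_partialSum_increment k)).pow_const 2).sub
      (hvar.const_mul 2)).stronglyMeasurable
  have hcross : Integrable (fun ω ↦ (x - partialSum U i ω) * U i ω) Q :=
    ((memLp_const x).sub (h.memLp_partialSum i)).integrable_mul (h.memLp_increment i)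
  have hvar : Integrable (fun ω ↦ 2 * w i ω) Q := (h.integrable_variance i).const_mul 2
  have hstep : ((fun ω ↦ (x - partialSum U i ω) ^ 2 - 2 * partialSum w i ω) -
      fun ω ↦ (x - partialSum U (i + 1) ω) ^ 2 - 2 * partialSum w (i + 1) ω) =
      ((2 : ℝ) • fun ω ↦ (x - partialSum U i ω) * U i ω) +
        ((fun ω ↦ 2 * w i ω) - fun ω ↦ U i ω ^ 2) := by
    ext ω
    simp only [Pi.sub_apply, Pi.add_apply, Pi.smul_apply, smul_eq_mul, partialSum_succ]
    ring
  rw [hstep]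
  filter_upwards [condExp_add (hcross.smul (2 : ℝ)) (hvar.sub (h.integrable_sq i)) (ℱ i),
    condExp_smul (μ := Q) (2 : ℝ) (fun ω ↦ (x - partialSum U i ω) * U i ω) (ℱ i),
    condExp_sub hvar (h.integrable_sq i) (ℱ i), h.condExp_centered_mul_increment x i,
    h.condExp_sq i] with ω hadd hsmul hsub hzero hsq
  rw [hadd, Pi.add_apply, hsmul, hsub, Pi.smul_apply, hzero, Pi.sub_apply,
    condExp_of_stronglyMeasurable (ℱ.le i) ((h.stronglyMeasurable_variance i).const_mul 2) hvar]
  simp only [Pi.zero_apply, smul_zero, zero_add, sub_nonneg]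
  nlinarith [abs_le.1 hsq, h.variance_nonneg i ω, h.error_le_one]

lemma integral_mul_sq_le (h : IsLyapunovMDS Q ℱ U w n ρ γ ε δ C) {k m : ℕ} (hkm : k ≤ m)
    {g : Ω → ℝ} {M : ℝ} (hg : StronglyMeasurable[ℱ k] g) (hg0 : ∀ ω, 0 ≤ g ω)
    (hM : ∀ ω, |g ω| ≤ M) (x : ℝ) :
    ∫ ω, g ω * ((x - partialSum U m ω) ^ 2 - 2 * partialSum w m ω) ∂Q ≤
      ∫ ω, g ω * ((x - partialSum U k ω) ^ 2 - 2 * partialSum w k ω) ∂Q := by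
  have hgQ := (hg.mono (ℱ.le k)).aestronglyMeasurable (μ := Q)
  have hMQ : ∀ᵐ ω ∂Q, ‖g ω‖ ≤ M := Eventually.of_forall hM
  have hint := h.integrable_sq_sub_variance x
  rw [← integral_mul_condExp (ℱ.le k) hg (hint m) ((hint m).bdd_mul hgQ hMQ)]
  refine integral_mono_ae (integrable_condExp.bdd_mul hgQ hMQ) ((hint k).bdd_mul hgQ hMQ) ?_
  filter_upwards [(h.supermartingale_sq_sub_variance x).2.1 k m hkm] with ω hω
  exact mul_le_mul_of_nonneg_left hω (hg0 ω)

end Supermartingale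

end IsLyapunovMDS

section NegativePowers

lemma rpow_neg_le_of_tangent_three {s t p : ℝ} (hs : 0 < s) (ht : 0 < t) (hp : 0 ≤ p)
    (hp2 : p ≤ 2) :
    1 / 9 * s ^ (-p) ≤ t ^ (-p) + p * 3 ^ (-(p + 1)) * s ^ (-(p + 1)) * (t - 3 * s) := by
  have htangent := rpow_neg_tangent_le ht (mul_pos three_pos hs) hp
  rw [Real.mul_rpow zero_le_three hs.le, Real.mul_rpow zero_le_three hs.le] at htangent
  have hninth : (1 / 9 : ℝ) ≤ 3 ^ (-p) :=
    calc (1 / 9 : ℝ) = 3 ^ (-2 : ℝ) := by norm_num [Real.rpow_neg]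
      _ ≤ 3 ^ (-p) := Real.rpow_le_rpow_of_exponent_le (by norm_num) (by linarith)
  linarith [mul_le_mul_of_nonneg_right hninth (Real.rpow_nonneg hs.le (-p))]

lemma rpow_mul_le_sub_rpow {t v q : ℝ} (ht : 0 < t) (hv : 0 ≤ v) (hvt : v ≤ t) (hq : 0 < q)
    (hq1 : q ≤ 1) : t ^ (-(1 + q)) * v ≤ 4 / q * (t ^ (-q) - (t + v) ^ (-q)) := by
  have hdouble : t ^ (-(1 + q)) ≤ 4 * (t + v) ^ (-(q + 1)) :=
    calc t ^ (-(1 + q)) = 2 ^ (q + 1) * (2 * t) ^ (-(q + 1)) := by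
          rw [Real.mul_rpow zero_le_two ht.le, ← mul_assoc, ← Real.rpow_add zero_lt_two,
            add_neg_cancel, Real.rpow_zero, one_mul, add_comm]
      _ ≤ 2 ^ (2 : ℝ) * (t + v) ^ (-(q + 1)) := by
          gcongr ?_ * ?_
          · exact Real.rpow_le_rpow_of_exponent_le one_le_two (by linarith)
          · exact Real.rpow_le_rpow_of_nonpos (by linarith) (by linarith) (by linarith)
      _ = 4 * (t + v) ^ (-(q + 1)) := by norm_num
  have htangent := rpow_neg_tangent_le ht (by linarith : 0 < t + v) hq.le
  calc t ^ (-(1 + q)) * v ≤ 4 * (t + v) ^ (-(q + 1)) * v := by gcongr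
    _ = 4 / q * (q * (t + v) ^ (-(q + 1)) * v) := by field_simp
    _ ≤ 4 / q * (t ^ (-q) - (t + v) ^ (-q)) := by
        gcongr
        linarith

lemma sum_rpow_mul_le {n : ℕ} {r v : ℕ → ℝ} {q : ℝ} (hr : ∀ k ≤ n, 0 < r k)
    (hrv : ∀ k < n, r k = r (k + 1) + v k) (hv : ∀ k < n, 0 ≤ v k)
    (hvr : ∀ k < n, v k ≤ r (k + 1)) (hq : 0 < q) (hq1 : q ≤ 1) :
    ∑ k ∈ Finset.range n, r (k + 1) ^ (-(1 + q)) * v k ≤ 4 / q * r n ^ (-q) :=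
  calc ∑ k ∈ Finset.range n, r (k + 1) ^ (-(1 + q)) * v k
      ≤ ∑ k ∈ Finset.range n, 4 / q * (r (k + 1) ^ (-q) - r k ^ (-q)) := by
        refine Finset.sum_le_sum fun k hk ↦ ?_
        have hkn := Finset.mem_range.1 hk
        rw [hrv k hkn]
        exact rpow_mul_le_sub_rpow (hr (k + 1) hkn) (hv k hkn) (hvr k hkn) hq hq1
    _ = 4 / q * (r n ^ (-q) - r 0 ^ (-q)) := by
        rw [← Finset.mul_sum, Finset.sum_range_sub fun k ↦ r k ^ (-q)]
    _ ≤ 4 / q * r n ^ (-q) := by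
        gcongr
        exact sub_le_self _ (Real.rpow_nonneg (hr 0 n.zero_le).le _)

end NegativePowers

section ResidualVariance

variable {Ω : Type*} {U w : ℕ → Ω → ℝ} {a δ x p : ℝ} {k j : ℕ} {ω : Ω}

/-- The conditional variance `1 + δ² - ∑_{i < k} w_i` still to come at time `k`, increased by the
smoothing variance `a²`. The truncation at `0` only matters on a null set. -/
noncomputable def residualVariance (w : ℕ → Ω → ℝ) (a δ : ℝ) (k : ℕ) (ω : Ω) : ℝ :=
  a ^ 2 + max 0 (1 + δ ^ 2 - partialSum w k ω)

lemma sq_le_residualVariance : a ^ 2 ≤ residualVariance w a δ k ω :=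
  le_add_of_nonneg_right (le_max_left _ _)

lemma residualVariance_pos (ha : 0 < a) : 0 < residualVariance w a δ k ω :=
  (pow_pos ha 2).trans_le sq_le_residualVariance

lemma residualVariance_zero : residualVariance w a δ 0 ω = a ^ 2 + (1 + δ ^ 2) := by
  rw [residualVariance, partialSum, Finset.sum_range_zero, sub_zero, max_eq_right (by positivity)]

/-- The weights `(s_k + (x - S_j)²)^{-p}` controlling the Taylor remainders of the smoothed
indicator, where `s_k` is the residual variance at time `k` and `S_j = ∑_{i < j} U_i`. -/
noncomputable def residualWeight (U w : ℕ → Ω → ℝ) (a δ x p : ℝ) (k j : ℕ) (ω : Ω) : ℝ :=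
  (residualVariance w a δ k ω + (x - partialSum U j ω) ^ 2) ^ (-p)

lemma residualWeight_nonneg : 0 ≤ residualWeight U w a δ x p k j ω :=
  Real.rpow_nonneg (add_nonneg ((sq_nonneg a).trans sq_le_residualVariance) (sq_nonneg _)) _

lemma abs_residualWeight_le (ha : 0 < a) (hp : 0 ≤ p) :
    |residualWeight U w a δ x p k j ω| ≤ (a ^ 2) ^ (-p) := by
  rw [abs_of_nonneg residualWeight_nonneg]
  exact Real.rpow_le_rpow_of_nonpos (by positivity)
    (le_add_of_le_of_nonneg sq_le_residualVariance (sq_nonneg _)) (by linarith)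

end ResidualVariance

namespace IsLyapunovMDS

variable {Ω : Type*} {mΩ : MeasurableSpace Ω} {Q : Measure Ω} {ℱ : Filtration ℕ mΩ}
  {U w : ℕ → Ω → ℝ} {n : ℕ} {ρ γ ε δ C : ℝ} {a p x : ℝ} {k j : ℕ} {ω : Ω}

section ResidualVariance

lemma partialSum_variance_nonneg (h : IsLyapunovMDS Q ℱ U w n ρ γ ε δ C) :
    0 ≤ partialSum w k ω :=
  Finset.sum_nonneg fun i _ ↦ h.variance_nonneg i ω

lemma residualVariance_eq (h : IsLyapunovMDS Q ℱ U w n ρ γ ε δ C)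
    (hω : |partialSum w n ω - 1| ≤ δ ^ 2) (hk : k ≤ n) :
    residualVariance w a δ k ω = a ^ 2 + (1 + δ ^ 2 - partialSum w k ω) := by
  rw [residualVariance, max_eq_right]
  linarith [(abs_le.1 hω).2, monotone_partialSum (h.variance_nonneg · ω) hk]

lemma residualVariance_eq_add (h : IsLyapunovMDS Q ℱ U w n ρ γ ε δ C)
    (hω : |partialSum w n ω - 1| ≤ δ ^ 2) (hk : k < n) :
    residualVariance w a δ k ω = residualVariance w a δ (k + 1) ω + w k ω := by
  rw [h.residualVariance_eq hω hk.le, h.residualVariance_eq hω hk, partialSum_succ]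
  ring

lemma residualVariance_le (h : IsLyapunovMDS Q ℱ U w n ρ γ ε δ C) :
    residualVariance w a δ k ω ≤ a ^ 2 + (1 + δ ^ 2) := by
  rw [residualVariance]
  gcongr
  exact max_le (by positivity) (sub_le_self _ h.partialSum_variance_nonneg)

lemma residualVariance_last_le (h : IsLyapunovMDS Q ℱ U w n ρ γ ε δ C)
    (hω : |partialSum w n ω - 1| ≤ δ ^ 2) :
    residualVariance w a δ n ω ≤ a ^ 2 + 2 * δ ^ 2 := by
  rw [h.residualVariance_eq hω le_rfl]
  linarith [(abs_le.1 hω).1]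

lemma variance_le_residualVariance (h : IsLyapunovMDS Q ℱ U w n ρ γ ε δ C) (hγa : γ ≤ a) (i : ℕ) :
    w i ω ≤ residualVariance w a δ k ω :=
  (h.variance_le i ω).trans
    ((pow_le_pow_left₀ h.scale_pos.le hγa 2).trans sq_le_residualVariance)

lemma partialSum_variance_sub_le (h : IsLyapunovMDS Q ℱ U w n ρ γ ε δ C) (hγa : γ ≤ a)
    (hω : |partialSum w n ω - 1| ≤ δ ^ 2) :
    partialSum w n ω - partialSum w k ω ≤ residualVariance w a δ (k + 1) ω := by
  have hγ := pow_le_pow_left₀ h.scale_pos.le hγa 2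
  rw [residualVariance, partialSum_succ]
  linarith [(abs_le.1 hω).2, h.variance_le k ω,
    le_max_right 0 (1 + δ ^ 2 - (partialSum w k ω + w k ω))]

lemma measurable_residualVariance_succ (h : IsLyapunovMDS Q ℱ U w n ρ γ ε δ C) (a : ℝ) (k : ℕ) :
    Measurable[ℱ k] (residualVariance w a δ (k + 1)) :=
  (measurable_const.max
    (measurable_const.sub (h.measurable_partialSum_variance k))).const_add (a ^ 2)

lemma measurable_residualVariance (h : IsLyapunovMDS Q ℱ U w n ρ γ ε δ C) (a : ℝ) (k : ℕ) :
    Measurable (residualVariance w a δ k) :=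
  (measurable_const.max (measurable_const.sub (Finset.measurable_sum _ fun i _ ↦
    ((h.stronglyMeasurable_variance i).mono (ℱ.le i)).measurable))).const_add (a ^ 2)

lemma measurable_residualWeight {m : MeasurableSpace Ω}
    (hs : Measurable[m] (residualVariance w a δ k)) (hS : Measurable[m] (partialSum U j))
    (x p : ℝ) : Measurable[m] (residualWeight U w a δ x p k j) :=
  (hs.add ((measurable_const.sub hS).pow_const 2)).pow_const (-p)

lemma stronglyMeasurable_residualWeight (h : IsLyapunovMDS Q ℱ U w n ρ γ ε δ C) (a x p : ℝ)
    (k : ℕ) : StronglyMeasurable[ℱ k] (residualWeight U w a δ x p (k + 1) k) :=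
  (measurable_residualWeight (h.measurable_residualVariance_succ a k)
    (h.measurable_partialSum_increment k) x p).stronglyMeasurable

end ResidualVariance

section Transfer

variable [IsFiniteMeasure Q]

lemma integrable_residualWeight_mul_variance (h : IsLyapunovMDS Q ℱ U w n ρ γ ε δ C) (ha : 0 < a)
    (hp : 0 ≤ p) (x : ℝ) (k j : ℕ) :
    Integrable (fun ω ↦ residualWeight U w a δ x p (k + 1) j ω * w k ω) Q :=
  (h.integrable_variance k).bdd_mul
    (measurable_residualWeight ((h.measurable_residualVariance_succ a k).mono (ℱ.le k) le_rfl)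
      (h.measurable_sum j) x p).aestronglyMeasurable
    (Eventually.of_forall fun _ ↦ abs_residualWeight_le ha hp)

lemma integrable_residualVariance_add_sq (h : IsLyapunovMDS Q ℱ U w n ρ γ ε δ C) (a x : ℝ)
    (k j : ℕ) :
    Integrable (fun ω ↦ residualVariance w a δ (k + 1) ω + (x - partialSum U j ω) ^ 2) Q := by
  refine .add (.of_bound ((h.measurable_residualVariance_succ a k).mono (ℱ.le k)
    le_rfl).aestronglyMeasurable (a ^ 2 + (1 + δ ^ 2)) (Eventually.of_forall fun ω ↦ ?_))
    ((memLp_const x).sub (h.memLp_partialSum j)).integrable_sq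
  rw [Real.norm_of_nonneg ((sq_nonneg a).trans sq_le_residualVariance)]
  exact h.residualVariance_le

lemma integral_mul_sub_three_mul_nonpos (h : IsLyapunovMDS Q ℱ U w n ρ γ ε δ C) (hγa : γ ≤ a)
    (hk : k ≤ n) {g : Ω → ℝ} {M : ℝ} (hg : StronglyMeasurable[ℱ k] g) (hg0 : ∀ ω, 0 ≤ g ω)
    (hM : ∀ ω, |g ω| ≤ M) (x : ℝ) :
    ∫ ω, g ω * (residualVariance w a δ (k + 1) ω + (x - partialSum U n ω) ^ 2 -
      3 * (residualVariance w a δ (k + 1) ω + (x - partialSum U k ω) ^ 2)) ∂Q ≤ 0 := by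
  have hgQ := (hg.mono (ℱ.le k)).aestronglyMeasurable (μ := Q)
  have hMQ : ∀ᵐ ω ∂Q, ‖g ω‖ ≤ M := Eventually.of_forall hM
  have hint (m : ℕ) := (h.integrable_sq_sub_variance x m).bdd_mul hgQ hMQ
  refine le_trans ?_ (sub_nonpos.2 (h.integral_mul_sq_le hk hg hg0 hM x))
  rw [← integral_sub (hint n) (hint k)]
  refine integral_mono_ae (((h.integrable_residualVariance_add_sq a x k n).sub
    ((h.integrable_residualVariance_add_sq a x k k).const_mul 3)).bdd_mul hgQ hMQ)
    ((hint n).sub (hint k)) ?_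
  filter_upwards [h.variance_sum] with ω hω
  simp only [← mul_sub]
  refine mul_le_mul_of_nonneg_left ?_ (hg0 ω)
  linarith [h.partialSum_variance_sub_le hγa hω (k := k), sq_nonneg (x - partialSum U k ω)]

/- The tangent of the convex function `t ↦ t^{-p}` at three times the value at time `k` turns the
supermartingale bound for `s + (x - S_n)²` into a lower bound for its negative powers. -/
lemma integral_residualWeight_mul_le (h : IsLyapunovMDS Q ℱ U w n ρ γ ε δ C) (ha : 0 < a)
    (hγa : γ ≤ a) (hp : 0 ≤ p) (hp2 : p ≤ 2) (hk : k ≤ n) (x : ℝ) :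
    ∫ ω, residualWeight U w a δ x p (k + 1) k ω * w k ω ∂Q ≤
      9 * ∫ ω, residualWeight U w a δ x p (k + 1) n ω * w k ω ∂Q := by
  set T : ℕ → Ω → ℝ := fun j ω ↦ residualVariance w a δ (k + 1) ω + (x - partialSum U j ω) ^ 2
  have hT (j ω) : 0 < T j ω := add_pos_of_pos_of_nonneg (residualVariance_pos ha) (sq_nonneg _)
  have hp1 : 0 ≤ p + 1 := by linarith
  set c : ℝ := p * 3 ^ (-(p + 1))
  have hc : 0 ≤ c := by positivity
  set g : Ω → ℝ := fun ω ↦ c * residualWeight U w a δ x (p + 1) (k + 1) k ω * w k ω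
  have hg : StronglyMeasurable[ℱ k] g :=
    ((h.stronglyMeasurable_residualWeight a x (p + 1) k).const_mul c).mul
      (h.stronglyMeasurable_variance k)
  have hg0 (ω) : 0 ≤ g ω :=
    mul_nonneg (mul_nonneg hc residualWeight_nonneg) (h.variance_nonneg k ω)
  have hM (ω) : |g ω| ≤ c * (a ^ 2) ^ (-(p + 1)) * γ ^ 2 := by
    rw [abs_mul, abs_mul, abs_of_nonneg hc, abs_of_nonneg (h.variance_nonneg k ω)]
    gcongr
    · exact h.variance_nonneg k ω
    · exact abs_residualWeight_le ha hp1
    · exact h.variance_le k ω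
  have hintW (j : ℕ) := h.integrable_residualWeight_mul_variance ha hp x k j
  have hintg : Integrable (fun ω ↦ g ω * (T n ω - 3 * T k ω)) Q :=
    ((h.integrable_residualVariance_add_sq a x k n).sub
      ((h.integrable_residualVariance_add_sq a x k k).const_mul 3)).bdd_mul
      (hg.mono (ℱ.le k)).aestronglyMeasurable (Eventually.of_forall hM)
  have hpointwise (ω) : 1 / 9 * (residualWeight U w a δ x p (k + 1) k ω * w k ω) ≤
      residualWeight U w a δ x p (k + 1) n ω * w k ω + g ω * (T n ω - 3 * T k ω) := by
    calc 1 / 9 * (T k ω ^ (-p) * w k ω) = 1 / 9 * T k ω ^ (-p) * w k ω := by ring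
      _ ≤ (T n ω ^ (-p) + c * T k ω ^ (-(p + 1)) * (T n ω - 3 * T k ω)) * w k ω :=
          mul_le_mul_of_nonneg_right (rpow_neg_le_of_tangent_three (hT k ω) (hT n ω) hp hp2)
            (h.variance_nonneg k ω)
      _ = T n ω ^ (-p) * w k ω + c * T k ω ^ (-(p + 1)) * w k ω * (T n ω - 3 * T k ω) := by ring
  have hintegrated := integral_mono ((hintW k).const_mul (1 / 9)) ((hintW n).add hintg) hpointwise
  rw [integral_const_mul, integral_add' (hintW n) hintg] at hintegrated
  linarith [h.integral_mul_sub_three_mul_nonpos hγa hk hg hg0 hM x]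

lemma sum_integral_residualWeight_mul_le (h : IsLyapunovMDS Q ℱ U w n ρ γ ε δ C) (ha : 0 < a)
    (hγa : γ ≤ a) {q : ℝ} (hq : 0 < q) (hq1 : q ≤ 1) (x : ℝ) :
    ∑ k ∈ Finset.range n, ∫ ω, residualWeight U w a δ x (1 + q) (k + 1) k ω * w k ω ∂Q ≤
      36 / q * ∫ ω, (a ^ 2 + (x - partialSum U n ω) ^ 2) ^ (-q) ∂Q := by
  have hintW (k : ℕ) :=
    h.integrable_residualWeight_mul_variance ha (by linarith : 0 ≤ 1 + q) x k n
  have hint : Integrable (fun ω ↦ (a ^ 2 + (x - partialSum U n ω) ^ 2) ^ (-q)) Q := by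
    refine .of_bound ((((measurable_const.sub (h.measurable_sum n)).pow_const 2).const_add
      (a ^ 2)).pow_const (-q)).aestronglyMeasurable ((a ^ 2) ^ (-q))
      (Eventually.of_forall fun ω ↦ ?_)
    rw [Real.norm_of_nonneg (by positivity)]
    exact Real.rpow_le_rpow_of_nonpos (by positivity) (le_add_of_nonneg_right (sq_nonneg _))
      (by linarith)
  calc ∑ k ∈ Finset.range n, ∫ ω, residualWeight U w a δ x (1 + q) (k + 1) k ω * w k ω ∂Q
      ≤ ∑ k ∈ Finset.range n,
          9 * ∫ ω, residualWeight U w a δ x (1 + q) (k + 1) n ω * w k ω ∂Q :=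
        Finset.sum_le_sum fun k hk ↦ h.integral_residualWeight_mul_le ha hγa (by linarith)
          (by linarith) (Finset.mem_range.1 hk).le x
    _ = 9 * ∫ ω, ∑ k ∈ Finset.range n,
          residualWeight U w a δ x (1 + q) (k + 1) n ω * w k ω ∂Q := by
        rw [← Finset.mul_sum, integral_finsetSum _ fun k _ ↦ hintW k]
    _ ≤ 9 * ∫ ω, 4 / q * (a ^ 2 + (x - partialSum U n ω) ^ 2) ^ (-q) ∂Q := by
        refine mul_le_mul_of_nonneg_left (integral_mono_ae
          (integrable_finsetSum _ fun k _ ↦ hintW k) (hint.const_mul _) ?_) (by norm_num)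
        filter_upwards [h.variance_sum] with ω hω
        refine (sum_rpow_mul_le
          (r := fun k ↦ residualVariance w a δ k ω + (x - partialSum U n ω) ^ 2)
          (fun k _ ↦ add_pos_of_pos_of_nonneg (residualVariance_pos ha) (sq_nonneg _))
          (fun k hk ↦ by rw [h.residualVariance_eq_add hω hk]; ring)
          (fun k _ ↦ h.variance_nonneg k ω)
          (fun k _ ↦ le_add_of_le_of_nonneg (h.variance_le_residualVariance hγa k) (sq_nonneg _))
          hq hq1).trans (mul_le_mul_of_nonneg_left ?_ (by positivity))
        exact Real.rpow_le_rpow_of_nonpos (by positivity)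
          (add_le_add_left sq_le_residualVariance _) (by linarith)
    _ = 36 / q * ∫ ω, (a ^ 2 + (x - partialSum U n ω) ^ 2) ^ (-q) ∂Q := by
        rw [integral_const_mul]
        ring

end Transfer

end IsLyapunovMDS

section SmoothedIndicator

/-- The probability that `S_k` plus an independent centred normal variable of variance `s_k` is at
most `x`, given the past of time `k`. Here `s_k` is the residual variance, so that the smoothed
indicators at consecutive times differ by replacing one increment by a normal variable. -/
noncomputable def smoothedIndicator {Ω : Type*} (U w : ℕ → Ω → ℝ) (a δ x : ℝ) (k : ℕ) (ω : Ω) :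
    ℝ :=
  Φ ((x - partialSum U k ω) / √(residualVariance w a δ k ω))

/-- Minus the first order coefficient of the smoothed indicator at time `k + 1`, as a function of
the increment `U_k`. -/
noncomputable def smoothedGradient {Ω : Type*} (U w : ℕ → Ω → ℝ) (a δ x : ℝ) (k : ℕ) (ω : Ω) : ℝ :=
  φ ((x - partialSum U k ω) / √(residualVariance w a δ (k + 1) ω)) /
    √(residualVariance w a δ (k + 1) ω)

/-- The second derivative of the smoothed indicator at time `k + 1`, as a function of the increment
`U_k`. -/
noncomputable def smoothedHessian {Ω : Type*} (U w : ℕ → Ω → ℝ) (a δ x : ℝ) (k : ℕ) (ω : Ω) : ℝ :=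
  normalCDFHess (residualVariance w a δ (k + 1) ω) (x - partialSum U k ω)

/-- The error of the second order expansion comparing the replacement of `U_k` with that of a normal
variable of variance `w_k`. -/
noncomputable def swapRemainder {Ω : Type*} (U w : ℕ → Ω → ℝ) (a δ x : ℝ) (k : ℕ) (ω : Ω) : ℝ :=
  smoothedIndicator U w a δ x (k + 1) ω - smoothedIndicator U w a δ x k ω +
    smoothedGradient U w a δ x k ω * U k ω -
    1 / 2 * (smoothedHessian U w a δ x k ω * (U k ω ^ 2 - w k ω))

end SmoothedIndicator

namespace IsLyapunovMDS

variable {Ω : Type*} {mΩ : MeasurableSpace Ω} {Q : Measure Ω} {ℱ : Filtration ℕ mΩ}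
  {U w : ℕ → Ω → ℝ} {n : ℕ} {ρ γ ε δ C : ℝ} {a p x : ℝ} {k j : ℕ} {ω : Ω}

section LindebergSwapping

lemma variance_rpow_le (h : IsLyapunovMDS Q ℱ U w n ρ γ ε δ C) (i : ℕ) (ω : Ω) :
    w i ω ^ (1 + ρ / 2) ≤ γ ^ ρ * w i ω := by
  have hρ := h.exponent_pos
  rw [add_comm, Real.rpow_add_one' (h.variance_nonneg i ω) (by positivity)]
  refine mul_le_mul_of_nonneg_right ?_ (h.variance_nonneg i ω)
  calc w i ω ^ (ρ / 2) ≤ (γ ^ 2) ^ (ρ / 2) :=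
        Real.rpow_le_rpow (h.variance_nonneg i ω) (h.variance_le i ω) (by positivity)
    _ = γ ^ ρ := by
        rw [← Real.rpow_natCast, ← Real.rpow_mul h.scale_pos.le]
        congr 1
        push_cast
        ring

lemma stronglyMeasurable_smoothedGradient (h : IsLyapunovMDS Q ℱ U w n ρ γ ε δ C) (a x : ℝ)
    (k : ℕ) : StronglyMeasurable[ℱ k] (smoothedGradient U w a δ x k) := by
  have hs := (h.measurable_residualVariance_succ a k).sqrt
  exact ((continuous_gaussianPDFReal_zero_one.measurable.comp
    ((measurable_const.sub (h.measurable_partialSum_increment k)).div hs)).div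
    hs).stronglyMeasurable

lemma stronglyMeasurable_smoothedHessian (h : IsLyapunovMDS Q ℱ U w n ρ γ ε δ C) (a x : ℝ)
    (k : ℕ) : StronglyMeasurable[ℱ k] (smoothedHessian U w a δ x k) := by
  have hs := h.measurable_residualVariance_succ a k
  have hz := (measurable_const (a := x)).sub (h.measurable_partialSum_increment k) |>.div hs.sqrt
  exact ((hz.neg.mul (continuous_gaussianPDFReal_zero_one.measurable.comp hz)).div
    hs).stronglyMeasurable

lemma abs_smoothedGradient_le (ha : 0 < a) (ω : Ω) : |smoothedGradient U w a δ x k ω| ≤ 1 / a := by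
  have hs : a ≤ √(residualVariance w a δ (k + 1) ω) := Real.le_sqrt_of_sq_le sq_le_residualVariance
  rw [smoothedGradient,
    abs_of_nonneg (div_nonneg (gaussianPDFReal_nonneg 0 1 _) (Real.sqrt_nonneg _))]
  exact div_le_div₀ zero_le_one (gaussianPDFReal_zero_one_le_one _) ha hs

lemma abs_smoothedHessian_le (h : IsLyapunovMDS Q ℱ U w n ρ γ ε δ C) (ha : 0 < a) (ha1 : a ≤ 1)
    (hδ : δ ^ 2 ≤ 1) (ω : Ω) :
    |smoothedHessian U w a δ x k ω| ≤ 8192 * residualWeight U w a δ x (1 + 1 / 4) (k + 1) k ω := by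
  have hs : residualVariance w a δ (k + 1) ω ≤ a ^ 2 + (1 + δ ^ 2) := h.residualVariance_le
  rw [smoothedHessian, residualWeight, show (1 + 1 / 4 : ℝ) = 5 / 4 by norm_num]
  exact abs_normalCDFHess_le (residualVariance_pos ha) (by nlinarith) (x - partialSum U k ω)

lemma abs_smoothedHessian_le_const (h : IsLyapunovMDS Q ℱ U w n ρ γ ε δ C) (ha : 0 < a)
    (ha1 : a ≤ 1) (hδ : δ ^ 2 ≤ 1) (ω : Ω) :
    |smoothedHessian U w a δ x k ω| ≤ 8192 * (a ^ 2) ^ (-(1 + 1 / 4 : ℝ)) :=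
  (h.abs_smoothedHessian_le ha ha1 hδ ω).trans (mul_le_mul_of_nonneg_left
    ((le_abs_self _).trans (abs_residualWeight_le ha (by norm_num))) (by norm_num))

lemma abs_swapRemainder_le (h : IsLyapunovMDS Q ℱ U w n ρ γ ε δ C) (ha : 0 < a)
    (hγa : γ ≤ a) (hω : |partialSum w n ω - 1| ≤ δ ^ 2) (hk : k < n) (x : ℝ) :
    |swapRemainder U w a δ x k ω| ≤
      80000 * (residualWeight U w a δ x (1 + ρ / 2) (k + 1) k ω * |U k ω| ^ (2 + ρ)) +
        3072 * γ ^ ρ * (residualWeight U w a δ x (1 + ρ / 2) (k + 1) k ω * w k ω) := by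
  set s := residualVariance w a δ (k + 1) ω with hs
  set y := x - partialSum U k ω with hy
  have hs0 : 0 < s := residualVariance_pos ha
  have hspace := abs_normalCDF_space_expansion_le hs0 h.exponent_pos.le h.exponent_le_one y
    (U k ω)
  have hvariance := abs_normalCDF_variance_expansion_le hs0 (h.variance_nonneg k ω)
    (h.variance_le_residualVariance hγa k) h.exponent_le_one y
  have hnext : smoothedIndicator U w a δ x (k + 1) ω = Φ ((y - U k ω) / √s) := by
    rw [smoothedIndicator, partialSum_succ, hy, sub_sub]
  have hprev : smoothedIndicator U w a δ x k ω = Φ (y / √(s + w k ω)) := by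
    rw [smoothedIndicator, h.residualVariance_eq_add hω hk]
  have hrpow := mul_le_mul_of_nonneg_right (h.variance_rpow_le k ω)
    (Real.rpow_nonneg (by positivity : 0 ≤ s + y ^ 2) (-(1 + ρ / 2)))
  rw [swapRemainder, hnext, hprev, smoothedGradient, smoothedHessian, residualWeight, ← hs, ← hy,
    show ∀ A B D E F G : ℝ, A - B + D * E - 1 / 2 * (F * (E ^ 2 - G)) =
      (A - Φ (y / √s) + E * D - E ^ 2 / 2 * F) - (B - Φ (y / √s) - G / 2 * F) by intros; ring]
  refine (abs_sub _ _).trans ?_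
  linarith

lemma integrable_smoothedIndicator [IsFiniteMeasure Q] (h : IsLyapunovMDS Q ℱ U w n ρ γ ε δ C)
    (a x : ℝ) (k : ℕ) : Integrable (smoothedIndicator U w a δ x k) Q := by
  refine .of_bound (continuous_stdNormalCDF.measurable.comp
    ((measurable_const.sub (h.measurable_sum k)).div
      (h.measurable_residualVariance a k).sqrt)).aestronglyMeasurable 1
    (Eventually.of_forall fun ω ↦ ?_)
  rw [smoothedIndicator, Real.norm_of_nonneg (stdNormalCDF_nonneg _)]
  exact stdNormalCDF_le_one _

section Integrals

variable [IsFiniteMeasure Q]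

lemma integrable_smoothedGradient_mul (h : IsLyapunovMDS Q ℱ U w n ρ γ ε δ C) (ha : 0 < a) (x : ℝ)
    (k : ℕ) : Integrable (fun ω ↦ smoothedGradient U w a δ x k ω * U k ω) Q :=
  (h.integrable_increment k).bdd_mul
    ((h.stronglyMeasurable_smoothedGradient a x k).mono (ℱ.le k)).aestronglyMeasurable
    (Eventually.of_forall fun ω ↦ abs_smoothedGradient_le ha ω)

lemma integrable_smoothedHessian_mul (h : IsLyapunovMDS Q ℱ U w n ρ γ ε δ C) (ha : 0 < a)
    (ha1 : a ≤ 1) (hδ : δ ^ 2 ≤ 1) (x : ℝ) (k : ℕ) :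
    Integrable (fun ω ↦ smoothedHessian U w a δ x k ω * (U k ω ^ 2 - w k ω)) Q :=
  ((h.integrable_sq k).sub (h.integrable_variance k)).bdd_mul
    ((h.stronglyMeasurable_smoothedHessian a x k).mono (ℱ.le k)).aestronglyMeasurable
    (Eventually.of_forall (h.abs_smoothedHessian_le_const ha ha1 hδ))

lemma integrable_swapRemainder (h : IsLyapunovMDS Q ℱ U w n ρ γ ε δ C) (ha : 0 < a)
    (ha1 : a ≤ 1) (hδ : δ ^ 2 ≤ 1) (x : ℝ) (k : ℕ) : Integrable (swapRemainder U w a δ x k) Q :=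
  (((h.integrable_smoothedIndicator a x (k + 1)).sub (h.integrable_smoothedIndicator a x k)).add
    (h.integrable_smoothedGradient_mul ha x k)).sub
    ((h.integrable_smoothedHessian_mul ha ha1 hδ x k).const_mul _)

lemma integral_smoothedIndicator_succ_sub (h : IsLyapunovMDS Q ℱ U w n ρ γ ε δ C) (ha : 0 < a)
    (ha1 : a ≤ 1) (hδ : δ ^ 2 ≤ 1) (x : ℝ) (k : ℕ) :
    ∫ ω, smoothedIndicator U w a δ x (k + 1) ω ∂Q - ∫ ω, smoothedIndicator U w a δ x k ω ∂Q =
      ∫ ω, swapRemainder U w a δ x k ω ∂Q +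
        1 / 2 * ∫ ω, smoothedHessian U w a δ x k ω * (U k ω ^ 2 - w k ω) ∂Q := by
  have hintG (j) := h.integrable_smoothedIndicator a x j
  have hgrad := h.integrable_smoothedGradient_mul ha x k
  have hhess := (h.integrable_smoothedHessian_mul ha ha1 hδ x k).const_mul (1 / 2)
  have hsplit : swapRemainder U w a δ x k = smoothedIndicator U w a δ x (k + 1) -
      smoothedIndicator U w a δ x k + (fun ω ↦ smoothedGradient U w a δ x k ω * U k ω) -
      fun ω ↦ 1 / 2 * (smoothedHessian U w a δ x k ω * (U k ω ^ 2 - w k ω)) := rfl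
  rw [hsplit, integral_sub' (((hintG _).sub (hintG _)).add hgrad) hhess,
    integral_add' ((hintG _).sub (hintG _)) hgrad, integral_sub' (hintG _) (hintG _),
    h.integral_mul_increment (h.stronglyMeasurable_smoothedGradient a x k)
      (abs_smoothedGradient_le ha), integral_const_mul]
  ring

lemma abs_integral_smoothedHessian_mul_le (h : IsLyapunovMDS Q ℱ U w n ρ γ ε δ C) (ha : 0 < a)
    (ha1 : a ≤ 1) (hδ : δ ^ 2 ≤ 1) (x : ℝ) (k : ℕ) :
    |∫ ω, smoothedHessian U w a δ x k ω * (U k ω ^ 2 - w k ω) ∂Q| ≤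
      8192 * ε * ∫ ω, residualWeight U w a δ x (1 + 1 / 4) (k + 1) k ω * w k ω ∂Q := by
  have hhess := h.stronglyMeasurable_smoothedHessian a x k
  have hbound := h.abs_smoothedHessian_le_const (x := x) (k := k) ha ha1 hδ
  refine (h.abs_integral_mul_sq_sub_le hhess hbound).trans ?_
  rw [mul_comm 8192, mul_assoc, ← integral_const_mul 8192]
  refine mul_le_mul_of_nonneg_left (integral_mono ?_ ?_ fun ω ↦ ?_) h.error_nonneg
  · exact (h.integrable_variance k).bdd_mul (hhess.mono (ℱ.le k)).aestronglyMeasurable.norm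
      (Eventually.of_forall fun ω ↦ by rw [Real.norm_eq_abs, abs_abs]; exact hbound ω)
  · exact (h.integrable_residualWeight_mul_variance ha (by norm_num) x k k).const_mul _
  · dsimp only
    rw [← mul_assoc]
    exact mul_le_mul_of_nonneg_right (h.abs_smoothedHessian_le ha ha1 hδ ω)
      (h.variance_nonneg k ω)

lemma abs_integral_swapRemainder_le (h : IsLyapunovMDS Q ℱ U w n ρ γ ε δ C) (ha : 0 < a)
    (hγa : γ ≤ a) (ha1 : a ≤ 1) (hδ : δ ^ 2 ≤ 1) (hk : k < n) (x : ℝ) :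
    |∫ ω, swapRemainder U w a δ x k ω ∂Q| ≤ 80000 * (C + 1) * γ ^ ρ *
      ∫ ω, residualWeight U w a δ x (1 + ρ / 2) (k + 1) k ω * w k ω ∂Q := by
  have hp : 0 ≤ 1 + ρ / 2 := by linarith [h.exponent_pos]
  have hγ := Real.rpow_nonneg h.scale_pos.le ρ
  have hweight := h.stronglyMeasurable_residualWeight a x (1 + ρ / 2) k
  have hint := h.integrable_residualWeight_mul_variance ha hp x k k
  have hintU : Integrable
      (fun ω ↦ residualWeight U w a δ x (1 + ρ / 2) (k + 1) k ω * |U k ω| ^ (2 + ρ)) Q :=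
    (h.integrable_rpow k).bdd_mul (hweight.mono (ℱ.le k)).aestronglyMeasurable
      (Eventually.of_forall fun ω ↦ abs_residualWeight_le ha hp)
  have hlyapunov := h.integral_mul_rpow_le hweight (fun _ ↦ residualWeight_nonneg)
    fun _ ↦ abs_residualWeight_le ha hp
  have hremainder : |∫ ω, swapRemainder U w a δ x k ω ∂Q| ≤
      80000 * ∫ ω, residualWeight U w a δ x (1 + ρ / 2) (k + 1) k ω * |U k ω| ^ (2 + ρ) ∂Q +
        3072 * γ ^ ρ * ∫ ω, residualWeight U w a δ x (1 + ρ / 2) (k + 1) k ω * w k ω ∂Q := by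
    rw [← integral_const_mul, ← integral_const_mul,
      ← integral_add (hintU.const_mul _) (hint.const_mul _)]
    refine abs_integral_le_integral_abs.trans (integral_mono_ae
      (h.integrable_swapRemainder ha ha1 hδ x k).abs
      ((hintU.const_mul _).add (hint.const_mul _)) ?_)
    filter_upwards [h.variance_sum] with ω hω
    exact h.abs_swapRemainder_le ha hγa hω hk x
  have hnonneg : 0 ≤ γ ^ ρ * ∫ ω, residualWeight U w a δ x (1 + ρ / 2) (k + 1) k ω * w k ω ∂Q :=
    mul_nonneg hγ
      (integral_nonneg fun ω ↦ mul_nonneg residualWeight_nonneg (h.variance_nonneg k ω))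
  linarith

lemma abs_integral_smoothedIndicator_succ_sub_le (h : IsLyapunovMDS Q ℱ U w n ρ γ ε δ C)
    (ha : 0 < a) (hγa : γ ≤ a) (ha1 : a ≤ 1) (hδ : δ ^ 2 ≤ 1) (hk : k < n) (x : ℝ) :
    |∫ ω, smoothedIndicator U w a δ x (k + 1) ω ∂Q - ∫ ω, smoothedIndicator U w a δ x k ω ∂Q| ≤
      80000 * (C + 1) * γ ^ ρ *
        ∫ ω, residualWeight U w a δ x (1 + ρ / 2) (k + 1) k ω * w k ω ∂Q +
      4096 * ε * ∫ ω, residualWeight U w a δ x (1 + 1 / 4) (k + 1) k ω * w k ω ∂Q := by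
  rw [h.integral_smoothedIndicator_succ_sub ha ha1 hδ]
  refine (abs_add_le _ _).trans (add_le_add (h.abs_integral_swapRemainder_le ha hγa ha1 hδ hk x) ?_)
  rw [abs_mul, abs_of_pos one_half_pos]
  linarith [h.abs_integral_smoothedHessian_mul_le ha ha1 hδ x k]

end Integrals

lemma integral_smoothedIndicator_zero [IsProbabilityMeasure Q] (U w : ℕ → Ω → ℝ) (a δ x : ℝ) :
    ∫ ω, smoothedIndicator U w a δ x 0 ω ∂Q = Φ (x / √(a ^ 2 + (1 + δ ^ 2))) := by
  simp [smoothedIndicator, residualVariance_zero, partialSum]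

lemma abs_integral_smoothedIndicator_sub_le [IsProbabilityMeasure Q]
    (h : IsLyapunovMDS Q ℱ U w n ρ γ ε δ C) (ha : 0 < a) (hγa : γ ≤ a) (ha1 : a ≤ 1)
    (hδ : δ ^ 2 ≤ 1) (x : ℝ) :
    |∫ ω, smoothedIndicator U w a δ x n ω ∂Q - Φ (x / √(a ^ 2 + (1 + δ ^ 2)))| ≤
      5760000 / ρ * (C + 1) * γ ^ ρ *
        ∫ ω, (a ^ 2 + (x - partialSum U n ω) ^ 2) ^ (-(ρ / 2)) ∂Q +
      589824 * ε * ∫ ω, (a ^ 2 + (x - partialSum U n ω) ^ 2) ^ (-(1 / 4 : ℝ)) ∂Q := by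
  have hρ := h.exponent_pos
  have hγ := h.scale_pos
  have hC := h.const_nonneg
  have hε := h.error_nonneg
  have hsum_rpow := h.sum_integral_residualWeight_mul_le ha hγa (half_pos hρ)
    (by linarith [h.exponent_le_one]) x
  have hsum_error := h.sum_integral_residualWeight_mul_le ha hγa
    (by norm_num : (0 : ℝ) < 1 / 4) (by norm_num) x
  rw [← integral_smoothedIndicator_zero U w a δ x (Q := Q),
    ← Finset.sum_range_sub fun k ↦ ∫ ω, smoothedIndicator U w a δ x k ω ∂Q]
  calc _ ≤ ∑ k ∈ Finset.range n, (80000 * (C + 1) * γ ^ ρ *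
          ∫ ω, residualWeight U w a δ x (1 + ρ / 2) (k + 1) k ω * w k ω ∂Q +
        4096 * ε * ∫ ω, residualWeight U w a δ x (1 + 1 / 4) (k + 1) k ω * w k ω ∂Q) :=
        (Finset.abs_sum_le_sum_abs _ _).trans (Finset.sum_le_sum fun k hk ↦
          h.abs_integral_smoothedIndicator_succ_sub_le ha hγa ha1 hδ (Finset.mem_range.1 hk) x)
    _ ≤ 80000 * (C + 1) * γ ^ ρ * (36 / (ρ / 2) *
          ∫ ω, (a ^ 2 + (x - partialSum U n ω) ^ 2) ^ (-(ρ / 2)) ∂Q) +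
        4096 * ε * (36 / (1 / 4) *
          ∫ ω, (a ^ 2 + (x - partialSum U n ω) ^ 2) ^ (-(1 / 4 : ℝ)) ∂Q) := by
        rw [Finset.sum_add_distrib, ← Finset.mul_sum, ← Finset.mul_sum]
        gcongr
    _ = _ := by
        field_simp
        ring

end LindebergSwapping

end IsLyapunovMDS

/-- The Kolmogorov distance between the law of `S` under `Q` and the standard normal law. -/
noncomputable def normalKolmogorovDist {Ω : Type*} [MeasurableSpace Ω] (Q : Measure Ω)
    (S : Ω → ℝ) : ℝ :=
  ⨆ x, |Q.real {ω | S ω ≤ x} - Φ x|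

section Concentration

variable {Ω : Type*} [MeasurableSpace Ω] {Q : Measure Ω} {S : Ω → ℝ} {a p t : ℝ}

lemma abs_measureReal_sub_stdNormalCDF_le_one [IsProbabilityMeasure Q] (S : Ω → ℝ) (x : ℝ) :
    |Q.real {ω | S ω ≤ x} - Φ x| ≤ 1 :=
  abs_sub_le_of_nonneg_of_le measureReal_nonneg measureReal_le_one (stdNormalCDF_nonneg x)
    (stdNormalCDF_le_one x)

lemma normalKolmogorovDist_le_one [IsProbabilityMeasure Q] (S : Ω → ℝ) :
    normalKolmogorovDist Q S ≤ 1 :=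
  ciSup_le (abs_measureReal_sub_stdNormalCDF_le_one S)

lemma abs_measureReal_sub_stdNormalCDF_le [IsProbabilityMeasure Q] (S : Ω → ℝ) (x : ℝ) :
    |Q.real {ω | S ω ≤ x} - Φ x| ≤ normalKolmogorovDist Q S :=
  le_ciSup (f := fun x ↦ |Q.real {ω | S ω ≤ x} - Φ x|)
    ⟨1, Set.forall_mem_range.2 (abs_measureReal_sub_stdNormalCDF_le_one S)⟩ x

lemma normalKolmogorovDist_nonneg (Q : Measure Ω) (S : Ω → ℝ) : 0 ≤ normalKolmogorovDist Q S :=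
  Real.iSup_nonneg fun _ ↦ abs_nonneg _

lemma measureReal_abs_sub_le [IsProbabilityMeasure Q] (hS : Measurable S) (x : ℝ) (ht : 0 < t) :
    Q.real {ω | |x - S ω| ≤ t} ≤ 3 * t + 2 * normalKolmogorovDist Q S := by
  have hsum : Q.real {ω | |x - S ω| ≤ t} + Q.real {ω | S ω ≤ x - 2 * t} ≤
      Q.real {ω | S ω ≤ x + t} := by
    rw [← measureReal_union (Set.disjoint_left.2 fun ω h h' ↦ ?_)
      (measurableSet_le hS measurable_const)]
    · refine measureReal_mono fun ω h ↦ ?_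
      simp only [Set.mem_union, Set.mem_ofPred_eq, abs_le] at h ⊢
      rcases h with h | h <;> linarith
    · simp only [Set.mem_ofPred_eq, abs_le] at h h'
      linarith
  have hupper := (abs_le.1 (abs_measureReal_sub_stdNormalCDF_le (Q := Q) S (x + t))).2
  have hlower := (abs_le.1 (abs_measureReal_sub_stdNormalCDF_le (Q := Q) S (x - 2 * t))).1
  have hlip := (le_abs_self _).trans (abs_stdNormalCDF_sub_le (x + t) (x - 2 * t))
  rw [abs_of_nonneg (by linarith)] at hlip
  linarith

lemma le_add_integral_indicator_neg_deriv {f f' : ℝ → ℝ} {r : ℝ} (hr : 0 ≤ r)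
    (hf : ∀ t, 0 ≤ t → HasDerivAt f (f' t) t) (hf' : ContinuousOn f' (Set.Ici 0))
    (hneg : ∀ t, 0 ≤ t → f' t ≤ 0) :
    f r ≤ f 1 + ∫ t in Set.Ioc 0 1, {s | r ≤ s}.indicator (fun s ↦ -f' s) t := by
  have hint : IntegrableOn (fun t ↦ -f' t) (Set.Ioc 0 1) :=
    ((hf'.neg.mono Set.Icc_subset_Ici_self).integrableOn_compact isCompact_Icc).mono_set
      Set.Ioc_subset_Icc_self
  have hnonneg : ∀ᵐ t ∂volume.restrict (Set.Ioc (0 : ℝ) 1 ∩ Set.Ici r), 0 ≤ -f' t :=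
    (ae_restrict_mem (measurableSet_Ioc.inter measurableSet_Ici)).mono fun t ht ↦
      neg_nonneg.2 (hneg t ht.1.1.le)
  change f r ≤ f 1 + ∫ t in Set.Ioc 0 1, (Set.Ici r).indicator (fun s ↦ -f' s) t
  rw [setIntegral_indicator measurableSet_Ici]
  rcases le_total r 1 with hr1 | hr1
  · have hftc : ∫ t in r..1, f' t = f 1 - f r :=
      intervalIntegral.integral_eq_sub_of_hasDerivAt_of_le hr1
        (fun t ht ↦ (hf t (hr.trans ht.1)).continuousAt.continuousWithinAt)
        (fun t ht ↦ hf t (hr.trans ht.1.le))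
        (hf'.mono fun t ht ↦ hr.trans (Set.uIcc_of_le hr1 ▸ ht).1).intervalIntegrable
    have hmono : ∫ t in Set.Ioc r 1, -f' t ≤ ∫ t in Set.Ioc 0 1 ∩ Set.Ici r, -f' t :=
      setIntegral_mono_set (hint.mono_set Set.inter_subset_left) hnonneg
        (Eventually.of_forall fun t ht ↦ ⟨⟨hr.trans_lt ht.1, ht.2⟩, ht.1.le⟩)
    rw [integral_neg, ← intervalIntegral.integral_of_le hr1] at hmono
    linarith
  · have hanti : AntitoneOn f (Set.Ici 0) := by
      refine antitoneOn_of_hasDerivWithinAt_nonpos (convex_Ici 0)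
        (fun t ht ↦ (hf t ht).continuousAt.continuousWithinAt)
        (fun t ht ↦ (hf t (interior_subset ht)).hasDerivWithinAt)
        (fun t ht ↦ hneg t (interior_subset ht))
    linarith [hanti (zero_le_one' ℝ) hr hr1, integral_nonneg_of_ae hnonneg]

lemma integral_affine_mul_neg_deriv {f f' : ℝ → ℝ} {A B : ℝ}
    (hf : ∀ t ∈ Set.Icc (0 : ℝ) 1, HasDerivAt f (f' t) t)
    (hf' : ContinuousOn f' (Set.Icc 0 1)) :
    ∫ t in (0 : ℝ)..1, (A * t + B) * -f' t =
      B * f 0 - (A + B) * f 1 + A * ∫ t in (0 : ℝ)..1, f t := by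
  rw [← Set.uIcc_of_le (zero_le_one' ℝ)] at hf hf'
  have hparts := intervalIntegral.integral_mul_deriv_eq_deriv_mul (u := fun t ↦ A * t + B)
    (u' := fun _ ↦ A) (v := f) (v' := f')
    (fun t _ ↦ by simpa using ((hasDerivAt_id t).const_mul A).add_const B) hf
    intervalIntegrable_const hf'.intervalIntegrable
  simp only [mul_neg, intervalIntegral.integral_neg, hparts, intervalIntegral.integral_const_mul]
  ring

/- Fubini's theorem for `f (R ω) ≤ f 1 - ∫ t in 0..1, f' t * 1_{R ω ≤ t}`, followed by an
integration by parts. -/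
lemma integral_comp_le_of_measureReal_le [IsProbabilityMeasure Q] {R : Ω → ℝ} {f f' : ℝ → ℝ}
    {A B : ℝ} (hR : Measurable R) (hR0 : ∀ ω, 0 ≤ R ω)
    (hQ : ∀ t, 0 < t → Q.real {ω | R ω ≤ t} ≤ A * t + B) (hf0 : ∀ t, 0 ≤ t → 0 ≤ f t)
    (hf : ∀ t, 0 ≤ t → HasDerivAt f (f' t) t) (hf' : ContinuousOn f' (Set.Ici 0))
    (hneg : ∀ t, 0 ≤ t → f' t ≤ 0) :
    ∫ ω, f (R ω) ∂Q ≤ f 1 + B * f 0 + A * ∫ t in (0 : ℝ)..1, f t := by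
  set ν : Measure ℝ := volume.restrict (Set.Ioc 0 1)
  set K : Ω → ℝ → ℝ := fun ω t ↦ {s | R ω ≤ s}.indicator (fun s ↦ -f' s) t
  have hcont : ContinuousOn f' (Set.Icc 0 1) := hf'.mono Set.Icc_subset_Ici_self
  have hf'int : Integrable f' ν :=
    (hcont.integrableOn_compact isCompact_Icc).mono_set Set.Ioc_subset_Icc_self
  have hK : Integrable (Function.uncurry K) (Q.prod ν) :=
    ((hf'int.neg.comp_snd Q).indicator
      (measurableSet_le (hR.comp measurable_fst) measurable_snd)).congr
      (Eventually.of_forall fun _ ↦ rfl)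
  have hKint : Integrable (fun ω ↦ ∫ t, K ω t ∂ν) Q := hK.integral_prod_left
  have hlayer (t : ℝ) (ht : t ∈ Set.Ioc (0 : ℝ) 1) : ∫ ω, K ω t ∂Q ≤ (A * t + B) * -f' t := by
    have hswap : (fun ω ↦ K ω t) = {ω | R ω ≤ t}.indicator fun _ ↦ -f' t := rfl
    rw [hswap, integral_indicator_const _ (measurableSet_le hR measurable_const), smul_eq_mul]
    exact mul_le_mul_of_nonneg_right (hQ t ht.1) (neg_nonneg.2 (hneg t ht.1.le))
  have hlayers : ∫ t, ∫ ω, K ω t ∂Q ∂ν ≤ ∫ t in (0 : ℝ)..1, (A * t + B) * -f' t := by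
    rw [intervalIntegral.integral_of_le zero_le_one]
    refine setIntegral_mono_on hK.integral_prod_right ?_ measurableSet_Ioc hlayer
    exact (((by fun_prop : ContinuousOn (fun t : ℝ ↦ A * t + B) (Set.Icc 0 1)).mul
      hcont.neg).integrableOn_compact isCompact_Icc).mono_set Set.Ioc_subset_Icc_self
  calc ∫ ω, f (R ω) ∂Q ≤ ∫ ω, (f 1 + ∫ t, K ω t ∂ν) ∂Q :=
        integral_mono_of_nonneg (Eventually.of_forall fun ω ↦ hf0 _ (hR0 ω))
          ((integrable_const _).add hKint) (Eventually.of_forall fun ω ↦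
            le_add_integral_indicator_neg_deriv (hR0 ω) hf hf' hneg)
    _ = f 1 + ∫ t, ∫ ω, K ω t ∂Q ∂ν := by
        rw [integral_add (integrable_const _) hKint, integral_integral_swap hK]
        simp
    _ ≤ f 1 + (B * f 0 - (A + B) * f 1 + A * ∫ t in (0 : ℝ)..1, f t) := by
        rw [← integral_affine_mul_neg_deriv (fun t ht ↦ hf t ht.1) hcont]
        gcongr
    _ ≤ _ := by
        have hAB : 0 ≤ A + B := by simpa using measureReal_nonneg.trans (hQ 1 one_pos)
        linarith [mul_nonneg hAB (hf0 1 zero_le_one)]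

lemma sq_add_sq_rpow_neg_le {y : ℝ} (ha : 0 < a) (hp : 0 ≤ p) (hp1 : p ≤ 1) :
    (a ^ 2 + y ^ 2) ^ (-(p / 2)) ≤ 2 * (a + |y|) ^ (-p) := by
  have hpos : 0 < a + |y| := by positivity
  have htwo : (2⁻¹ : ℝ) ≤ 2 ^ (-(p / 2)) := by
    rw [← Real.rpow_neg_one]
    exact Real.rpow_le_rpow_of_exponent_le (by norm_num) (by linarith)
  have hmul : (2 : ℝ) ^ (-(p / 2)) * (a ^ 2 + y ^ 2) ^ (-(p / 2)) ≤ (a + |y|) ^ (-p) :=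
    calc _ = (2 * (a ^ 2 + y ^ 2)) ^ (-(p / 2)) :=
          (Real.mul_rpow zero_le_two (by positivity)).symm
      _ ≤ ((a + |y|) ^ 2) ^ (-(p / 2)) :=
          Real.rpow_le_rpow_of_nonpos (by positivity)
            (by nlinarith [sq_abs y, sq_nonneg (a - |y|)]) (by linarith)
      _ = (a + |y|) ^ (-p) := by
          rw [← Real.rpow_natCast, ← Real.rpow_mul hpos.le]
          congr 1
          push_cast
          ring
  linarith [mul_le_mul_of_nonneg_right htwo
    (by positivity : 0 ≤ (a ^ 2 + y ^ 2) ^ (-(p / 2)))]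

lemma integral_add_abs_sub_rpow_neg_le [IsProbabilityMeasure Q] (hS : Measurable S) (ha : 0 < a)
    (hp : 0 ≤ p) (x : ℝ) :
    ∫ ω, (a + |x - S ω|) ^ (-p) ∂Q ≤
      1 + 2 * normalKolmogorovDist Q S * a ^ (-p) + 3 * ∫ t in (0 : ℝ)..1, (a + t) ^ (-p) := by
  have hpos (t : ℝ) (ht : 0 ≤ t) : 0 < a + t := by linarith
  have hderiv (t : ℝ) (ht : 0 ≤ t) :
      HasDerivAt (fun s ↦ (a + s) ^ (-p)) (-p * (a + t) ^ (-p - 1)) t := by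
    simpa using ((hasDerivAt_id t).const_add a).rpow_const (p := -p) (Or.inl (hpos t ht).ne')
  have hlayer := integral_comp_le_of_measureReal_le (Q := Q) (R := fun ω ↦ |x - S ω|)
    (measurable_const.sub hS).abs (fun ω ↦ abs_nonneg _)
    (fun t ht ↦ measureReal_abs_sub_le hS x ht)
    (fun t ht ↦ Real.rpow_nonneg (hpos t ht).le _) hderiv
    (continuousOn_const.mul ((by fun_prop : ContinuousOn (fun t ↦ a + t) (Set.Ici 0)).rpow_const
      fun t ht ↦ Or.inl (hpos t ht).ne'))
    (fun t ht ↦ mul_nonpos_of_nonpos_of_nonneg (by linarith) (Real.rpow_nonneg (hpos t ht).le _))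
  have hone : (a + 1) ^ (-p) ≤ 1 :=
    Real.rpow_le_one_of_one_le_of_nonpos (by linarith) (by linarith)
  rw [add_zero] at hlayer
  linarith

lemma integrable_add_abs_sub_rpow_neg [IsFiniteMeasure Q] (hS : Measurable S) (ha : 0 < a)
    (hp : 0 ≤ p) (x : ℝ) : Integrable (fun ω ↦ (a + |x - S ω|) ^ (-p)) Q := by
  refine .of_bound (C := a ^ (-p))
    ((measurable_const.add (measurable_const.sub hS).abs).pow_const _).aestronglyMeasurable
    (Eventually.of_forall fun ω ↦ ?_)
  rw [Real.norm_of_nonneg (by positivity)]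
  exact Real.rpow_le_rpow_of_nonpos ha (by linarith [abs_nonneg (x - S ω)]) (by linarith)

lemma integral_sq_add_sq_rpow_neg_le [IsProbabilityMeasure Q] (hS : Measurable S) (ha : 0 < a)
    (hp : 0 ≤ p) (hp1 : p ≤ 1) (x : ℝ) :
    ∫ ω, (a ^ 2 + (x - S ω) ^ 2) ^ (-(p / 2)) ∂Q ≤
      2 + 4 * normalKolmogorovDist Q S * a ^ (-p) + 6 * ∫ t in (0 : ℝ)..1, (a + t) ^ (-p) := by
  have hcomp : ∫ ω, (a ^ 2 + (x - S ω) ^ 2) ^ (-(p / 2)) ∂Q ≤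
      2 * ∫ ω, (a + |x - S ω|) ^ (-p) ∂Q := by
    rw [← integral_const_mul]
    exact integral_mono_of_nonneg (Eventually.of_forall fun ω ↦ by positivity)
      ((integrable_add_abs_sub_rpow_neg hS ha hp x).const_mul _)
      (Eventually.of_forall fun ω ↦ sq_add_sq_rpow_neg_le ha hp hp1)
  linarith [integral_add_abs_sub_rpow_neg_le (Q := Q) hS ha hp x]

lemma integral_sq_add_sq_rpow_neg_le_of_lt_one [IsProbabilityMeasure Q] (hS : Measurable S)
    (ha : 0 < a) (ha1 : a ≤ 1) (hp : 0 ≤ p) (hp1 : p < 1) (x : ℝ) :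
    ∫ ω, (a ^ 2 + (x - S ω) ^ 2) ^ (-(p / 2)) ∂Q ≤
      14 / (1 - p) + 4 * normalKolmogorovDist Q S * a ^ (-p) := by
  have h1p : 0 < 1 - p := by linarith
  have hint : ∫ t in (0 : ℝ)..1, (a + t) ^ (-p) ≤ 2 / (1 - p) := by
    have htwo : (a + 1) ^ (1 - p) ≤ 2 :=
      calc (a + 1) ^ (1 - p) ≤ 2 ^ (1 - p) :=
            Real.rpow_le_rpow (by linarith) (by linarith) h1p.le
        _ ≤ 2 ^ (1 : ℝ) := Real.rpow_le_rpow_of_exponent_le (by norm_num) (by linarith)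
        _ = 2 := Real.rpow_one 2
    rw [intervalIntegral.integral_comp_add_left (fun t ↦ t ^ (-p)),
      integral_rpow (Or.inl (by linarith)), neg_add_eq_sub, add_zero]
    gcongr
    linarith [Real.rpow_nonneg ha.le (1 - p)]
  have hone : 2 ≤ 2 / (1 - p) := by
    rw [le_div_iff₀ h1p]
    linarith
  have hbound := integral_sq_add_sq_rpow_neg_le (Q := Q) hS ha hp hp1.le x
  calc _ ≤ _ := hbound
    _ ≤ 2 / (1 - p) + 4 * normalKolmogorovDist Q S * a ^ (-p) + 6 * (2 / (1 - p)) := by gcongr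
    _ = 14 / (1 - p) + 4 * normalKolmogorovDist Q S * a ^ (-p) := by ring

lemma integral_sq_add_sq_rpow_neg_half_le [IsProbabilityMeasure Q] (hS : Measurable S)
    (ha : 0 < a) (ha1 : a ≤ 1) (x : ℝ) :
    ∫ ω, (a ^ 2 + (x - S ω) ^ 2) ^ (-((1 : ℝ) / 2)) ∂Q ≤
      14 + 6 * Real.log (1 / a) + 4 * normalKolmogorovDist Q S * a⁻¹ := by
  have hint : ∫ t in (0 : ℝ)..1, (a + t) ^ (-1 : ℝ) ≤ 1 + Real.log (1 / a) := by
    have hlog : Real.log (a + 1) ≤ a + 1 - 1 := Real.log_le_sub_one_of_pos (by linarith)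
    simp only [Real.rpow_neg_one]
    rw [intervalIntegral.integral_comp_add_left (fun t : ℝ ↦ t⁻¹),
      integral_inv_of_pos (by linarith) (by linarith), add_zero, Real.log_div (by linarith) ha.ne',
      Real.log_div one_ne_zero ha.ne', Real.log_one]
    linarith
  have hbound := integral_sq_add_sq_rpow_neg_le (Q := Q) hS ha zero_le_one le_rfl x
  rw [Real.rpow_neg_one] at hbound
  linarith

end Concentration

section Smoothing

variable {Ω : Type*} [MeasurableSpace Ω] {Q : Measure Ω} {S A : Ω → ℝ} {c M : ℝ}

lemma gaussianReal_real_abs_ge_le {v : ℝ} (hv : 0 < v) :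
    (gaussianReal 0 1).real {y | v ≤ |y|} ≤ 1 / v ^ 2 := by
  have hcheb := meas_ge_le_variance_div_sq (μ := gaussianReal 0 1) (X := id)
    (memLp_id_gaussianReal 2) hv
  rw [variance_id_gaussianReal] at hcheb
  simp only [id, integral_id_gaussianReal, sub_zero, NNReal.coe_one] at hcheb
  exact ENNReal.toReal_le_of_le_ofReal (by positivity) hcheb

lemma stdNormalCDF_neg_le {v : ℝ} (hv : 0 < v) : Φ (-v) ≤ 1 / v ^ 2 := by
  rw [stdNormalCDF_eq_cdf, cdf_eq_real]
  refine (measureReal_mono fun y hy ↦ ?_).trans (gaussianReal_real_abs_ge_le hv)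
  exact le_abs.2 (Or.inr (le_neg.1 (Set.mem_Iic.1 hy)))

lemma one_sub_stdNormalCDF_le {v : ℝ} (hv : 0 < v) : 1 - Φ v ≤ 1 / v ^ 2 := by
  rw [stdNormalCDF_eq_cdf, cdf_eq_real, ← probReal_compl_eq_one_sub measurableSet_Iic]
  refine (measureReal_mono fun y hy ↦ ?_).trans (gaussianReal_real_abs_ge_le hv)
  exact le_abs.2 (Or.inl (Set.notMem_Iic.1 hy).le)

lemma stdNormalCDF_neg_div_le {σ y : ℝ} (hσ : 0 < σ) (hσc : σ ≤ c) (hy : 0 < y) :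
    Φ (-y / σ) ≤ c ^ 2 / y ^ 2 := by
  refine (neg_div σ y ▸ stdNormalCDF_neg_le (div_pos hy hσ)).trans ?_
  rw [div_pow, one_div_div]
  gcongr

lemma one_sub_stdNormalCDF_div_le {σ y : ℝ} (hσ : 0 < σ) (hσc : σ ≤ c) (hy : 0 < y) :
    1 - Φ (y / σ) ≤ c ^ 2 / y ^ 2 := by
  refine (one_sub_stdNormalCDF_le (div_pos hy hσ)).trans ?_
  rw [div_pow, one_div_div]
  gcongr

lemma indicator_le_stdNormalCDF_add {σ s x : ℝ} (hσ : 0 < σ) (hσc : σ ≤ c) :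
    (Set.Iic x).indicator (fun _ ↦ 1) s ≤
      Φ ((x + 4 * c - s) / σ) + c ^ 2 / (4 * c + |x - s|) ^ 2 := by
  by_cases hs : s ≤ x
  · have htail := one_sub_stdNormalCDF_div_le hσ hσc (y := x + 4 * c - s) (by linarith)
    rw [Set.indicator_of_mem (Set.mem_Iic.2 hs), abs_of_nonneg (by linarith)]
    rw [show x + 4 * c - s = 4 * c + (x - s) by ring] at htail ⊢
    linarith
  · rw [Set.indicator_of_notMem (Set.notMem_Iic.2 (not_le.1 hs))]
    exact add_nonneg (stdNormalCDF_nonneg _) (by positivity)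

lemma stdNormalCDF_le_indicator_add {σ s x : ℝ} (hσ : 0 < σ) (hσc : σ ≤ c) :
    Φ ((x - 4 * c - s) / σ) ≤
      (Set.Iic x).indicator (fun _ ↦ 1) s + c ^ 2 / (4 * c + |x - s|) ^ 2 := by
  by_cases hs : s ≤ x
  · rw [Set.indicator_of_mem (Set.mem_Iic.2 hs)]
    linarith [stdNormalCDF_le_one ((x - 4 * c - s) / σ),
      (by positivity : 0 ≤ c ^ 2 / (4 * c + |x - s|) ^ 2)]
  · rw [Set.indicator_of_notMem (Set.notMem_Iic.2 (not_le.1 hs)), zero_add,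
      abs_of_nonpos (by linarith)]
    have htail := stdNormalCDF_neg_div_le hσ hσc (y := 4 * c + -(x - s)) (by linarith)
    rwa [show -(4 * c + -(x - s)) = x - 4 * c - s by ring] at htail

lemma rpow_neg_two (t : ℝ) : t ^ (-2 : ℝ) = (t ^ 2)⁻¹ := by
  rw [← zpow_natCast, ← zpow_neg, ← Real.rpow_intCast]
  norm_num

lemma integrable_sq_div_sq [IsFiniteMeasure Q] (hS : Measurable S) (hc : 0 < c) (x : ℝ) :
    Integrable (fun ω ↦ c ^ 2 / (4 * c + |x - S ω|) ^ 2) Q := by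
  simpa only [div_eq_mul_inv, rpow_neg_two] using
    (integrable_add_abs_sub_rpow_neg hS (mul_pos four_pos hc) zero_le_two x (Q := Q)).const_mul
      (c ^ 2)

lemma integral_sq_div_sq_le [IsProbabilityMeasure Q] (hS : Measurable S) (hc : 0 < c)
    (hc1 : c ≤ 1) (x : ℝ) :
    ∫ ω, c ^ 2 / (4 * c + |x - S ω|) ^ 2 ∂Q ≤ normalKolmogorovDist Q S / 8 + 4 * c := by
  have hint : ∫ t in (0 : ℝ)..1, (4 * c + t) ^ (-2 : ℝ) ≤ 1 / (4 * c) := by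
    rw [intervalIntegral.integral_comp_add_left (fun t : ℝ ↦ t ^ (-2 : ℝ)), integral_rpow]
    · rw [show (-2 : ℝ) + 1 = -1 by norm_num, Real.rpow_neg_one, Real.rpow_neg_one, add_zero,
        div_neg, div_one, neg_sub, one_div]
      exact sub_le_self _ (by positivity)
    · refine Or.inr ⟨by norm_num, Set.notMem_uIcc_of_lt ?_ ?_⟩ <;> positivity
  have hlayer := integral_add_abs_sub_rpow_neg_le (Q := Q) hS (mul_pos four_pos hc) zero_le_two x
  simp only [rpow_neg_two] at hint hlayer
  simp only [div_eq_mul_inv, integral_const_mul]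
  calc _ ≤ c ^ 2 * (1 + 2 * normalKolmogorovDist Q S * ((4 * c) ^ 2)⁻¹ + 3 * (1 / (4 * c))) := by
        gcongr
        linarith
    _ = c ^ 2 + normalKolmogorovDist Q S / 8 + 3 / 4 * c := by
        field_simp
        ring
    _ ≤ _ := by nlinarith

lemma normalKolmogorovDist_le_of_smoothing [IsProbabilityMeasure Q] (hS : Measurable S)
    (hA : Measurable A) (hc : 0 < c) (hc1 : c ≤ 1) (hAc : ∀ᵐ ω ∂Q, 0 < A ω ∧ A ω ≤ c)
    (hM : ∀ x, |∫ ω, Φ ((x - S ω) / A ω) ∂Q - Φ x| ≤ M) :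
    normalKolmogorovDist Q S ≤ M + normalKolmogorovDist Q S / 8 + 8 * c := by
  refine ciSup_le fun x ↦ ?_
  have herr := integrable_sq_div_sq hS hc x (Q := Q)
  have herr_le := integral_sq_div_sq_le hS hc hc1 x (Q := Q)
  have hΦ (y : ℝ) : Integrable (fun ω ↦ Φ ((y - S ω) / A ω)) Q :=
    .of_bound (continuous_stdNormalCDF.measurable.comp
      ((measurable_const.sub hS).div hA)).aestronglyMeasurable 1
      (Eventually.of_forall fun _ ↦ abs_stdNormalCDF_le_one _)
  have hmeas : MeasurableSet {ω | S ω ≤ x} := hS measurableSet_Iic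
  have hind : Integrable (fun ω ↦ (Set.Iic x).indicator (fun _ ↦ (1 : ℝ)) (S ω)) Q :=
    (integrable_const (1 : ℝ)).indicator hmeas
  have hprob : Q.real {ω | S ω ≤ x} = ∫ ω, (Set.Iic x).indicator (fun _ ↦ (1 : ℝ)) (S ω) ∂Q := by
    exact ((integral_indicator_const (1 : ℝ) hmeas).trans (by simp)).symm
  have hupper : Q.real {ω | S ω ≤ x} ≤ ∫ ω, Φ ((x + 4 * c - S ω) / A ω) ∂Q +
      ∫ ω, c ^ 2 / (4 * c + |x - S ω|) ^ 2 ∂Q := by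
    rw [hprob, ← integral_add (hΦ _) herr]
    exact integral_mono_ae hind ((hΦ _).add herr)
      (hAc.mono fun ω hω ↦ indicator_le_stdNormalCDF_add hω.1 hω.2)
  have hlower : ∫ ω, Φ ((x - 4 * c - S ω) / A ω) ∂Q ≤ Q.real {ω | S ω ≤ x} +
      ∫ ω, c ^ 2 / (4 * c + |x - S ω|) ^ 2 ∂Q := by
    rw [hprob, ← integral_add hind herr]
    exact integral_mono_ae (hΦ _) (hind.add herr)
      (hAc.mono fun ω hω ↦ stdNormalCDF_le_indicator_add hω.1 hω.2)
  have hlip_upper := abs_le.1 (abs_stdNormalCDF_sub_le (x + 4 * c) x)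
  have hlip_lower := abs_le.1 (abs_stdNormalCDF_sub_le (x - 4 * c) x)
  rw [add_sub_cancel_left, abs_of_pos (by linarith)] at hlip_upper
  rw [sub_sub_cancel_left, abs_neg, abs_of_pos (by linarith)] at hlip_lower
  rw [abs_le]
  constructor <;> linarith [abs_le.1 (hM (x + 4 * c)), abs_le.1 (hM (x - 4 * c))]

lemma abs_stdNormalCDF_div_sqrt_sub_le {v : ℝ} (hv : 0 ≤ v) (hv1 : v ≤ 1) (x : ℝ) :
    |Φ (x / √(1 + v)) - Φ x| ≤ 4096 * v := by
  have hmem : ∀ s ∈ Set.uIcc 1 (1 + v), 1 ≤ s ∧ s ≤ 1 + v := fun s hs ↦ by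
    rwa [Set.uIcc_of_le (by linarith)] at hs
  have hbound : ∀ s ∈ Set.uIcc 1 (1 + v), |normalCDFHess s x / 2| ≤ 4096 := fun s hs ↦ by
    have hs := hmem s hs
    have hpow : (s + x ^ 2) ^ (-(5 / 4 : ℝ)) ≤ 1 :=
      Real.rpow_le_one_of_one_le_of_nonpos (by nlinarith [sq_nonneg x]) (by norm_num)
    rw [abs_div, abs_two]
    linarith [abs_normalCDFHess_le (by linarith) (by linarith) x (s := s)]
  simpa [abs_of_nonneg hv] using abs_sub_le_of_abs_hasDerivAt_le
    (fun s hs ↦ hasDerivAt_normalCDF_variance x (by linarith [hmem s hs])) hbound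

end Smoothing

namespace IsLyapunovMDS

variable {Ω : Type*} {mΩ : MeasurableSpace Ω} {Q : Measure Ω} {ℱ : Filtration ℕ mΩ}
  {U w : ℕ → Ω → ℝ} {n : ℕ} {ρ γ ε δ C a J : ℝ}

lemma sqrt_residualVariance_last_le (h : IsLyapunovMDS Q ℱ U w n ρ γ ε δ C) (ha : 0 < a)
    (hδ0 : 0 ≤ δ) (hδ : δ ≤ a) :
    ∀ᵐ ω ∂Q, 0 < √(residualVariance w a δ n ω) ∧ √(residualVariance w a δ n ω) ≤ 2 * a := by
  filter_upwards [h.variance_sum] with ω hω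
  refine ⟨Real.sqrt_pos.2 (residualVariance_pos ha), Real.sqrt_le_iff.2 ⟨by positivity, ?_⟩⟩
  nlinarith [h.residualVariance_last_le (a := a) hω]

variable [IsProbabilityMeasure Q]

lemma abs_integral_smoothedIndicator_sub_stdNormalCDF_le
    (h : IsLyapunovMDS Q ℱ U w n ρ γ ε δ C) (ha : 0 < a) (hγa : γ ≤ a) (hδ0 : 0 ≤ δ)
    (hδ : δ ≤ a) (ha2 : a ≤ 1 / 2) (x : ℝ)
    (hJ : ∫ ω, (a ^ 2 + (x - partialSum U n ω) ^ 2) ^ (-(ρ / 2)) ∂Q ≤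
      J + 4 * normalKolmogorovDist Q (partialSum U n) * a ^ (-ρ))
    (hscale : 184320000 / ρ * (C + 1) * γ ^ ρ * a ^ (-ρ) ≤ 1)
    (herror : 18874368 * ε * a ^ (-(1 / 2 : ℝ)) ≤ 1) :
    |∫ ω, smoothedIndicator U w a δ x n ω ∂Q - Φ x| ≤
      5760000 / ρ * (C + 1) * γ ^ ρ * J + 589824 * 28 * ε + 4096 * a +
        normalKolmogorovDist Q (partialSum U n) / 4 := by
  have hρ := h.exponent_pos
  have hγ := h.scale_pos
  have hC := h.const_nonneg
  have hε := h.error_nonneg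
  have hD := normalKolmogorovDist_nonneg Q (partialSum U n)
  have hδa : δ ^ 2 ≤ a ^ 2 := by gcongr
  have hswap := h.abs_integral_smoothedIndicator_sub_le ha hγa (by linarith) (by nlinarith) x
  have hhalf := integral_sq_add_sq_rpow_neg_le_of_lt_one (Q := Q) (h.measurable_sum n) ha
    (by linarith) (p := 1 / 2) (by norm_num) (by norm_num) x
  rw [show -((1 : ℝ) / 2 / 2) = -(1 / 4) by norm_num] at hhalf
  have hvariance := abs_stdNormalCDF_div_sqrt_sub_le (v := a ^ 2 + δ ^ 2) (by positivity)
    (by nlinarith) x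
  rw [show 1 + (a ^ 2 + δ ^ 2) = a ^ 2 + (1 + δ ^ 2) by ring] at hvariance
  set D := normalKolmogorovDist Q (partialSum U n)
  have hfirst : 5760000 / ρ * (C + 1) * γ ^ ρ *
      ∫ ω, (a ^ 2 + (x - partialSum U n ω) ^ 2) ^ (-(ρ / 2)) ∂Q ≤
      5760000 / ρ * (C + 1) * γ ^ ρ * J + D / 8 := by
    calc _ ≤ 5760000 / ρ * (C + 1) * γ ^ ρ * (J + 4 * D * a ^ (-ρ)) := by gcongr
      _ = 5760000 / ρ * (C + 1) * γ ^ ρ * J +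
          D * (184320000 / ρ * (C + 1) * γ ^ ρ * a ^ (-ρ)) / 8 := by ring
      _ ≤ _ := by linarith [mul_le_of_le_one_right hD hscale]
  have hsecond : 589824 * ε *
      ∫ ω, (a ^ 2 + (x - partialSum U n ω) ^ 2) ^ (-(1 / 4 : ℝ)) ∂Q ≤
      589824 * 28 * ε + D / 8 := by
    calc _ ≤ 589824 * ε * (14 / (1 - 1 / 2) + 4 * D * a ^ (-(1 / 2 : ℝ))) := by gcongr
      _ = 589824 * 28 * ε + D * (18874368 * ε * a ^ (-(1 / 2 : ℝ))) / 8 := by ring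
      _ ≤ _ := by linarith [mul_le_of_le_one_right hD herror]
  have htriangle := abs_sub_le (∫ ω, smoothedIndicator U w a δ x n ω ∂Q)
    (Φ (x / √(a ^ 2 + (1 + δ ^ 2)))) (Φ x)
  nlinarith

-- Self-bounding: the smoothing error is a small multiple of the distance itself, which is absorbed.
lemma normalKolmogorovDist_le_of_integral_le (h : IsLyapunovMDS Q ℱ U w n ρ γ ε δ C)
    (ha : 0 < a) (hγa : γ ≤ a) (hδ0 : 0 ≤ δ) (hδ : δ ≤ a) (ha2 : a ≤ 1 / 2)
    (hJ : ∀ x, ∫ ω, (a ^ 2 + (x - partialSum U n ω) ^ 2) ^ (-(ρ / 2)) ∂Q ≤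
      J + 4 * normalKolmogorovDist Q (partialSum U n) * a ^ (-ρ))
    (hscale : 184320000 / ρ * (C + 1) * γ ^ ρ * a ^ (-ρ) ≤ 1)
    (herror : 18874368 * ε * a ^ (-(1 / 2 : ℝ)) ≤ 1) :
    normalKolmogorovDist Q (partialSum U n) ≤
      8 / 5 * (5760000 / ρ * (C + 1) * γ ^ ρ * J + 589824 * 28 * ε + 4112 * a) := by
  have hsmooth := normalKolmogorovDist_le_of_smoothing (h.measurable_sum n)
    (h.measurable_residualVariance a n).sqrt (mul_pos two_pos ha) (by linarith)
    (h.sqrt_residualVariance_last_le ha hδ0 hδ) fun x ↦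
      h.abs_integral_smoothedIndicator_sub_stdNormalCDF_le ha hγa hδ0 hδ ha2 x (hJ x) hscale herror
  linarith

end IsLyapunovMDS

section Constants

/-- The constant `E` in the requirement `E γ ^ ρ ≤ a ^ ρ` on the smoothing scale `a`, which makes
the Lyapunov remainder at most an eighth of the distance to normality. -/
noncomputable def lyapunovFactor (ρ C : ℝ) : ℝ := 184320000 / ρ * (C + 1)

/-- The constant in the Berry–Esseen bound for `IsLyapunovMDS`. -/
noncomputable def berryEsseenConst (ρ C : ℝ) : ℝ :=
  8 / 5 * (lyapunovFactor ρ C + 589824 * 28 +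
    4112 * (lyapunovFactor ρ C ^ (1 / ρ) + 18874368 ^ 2 + 1))

/-- The rate in the Berry–Esseen bound for `IsLyapunovMDS`: of order `γ ^ ρ` for `ρ < 1`, with an
additional logarithm at `ρ = 1`. -/
noncomputable def berryEsseenRate (ρ γ : ℝ) : ℝ :=
  γ ^ ρ * if ρ < 1 then 14 / (1 - ρ) else 20 * |Real.log γ|

variable {ρ γ ε C a c : ℝ}

lemma berryEsseenConst_nonneg (hρ : 0 ≤ ρ) (hC : 0 ≤ C) : 0 ≤ berryEsseenConst ρ C := by
  unfold berryEsseenConst lyapunovFactor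
  positivity

lemma berryEsseenRate_nonneg (hγ : 0 ≤ γ) : 0 ≤ berryEsseenRate ρ γ := by
  unfold berryEsseenRate
  split_ifs with hρ
  · have := sub_pos.2 hρ
    positivity
  · positivity

lemma one_le_lyapunovFactor (hρ : 0 < ρ) (hρ1 : ρ ≤ 1) (hC : 0 ≤ C) : 1 ≤ lyapunovFactor ρ C :=
  one_le_mul_of_one_le_of_one_le ((one_le_div hρ).2 (by linarith)) (by linarith)

lemma lyapunovFactor_mul_rpow_le_one (hρ : 0 < ρ) (hC : 0 ≤ C) (hγ : 0 < γ)
    (hγa : lyapunovFactor ρ C ^ (1 / ρ) * γ ≤ a) :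
    lyapunovFactor ρ C * γ ^ ρ * a ^ (-ρ) ≤ 1 := by
  have hE : 0 < lyapunovFactor ρ C := by unfold lyapunovFactor; positivity
  have hscale : 0 < lyapunovFactor ρ C ^ (1 / ρ) * γ := by positivity
  have hpow : lyapunovFactor ρ C * γ ^ ρ = (lyapunovFactor ρ C ^ (1 / ρ) * γ) ^ ρ := by
    rw [Real.mul_rpow (by positivity) hγ.le, ← Real.rpow_mul hE.le, one_div_mul_cancel hρ.ne',
      Real.rpow_one]
  rw [hpow, Real.rpow_neg (hscale.le.trans hγa), ← div_eq_mul_inv]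
  exact div_le_one_of_le₀ (Real.rpow_le_rpow hscale.le hγa hρ.le)
    (Real.rpow_nonneg (hscale.le.trans hγa) _)

lemma mul_rpow_neg_half_le_one (hε : 0 ≤ ε) (hε1 : ε ≤ 1) (ha : c ^ 2 * ε ≤ a) :
    c * ε * a ^ (-(1 / 2 : ℝ)) ≤ 1 := by
  have ha0 : 0 ≤ a := by nlinarith [sq_nonneg c]
  rw [Real.rpow_neg ha0, ← Real.sqrt_eq_rpow, ← div_eq_mul_inv]
  refine div_le_one_of_le₀ (Real.le_sqrt_of_sq_le ?_) (Real.sqrt_nonneg a)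
  calc (c * ε) ^ 2 = c ^ 2 * ε * ε := by ring
    _ ≤ c ^ 2 * ε * 1 := by gcongr
    _ ≤ a := by rwa [mul_one]

end Constants

namespace IsLyapunovMDS

variable {Ω : Type*} {mΩ : MeasurableSpace Ω} {Q : Measure Ω} [IsProbabilityMeasure Q]
  {ℱ : Filtration ℕ mΩ} {U w : ℕ → Ω → ℝ} {n : ℕ} {ρ γ ε δ C J : ℝ}

lemma normalKolmogorovDist_le_of_forall_integral_le (h : IsLyapunovMDS Q ℱ U w n ρ γ ε δ C)
    (hδ : 0 ≤ δ) (hγ1 : γ ≤ 1) (hJ1 : 1 ≤ J)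
    (hJ : ∀ a, γ ≤ a → a ≤ 1 → ∀ x,
      ∫ ω, (a ^ 2 + (x - partialSum U n ω) ^ 2) ^ (-(ρ / 2)) ∂Q ≤
        J + 4 * normalKolmogorovDist Q (partialSum U n) * a ^ (-ρ)) :
    normalKolmogorovDist Q (partialSum U n) ≤ berryEsseenConst ρ C * (γ ^ ρ * J + ε + δ) := by
  have hρ := h.exponent_pos
  have hγ := h.scale_pos
  have hC := h.const_nonneg
  have hε := h.error_nonneg
  have hE := one_le_lyapunovFactor hρ h.exponent_le_one hC
  set E := lyapunovFactor ρ C with hE_def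
  have hR : 1 ≤ E ^ (1 / ρ) := Real.one_le_rpow hE (by positivity)
  set R := E ^ (1 / ρ) with hR_def
  set a := R * γ + 18874368 ^ 2 * ε + δ
  have hγR : γ ≤ R * γ := le_mul_of_one_le_left hγ.le hR
  have hγa : γ ≤ a := by linarith
  have hγρ : γ ≤ γ ^ ρ * J := calc
    γ ≤ γ ^ ρ := Real.self_le_rpow_of_le_one hγ.le hγ1 h.exponent_le_one
    _ ≤ γ ^ ρ * J := le_mul_of_one_le_right (by positivity) hJ1
  set T := γ ^ ρ * J + ε + δ
  have haT : a ≤ (R + 18874368 ^ 2 + 1) * T := by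
    have hRT : R * γ ≤ R * T := by gcongr; linarith
    nlinarith
  rw [berryEsseenConst, ← hE_def, ← hR_def]
  rcases le_or_gt a (1 / 2) with ha | ha
  · refine (h.normalKolmogorovDist_le_of_integral_le (hγ.trans_le hγa) hγa hδ (by nlinarith) ha
      (hJ a hγa (by linarith)) (lyapunovFactor_mul_rpow_le_one hρ hC hγ (by linarith))
      (mul_rpow_neg_half_le_one hε h.error_le_one (by linarith))).trans ?_
    have hlyap : 5760000 / ρ * (C + 1) * γ ^ ρ * J ≤ E * T := by
      rw [mul_assoc _ (γ ^ ρ)]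
      gcongr
      · rw [hE_def, lyapunovFactor]
        gcongr
        norm_num
      · linarith
    nlinarith
  · have hET : 0 ≤ E * T := by positivity
    have hD := normalKolmogorovDist_le_one (Q := Q) (partialSum U n)
    nlinarith

theorem normalKolmogorovDist_le_of_exponent_lt_one (h : IsLyapunovMDS Q ℱ U w n ρ γ ε δ C)
    (hρ : ρ < 1) (hδ : 0 ≤ δ) (hγ : γ ≤ 1) :
    normalKolmogorovDist Q (partialSum U n) ≤
      berryEsseenConst ρ C * (γ ^ ρ * (14 / (1 - ρ)) + ε + δ) := by
  have hρ0 := h.exponent_pos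
  refine h.normalKolmogorovDist_le_of_forall_integral_le hδ hγ
    ((one_le_div (sub_pos.2 hρ)).2 (by linarith)) fun a hγa ha x ↦ ?_
  exact integral_sq_add_sq_rpow_neg_le_of_lt_one (h.measurable_sum n) (h.scale_pos.trans_le hγa)
    ha hρ0.le hρ x

theorem normalKolmogorovDist_le_of_exponent_eq_one (h : IsLyapunovMDS Q ℱ U w n 1 γ ε δ C)
    (hδ : 0 ≤ δ) (hγ : γ ≤ 1 / 4) :
    normalKolmogorovDist Q (partialSum U n) ≤
      berryEsseenConst 1 C * (γ ^ (1 : ℝ) * (20 * |Real.log γ|) + ε + δ) := by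
  have hγ0 := h.scale_pos
  have hlog : |Real.log γ| = Real.log (1 / γ) := by
    rw [one_div, Real.log_inv, abs_of_nonpos (Real.log_nonpos hγ0.le (by linarith))]
  have hlog1 : 1 ≤ |Real.log γ| := by
    rw [hlog, Real.le_log_iff_exp_le (by positivity), le_div_iff₀ hγ0]
    nlinarith [Real.exp_one_lt_d9]
  refine h.normalKolmogorovDist_le_of_forall_integral_le hδ (by linarith) (by linarith)
    fun a hγa ha x ↦ ?_
  have ha0 := hγ0.trans_le hγa
  have hloga : Real.log (1 / a) ≤ |Real.log γ| := by
    rw [hlog]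
    gcongr
  rw [Real.rpow_neg_one]
  linarith [integral_sq_add_sq_rpow_neg_half_le (Q := Q) (h.measurable_sum n) ha0 ha x]

theorem normalKolmogorovDist_le (h : IsLyapunovMDS Q ℱ U w n ρ γ ε δ C) (hδ : 0 ≤ δ)
    (hγ : γ ≤ 1 / 4) :
    normalKolmogorovDist Q (partialSum U n) ≤
      berryEsseenConst ρ C * (berryEsseenRate ρ γ + ε + δ) := by
  rw [berryEsseenRate]
  split_ifs with hρ
  · exact h.normalKolmogorovDist_le_of_exponent_lt_one hρ hδ (by linarith)
  · obtain rfl := h.exponent_le_one.antisymm (not_lt.1 hρ)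
    exact h.normalKolmogorovDist_le_of_exponent_eq_one hδ hγ

end IsLyapunovMDS

/-- The partial products `∏_{i < k} v_i` of a sequence of random variables. -/
def partialProd {Ω : Type*} (v : ℕ → Ω → ℝ) (k : ℕ) (ω : Ω) : ℝ := ∏ i ∈ Finset.range k, v i ω

/-- The conjugate measure, whose density with respect to `P` is the product `∏_{i < n} v_i`. -/
noncomputable def conjugateMeasure {Ω : Type*} {_ : MeasurableSpace Ω} (P : Measure Ω)
    (v : ℕ → Ω → ℝ) (n : ℕ) : Measure Ω :=
  P.withDensity fun ω ↦ ENNReal.ofReal (partialProd v n ω)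

/-- Multiplicative martingale increments: bounded nonnegative random variables `v_i` of conditional
mean one, equal to `1` from index `n` on, so that `∏_{i < n} v_i` is the terminal value of a
martingale. Here `v_i` is `ℱ_{i+1}`-measurable. -/
structure IsMultiplicativeMDS {Ω : Type*} {mΩ : MeasurableSpace Ω} (P : Measure Ω)
    (ℱ : Filtration ℕ mΩ) (v : ℕ → Ω → ℝ) (n : ℕ) (C : ℝ) : Prop where
  stronglyMeasurable : ∀ i, StronglyMeasurable[ℱ (i + 1)] (v i)
  nonneg : ∀ i, ∀ᵐ ω ∂P, 0 ≤ v i ω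
  le_const : ∀ i, ∀ᵐ ω ∂P, v i ω ≤ C
  condExp_eq_one : ∀ i, P[v i | ℱ i] =ᵐ[P] 1
  eq_one_of_le : ∀ i, n ≤ i → v i = 1

namespace IsMultiplicativeMDS

variable {Ω : Type*} {mΩ : MeasurableSpace Ω} {P : Measure Ω} {ℱ : Filtration ℕ mΩ}
  {v : ℕ → Ω → ℝ} {n : ℕ} {C : ℝ} {f : Ω → ℝ} {i : ℕ}

lemma stronglyMeasurable_partialProd (h : IsMultiplicativeMDS P ℱ v n C) (k : ℕ) :
    StronglyMeasurable[ℱ k] (partialProd v k) :=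
  Finset.stronglyMeasurable_fun_prod _ fun i hi ↦
    (h.stronglyMeasurable i).mono (ℱ.mono (Finset.mem_range.1 hi))

lemma measurable_partialProd (h : IsMultiplicativeMDS P ℱ v n C) (k : ℕ) :
    Measurable (partialProd v k) :=
  ((h.stronglyMeasurable_partialProd k).mono (ℱ.le k)).measurable

lemma partialProd_nonneg (h : IsMultiplicativeMDS P ℱ v n C) (k : ℕ) :
    ∀ᵐ ω ∂P, 0 ≤ partialProd v k ω := by
  filter_upwards [ae_all_iff.2 h.nonneg] with ω hω
  exact Finset.prod_nonneg fun i _ ↦ hω i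

lemma norm_prod_le (h : IsMultiplicativeMDS P ℱ v n C) (s : Finset ℕ) :
    ∀ᵐ ω ∂P, ‖∏ i ∈ s, v i ω‖ ≤ C ^ s.card := by
  filter_upwards [ae_all_iff.2 h.nonneg, ae_all_iff.2 h.le_const] with ω h0 hC
  rw [Real.norm_of_nonneg (Finset.prod_nonneg fun i _ ↦ h0 i), ← Finset.prod_const]
  exact Finset.prod_le_prod (fun i _ ↦ h0 i) fun i _ ↦ hC i

lemma integrable_partialProd_mul (h : IsMultiplicativeMDS P ℱ v n C) (hf : Integrable f P) (k : ℕ) :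
    Integrable (fun ω ↦ partialProd v k ω * f ω) P :=
  hf.bdd_mul (h.measurable_partialProd k).aestronglyMeasurable (h.norm_prod_le _)

lemma integrable_prod_mul (h : IsMultiplicativeMDS P ℱ v n C) (s : Finset ℕ) (hf : Integrable f P) :
    Integrable (fun ω ↦ (∏ i ∈ s, v i ω) * f ω) P :=
  hf.bdd_mul (Finset.stronglyMeasurable_fun_prod _ fun i _ ↦
    (h.stronglyMeasurable i).mono (ℱ.le _)).aestronglyMeasurable (h.norm_prod_le s)

lemma conjugateMeasure_eq_of_le (h : IsMultiplicativeMDS P ℱ v n C) {k : ℕ} (hk : n ≤ k) :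
    conjugateMeasure P v k = conjugateMeasure P v n := by
  have hprod : partialProd v k = partialProd v n := by
    ext ω
    refine Finset.prod_subset (Finset.range_mono hk) (fun i _ hi ↦ ?_) |>.symm
    simp [h.eq_one_of_le i (not_lt.1 fun hin ↦ hi (Finset.mem_range.2 hin))]
  rw [conjugateMeasure, hprod, conjugateMeasure]

lemma integral_conjugateMeasure (h : IsMultiplicativeMDS P ℱ v n C) (f : Ω → ℝ) (k : ℕ) :
    ∫ ω, f ω ∂(conjugateMeasure P v k) = ∫ ω, f ω * partialProd v k ω ∂P := by
  rw [conjugateMeasure, integral_withDensity_eq_integral_toReal_smul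
    (h.measurable_partialProd k).ennreal_ofReal (ae_of_all _ fun _ ↦ ENNReal.ofReal_lt_top)]
  refine integral_congr_ae ?_
  filter_upwards [h.partialProd_nonneg k] with ω hω
  rw [ENNReal.toReal_ofReal hω, smul_eq_mul, mul_comm]

lemma integrable_conjugateMeasure_iff (h : IsMultiplicativeMDS P ℱ v n C) (k : ℕ) :
    Integrable f (conjugateMeasure P v k) ↔ Integrable (fun ω ↦ partialProd v k ω * f ω) P := by
  rw [conjugateMeasure, integrable_withDensity_iff_integrable_smul'
    (h.measurable_partialProd k).ennreal_ofReal (ae_of_all _ fun _ ↦ ENNReal.ofReal_lt_top)]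
  refine integrable_congr ?_
  filter_upwards [h.partialProd_nonneg k] with ω hω
  rw [ENNReal.toReal_ofReal hω, smul_eq_mul]

lemma integrable_conjugateMeasure (h : IsMultiplicativeMDS P ℱ v n C)
    (hf : Integrable (fun ω ↦ v i ω * f ω) P) : Integrable f (conjugateMeasure P v n) := by
  have hi : i ∈ Finset.range (max n (i + 1)) := by simp
  rw [← h.conjugateMeasure_eq_of_le (le_max_left n (i + 1)), h.integrable_conjugateMeasure_iff]
  refine (h.integrable_prod_mul ((Finset.range (max n (i + 1))).erase i) hf).congr
    (ae_of_all _ fun ω ↦ ?_)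
  simp only [partialProd, ← Finset.mul_prod_erase _ _ hi]
  ring

variable [IsProbabilityMeasure P]

lemma martingale_partialProd (h : IsMultiplicativeMDS P ℱ v n C) :
    Martingale (partialProd v) ℱ P := by
  have hint (k : ℕ) : Integrable (partialProd v k) P := by
    simpa using h.integrable_partialProd_mul (integrable_const (1 : ℝ)) k
  have hv (i : ℕ) : Integrable (v i) P := by
    simpa using h.integrable_prod_mul {i} (integrable_const (1 : ℝ))
  refine martingale_nat h.stronglyMeasurable_partialProd hint fun i ↦ ?_
  have hsucc : partialProd v (i + 1) = partialProd v i * v i :=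
    funext fun ω ↦ Finset.prod_range_succ (v · ω) i
  rw [hsucc]
  filter_upwards [condExp_mul_of_stronglyMeasurable_left (h.stronglyMeasurable_partialProd i)
    (hsucc ▸ hint (i + 1)) (hv i), h.condExp_eq_one i] with ω hpull hone
  rw [hpull, Pi.mul_apply, hone, Pi.one_apply, mul_one]

lemma integral_mul_partialProd (h : IsMultiplicativeMDS P ℱ v n C) {k m : ℕ} (hkm : k ≤ m)
    (hfm : StronglyMeasurable[ℱ k] f) (hf : Integrable (fun ω ↦ f ω * partialProd v m ω) P) :
    ∫ ω, f ω * partialProd v m ω ∂P = ∫ ω, f ω * partialProd v k ω ∂P := by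
  rw [← integral_mul_condExp (ℱ.le k) hfm (h.martingale_partialProd.integrable m) hf]
  refine integral_congr_ae ?_
  filter_upwards [h.martingale_partialProd.condExp_ae_eq hkm] with ω hω
  rw [hω]

lemma isProbabilityMeasure_conjugateMeasure (h : IsMultiplicativeMDS P ℱ v n C) :
    IsProbabilityMeasure (conjugateMeasure P v n) := by
  have hmass : ∫ ω, partialProd v n ω ∂P = 1 := by
    have hint := h.martingale_partialProd.integrable n
    simpa [partialProd] using h.integral_mul_partialProd (f := fun _ ↦ 1) (Nat.zero_le n)
      stronglyMeasurable_const (by simpa using hint)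
  constructor
  rw [conjugateMeasure, withDensity_apply _ MeasurableSet.univ, Measure.restrict_univ,
    ← ofReal_integral_eq_lintegral_ofReal (h.martingale_partialProd.integrable n)
      (h.partialProd_nonneg n), hmass, ENNReal.ofReal_one]

/-- Bayes' formula for conditional expectations under the conjugate measure. -/
lemma condExp_conjugateMeasure (h : IsMultiplicativeMDS P ℱ v n C)
    (hfm : StronglyMeasurable[ℱ (i + 1)] f) (hf : Integrable (fun ω ↦ v i ω * f ω) P) :
    (conjugateMeasure P v n)[f | ℱ i] =ᵐ[conjugateMeasure P v n] P[fun ω ↦ v i ω * f ω | ℱ i] := by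
  have := h.isProbabilityMeasure_conjugateMeasure
  have hfQ := h.integrable_conjugateMeasure hf
  have hcondQ : Integrable (P[fun ω ↦ v i ω * f ω | ℱ i]) (conjugateMeasure P v n) :=
    (h.integrable_conjugateMeasure_iff n).2 (h.integrable_partialProd_mul integrable_condExp n)
  refine (ae_eq_condExp_of_forall_setIntegral_eq (ℱ.le i) hfQ (fun s _ _ ↦ hcondQ.integrableOn)
    (fun s hs _ ↦ ?_) stronglyMeasurable_condExp.aestronglyMeasurable).symm
  set k := max n (i + 1)
  have hindicator (g : Ω → ℝ) (hg : Integrable g (conjugateMeasure P v n)) :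
      Integrable (fun ω ↦ s.indicator g ω * partialProd v k ω) P := by
    simp only [mul_comm _ (partialProd v k _)]
    rw [← h.integrable_conjugateMeasure_iff, h.conjugateMeasure_eq_of_le (le_max_left _ _)]
    exact hg.indicator (ℱ.le i s hs)
  have hik : i + 1 ≤ k := le_max_right _ _
  have hone (g : Ω → ℝ) (ω : Ω) : s.indicator g ω * partialProd v i ω =
      s.indicator (partialProd v i) ω * g ω := by
    by_cases hω : ω ∈ s <;> simp [hω, mul_comm]
  rw [← integral_indicator (ℱ.le i s hs), ← integral_indicator (ℱ.le i s hs),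
    ← h.conjugateMeasure_eq_of_le (le_max_left n (i + 1)), h.integral_conjugateMeasure,
    h.integral_conjugateMeasure,
    h.integral_mul_partialProd (i.le_succ.trans hik) (stronglyMeasurable_condExp.indicator hs)
      (hindicator _ hcondQ),
    h.integral_mul_partialProd hik (hfm.indicator (ℱ.mono i.le_succ s hs)) (hindicator f hfQ)]
  simp only [hone]
  rw [integral_mul_condExp (ℱ.le i) ((h.stronglyMeasurable_partialProd i).indicator hs) hf
    ((h.integrable_partialProd_mul hf i).indicator (ℱ.le i s hs) |>.congr
      (ae_of_all _ fun ω ↦ ?_))]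
  · refine integral_congr_ae (ae_of_all _ fun ω ↦ ?_)
    by_cases hω : ω ∈ s
    · simp only [hω, Set.indicator_of_mem, partialProd, Finset.prod_range_succ]
      ring
    · simp [hω]
  · by_cases hω : ω ∈ s <;> simp [hω]

lemma condExp_conjugateMeasure_const_mul (h : IsMultiplicativeMDS P ℱ v n C) (c : ℝ)
    (hfm : StronglyMeasurable[ℱ (i + 1)] f) (hf : Integrable (fun ω ↦ v i ω * f ω) P) :
    (conjugateMeasure P v n)[fun ω ↦ c * f ω | ℱ i] =ᵐ[conjugateMeasure P v n]
      fun ω ↦ c * (P[fun ω' ↦ v i ω' * f ω' | ℱ i]) ω := by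
  filter_upwards [condExp_const_mul (μ := conjugateMeasure P v n) (m := ℱ i) c f,
    h.condExp_conjugateMeasure hfm hf] with ω hmul hbayes
  rw [hmul, hbayes]

end IsMultiplicativeMDS

section ExponentialBounds

variable {x y ρ : ℝ}

lemma abs_pow_mul_exp_le_factorial (hx : x ≤ 0) (k : ℕ) :
    |x| ^ k * Real.exp x ≤ k.factorial := by
  have h := Real.pow_div_factorial_le_exp (-x) (neg_nonneg.2 hx) k
  rwa [div_le_iff₀ (by positivity), Real.exp_neg, inv_mul_eq_div, le_div_iff₀ (Real.exp_pos x),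
    ← abs_of_nonpos hx] at h

lemma abs_exp_sub_one_sub_self_le (hx : x ≤ 1 / 2) : |Real.exp x - 1 - x| ≤ x ^ 2 := by
  rcases le_total (-1) x with h | h
  · exact Real.abs_exp_sub_one_sub_id_le (abs_le.2 ⟨h, by linarith⟩)
  · have hexp : Real.exp x ≤ 1 := Real.exp_le_one_iff.2 (by linarith)
    rw [abs_of_nonneg (by linarith [Real.add_one_le_exp x])]
    nlinarith

lemma abs_exp_sub_one_le_two_mul (hx : x ≤ 1 / 2) : |Real.exp x - 1| ≤ 2 * |x| := by
  rcases le_total x 0 with h | h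
  · rw [abs_of_nonpos (by linarith [Real.exp_le_one_iff.2 h]), abs_of_nonpos h]
    linarith [Real.add_one_le_exp x]
  · rw [abs_of_nonneg (by linarith [Real.add_one_le_exp x]), abs_of_nonneg h]
    nlinarith [(abs_le.1 (abs_exp_sub_one_sub_self_le hx)).2]

lemma exp_le_two (hx : x ≤ 1 / 2) : Real.exp x ≤ 2 := by
  have h := (abs_le.1 (abs_exp_sub_one_le_two_mul (le_refl (1 / 2 : ℝ)))).2
  norm_num at h
  linarith [Real.exp_le_exp.2 hx]

lemma abs_pow_three_le_two_mul_rpow (hρ : 0 ≤ ρ) (hρ1 : ρ ≤ 1) (hy : |y| ≤ 2) :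
    |y| ^ 3 ≤ 2 * |y| ^ (2 + ρ) := by
  have hsplit : |y| ^ 3 = |y| ^ (1 - ρ) * |y| ^ (2 + ρ) := by
    rw [← Real.rpow_add_of_nonneg (abs_nonneg y) (by linarith) (by linarith), ← Real.rpow_natCast]
    norm_num
  have hle : |y| ^ (1 - ρ) ≤ 2 :=
    calc |y| ^ (1 - ρ) ≤ 2 ^ (1 - ρ) := Real.rpow_le_rpow (abs_nonneg y) hy (by linarith)
      _ ≤ 2 ^ (1 : ℝ) := Real.rpow_le_rpow_of_exponent_le one_le_two (by linarith)
      _ = 2 := Real.rpow_one 2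
  rw [hsplit]
  gcongr

lemma sq_le_abs_rpow (hρ : 0 ≤ ρ) (hy : 2 ≤ |y|) : y ^ 2 ≤ |y| ^ (2 + ρ) := by
  rw [← sq_abs, ← Real.rpow_two]
  exact Real.rpow_le_rpow_of_exponent_le (by linarith) (by linarith)

lemma abs_rpow_le_sq_add_pow_three (hρ : 0 ≤ ρ) (hρ1 : ρ ≤ 1) (y : ℝ) :
    |y| ^ (2 + ρ) ≤ |y| ^ 2 + |y| ^ 3 := by
  rcases le_total |y| 1 with hy | hy
  · have h := Real.rpow_le_rpow_of_exponent_ge' (abs_nonneg y) hy zero_le_two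
      (by linarith : 2 ≤ 2 + ρ)
    rw [Real.rpow_two] at h
    exact h.trans (le_add_of_nonneg_right (by positivity))
  · have h := Real.rpow_le_rpow_of_exponent_le hy (by norm_num; linarith : 2 + ρ ≤ (3 : ℕ))
    rw [Real.rpow_natCast] at h
    exact h.trans (le_add_of_nonneg_left (by positivity))

lemma rpow_two_add_le_pow_three (hρ1 : ρ ≤ 1) (hx : 1 ≤ x) : x ^ (2 + ρ) ≤ x ^ 3 := by
  rw [← Real.rpow_natCast]
  exact Real.rpow_le_rpow_of_exponent_le hx (by norm_num; linarith)

lemma abs_sub_rpow_le (hρ : 0 ≤ ρ) (hρ1 : ρ ≤ 1) (x y : ℝ) :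
    |x - y| ^ (2 + ρ) ≤ 8 * (|x| ^ (2 + ρ) + |y| ^ (2 + ρ)) := by
  have hmax : |x - y| ≤ 2 * max |x| |y| := by
    linarith [abs_sub x y, le_max_left |x| |y|, le_max_right |x| |y|]
  have hsum : max |x| |y| ^ (2 + ρ) ≤ |x| ^ (2 + ρ) + |y| ^ (2 + ρ) := by
    rcases max_choice |x| |y| with h | h <;> rw [h]
    · exact le_add_of_nonneg_right (by positivity)
    · exact le_add_of_nonneg_left (by positivity)
  calc |x - y| ^ (2 + ρ) ≤ (2 * max |x| |y|) ^ (2 + ρ) := by gcongr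
    _ = 2 ^ (2 + ρ) * max |x| |y| ^ (2 + ρ) := Real.mul_rpow zero_le_two (by positivity)
    _ ≤ 2 ^ 3 * (|x| ^ (2 + ρ) + |y| ^ (2 + ρ)) := by
        gcongr
        exact rpow_two_add_le_pow_three hρ1 one_le_two
    _ = 8 * (|x| ^ (2 + ρ) + |y| ^ (2 + ρ)) := by norm_num

end ExponentialBounds

/-- The exponent `y - y² / 2` of the self-normalised exponential change of measure, evaluated at
`y = λ ξ_i`. -/
noncomputable def tiltExponent (y : ℝ) : ℝ := y - y ^ 2 / 2

section TiltExponent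

variable {y ρ : ℝ}

lemma continuous_tiltExponent : Continuous tiltExponent := by
  unfold tiltExponent
  fun_prop

@[simp]
lemma tiltExponent_zero : tiltExponent 0 = 0 := by simp [tiltExponent]

lemma tiltExponent_eq_mul (y : ℝ) : tiltExponent y = (1 - y / 2) * y := by
  rw [tiltExponent]
  ring

lemma tiltExponent_le_half (y : ℝ) : tiltExponent y ≤ 1 / 2 := by
  rw [tiltExponent]
  nlinarith [sq_nonneg (y - 1)]

lemma abs_tiltExponent_le (hy : |y| ≤ 2) : |tiltExponent y| ≤ 2 * |y| := by
  rw [tiltExponent_eq_mul, abs_mul]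
  gcongr
  obtain ⟨hl, hr⟩ := abs_le.1 hy
  exact abs_le.2 ⟨by linarith, by linarith⟩

lemma tiltExponent_nonpos (hy : 2 ≤ |y|) : tiltExponent y ≤ 0 := by
  rw [tiltExponent_eq_mul]
  rcases le_abs.1 hy with h | h <;> nlinarith

lemma exp_tiltExponent_le_two (y : ℝ) : Real.exp (tiltExponent y) ≤ 2 :=
  exp_le_two (tiltExponent_le_half y)

lemma abs_exp_tiltExponent_sub_one_le (hy : |y| ≤ 2) :
    |Real.exp (tiltExponent y) - 1| ≤ 4 * |y| := by
  linarith [abs_exp_sub_one_le_two_mul (tiltExponent_le_half y), abs_tiltExponent_le hy]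

lemma four_le_sq (hy : 2 ≤ |y|) : 4 ≤ y ^ 2 := by
  rw [← sq_abs]
  nlinarith

lemma two_mul_abs_le_sq (hy : 2 ≤ |y|) : 2 * |y| ≤ y ^ 2 := by
  rw [← sq_abs]
  nlinarith

lemma abs_exp_tiltExponent_sub_le (y : ℝ) :
    |Real.exp (tiltExponent y) - (1 + y)| ≤ 5 * y ^ 2 := by
  rcases le_total |y| 2 with hy | hy
  · have hexp := abs_le.1 (abs_exp_sub_one_sub_self_le (tiltExponent_le_half y))
    have hsq : tiltExponent y ^ 2 ≤ 4 * y ^ 2 := by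
      rw [← sq_abs, ← sq_abs y, show 4 * |y| ^ 2 = (2 * |y|) ^ 2 by ring]
      exact pow_le_pow_left₀ (abs_nonneg _) (abs_tiltExponent_le hy) 2
    have hdef : tiltExponent y = y - y ^ 2 / 2 := rfl
    exact abs_le.2 ⟨by nlinarith, by nlinarith⟩
  · have habs := abs_le.1 (le_refl |y|)
    exact abs_le.2
      ⟨by linarith [Real.exp_pos (tiltExponent y), two_mul_abs_le_sq hy, four_le_sq hy],
        by linarith [exp_tiltExponent_le_two y, two_mul_abs_le_sq hy, four_le_sq hy]⟩

lemma abs_tiltExponent_mul_exp_sub_le (y : ℝ) :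
    |tiltExponent y * Real.exp (tiltExponent y) - y| ≤ 21 * y ^ 2 := by
  rcases le_total |y| 2 with hy | hy
  · have hprod : |tiltExponent y * (Real.exp (tiltExponent y) - 1)| ≤ 8 * y ^ 2 := by
      rw [abs_mul, ← sq_abs y]
      calc |tiltExponent y| * |Real.exp (tiltExponent y) - 1| ≤ (2 * |y|) * (4 * |y|) :=
            mul_le_mul (abs_tiltExponent_le hy) (abs_exp_tiltExponent_sub_one_le hy)
              (abs_nonneg _) (by positivity)
        _ = 8 * |y| ^ 2 := by ring
    have hdef : tiltExponent y = y - y ^ 2 / 2 := rfl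
    obtain ⟨hl, hr⟩ := abs_le.1 hprod
    exact abs_le.2 ⟨by linarith [sq_nonneg y], by linarith [sq_nonneg y]⟩
  · have hle : |tiltExponent y * Real.exp (tiltExponent y)| ≤ 1 := by
      simpa [abs_mul] using abs_pow_mul_exp_le_factorial (tiltExponent_nonpos hy) 1
    linarith [abs_sub (tiltExponent y * Real.exp (tiltExponent y)) y, two_mul_abs_le_sq hy,
      four_le_sq hy]

lemma abs_tiltExponent_sq_mul_exp_sub_le (hρ : 0 ≤ ρ) (hρ1 : ρ ≤ 1) (y : ℝ) :
    |tiltExponent y ^ 2 * Real.exp (tiltExponent y) - y ^ 2| ≤ 84 * |y| ^ (2 + ρ) := by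
  have hpow : 0 ≤ |y| ^ (2 + ρ) := by positivity
  rcases le_total |y| 2 with hy | hy
  · have hexp : |tiltExponent y ^ 2 * (Real.exp (tiltExponent y) - 1)| ≤ 16 * |y| ^ 3 := by
      rw [abs_mul, abs_pow]
      calc |tiltExponent y| ^ 2 * |Real.exp (tiltExponent y) - 1| ≤ (2 * |y|) ^ 2 * (4 * |y|) := by
            gcongr
            exacts [abs_tiltExponent_le hy, abs_exp_tiltExponent_sub_one_le hy]
        _ = 16 * |y| ^ 3 := by ring
    have hsq : |tiltExponent y ^ 2 - y ^ 2| ≤ 4 * |y| ^ 3 := by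
      have hfactor : tiltExponent y ^ 2 - y ^ 2 = -(y ^ 2 / 2) * (tiltExponent y + y) := by
        rw [tiltExponent]
        ring
      rw [hfactor, abs_mul, abs_neg, abs_of_nonneg (by positivity), ← sq_abs]
      calc |y| ^ 2 / 2 * |tiltExponent y + y| ≤ |y| ^ 2 / 2 * (2 * |y| + |y|) := by
            gcongr
            linarith [abs_add_le (tiltExponent y) y, abs_tiltExponent_le hy]
        _ ≤ 4 * |y| ^ 3 := by nlinarith [pow_nonneg (abs_nonneg y) 3]
    calc |tiltExponent y ^ 2 * Real.exp (tiltExponent y) - y ^ 2|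
        = |tiltExponent y ^ 2 * (Real.exp (tiltExponent y) - 1) +
            (tiltExponent y ^ 2 - y ^ 2)| := by ring_nf
      _ ≤ 16 * |y| ^ 3 + 4 * |y| ^ 3 := (abs_add_le _ _).trans (add_le_add hexp hsq)
      _ ≤ 84 * |y| ^ (2 + ρ) := by linarith [abs_pow_three_le_two_mul_rpow hρ hρ1 hy]
  · have hle : tiltExponent y ^ 2 * Real.exp (tiltExponent y) ≤ 2 := by
      simpa using abs_pow_mul_exp_le_factorial (tiltExponent_nonpos hy) 2
    have h0 : 0 ≤ tiltExponent y ^ 2 * Real.exp (tiltExponent y) := by positivity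
    have hsq := sq_le_abs_rpow hρ hy
    have hfour := four_le_sq hy
    exact abs_le.2 ⟨by linarith, by linarith⟩

lemma abs_tiltExponent_rpow_mul_exp_le (hρ : 0 ≤ ρ) (hρ1 : ρ ≤ 1) (y : ℝ) :
    |tiltExponent y| ^ (2 + ρ) * Real.exp (tiltExponent y) ≤ 16 * |y| ^ (2 + ρ) := by
  rcases le_total |y| 2 with hy | hy
  · calc |tiltExponent y| ^ (2 + ρ) * Real.exp (tiltExponent y)
        ≤ (2 * |y|) ^ (2 + ρ) * 2 := by
          gcongr
          exacts [abs_tiltExponent_le hy, exp_tiltExponent_le_two y]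
      _ = 2 ^ (2 + ρ) * |y| ^ (2 + ρ) * 2 := by rw [Real.mul_rpow zero_le_two (abs_nonneg y)]
      _ ≤ 2 ^ 3 * |y| ^ (2 + ρ) * 2 := by
          gcongr
          exact rpow_two_add_le_pow_three hρ1 one_le_two
      _ = 16 * |y| ^ (2 + ρ) := by ring
  · have htwo := abs_pow_mul_exp_le_factorial (tiltExponent_nonpos hy) 2
    have hthree := abs_pow_mul_exp_le_factorial (tiltExponent_nonpos hy) 3
    norm_num [Nat.factorial] at htwo hthree
    calc |tiltExponent y| ^ (2 + ρ) * Real.exp (tiltExponent y)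
        ≤ (|tiltExponent y| ^ 2 + |tiltExponent y| ^ 3) * Real.exp (tiltExponent y) := by
          gcongr
          exact abs_rpow_le_sq_add_pow_three hρ hρ1 _
      _ ≤ 16 * |y| ^ (2 + ρ) := by
          rw [sq_abs]
          linarith [sq_le_abs_rpow hρ hy, four_le_sq hy]

end TiltExponent

lemma abs_div_le_two_mul {M : ℝ} (hM : 1 / 2 ≤ M) (x : ℝ) : |x / M| ≤ 2 * |x| := by
  have hpos : 0 < M := one_half_pos.trans_le hM
  rw [abs_div, abs_of_pos hpos, div_le_iff₀ hpos]
  nlinarith [mul_le_mul_of_nonneg_left hM (abs_nonneg x)]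

section ConditionalExpectation

variable {Ω : Type*} {m mΩ : MeasurableSpace Ω} {μ : Measure Ω} {f g h : Ω → ℝ} {c ρ t : ℝ}

lemma integrable_of_abs_sub_le (hf : AEStronglyMeasurable f μ) (hg : Integrable g μ)
    (hh : Integrable h μ) (hle : ∀ ω, |f ω - g ω| ≤ h ω) : Integrable f μ := by
  simpa using (hh.mono' (hf.sub hg.1) (ae_of_all _ hle)).add hg

lemma abs_condExp_sub_le_const_mul (hf : Integrable f μ) (hg : Integrable g μ)
    (hh : Integrable h μ) (hle : ∀ ω, |f ω - g ω| ≤ c * h ω) :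
    ∀ᵐ ω ∂μ, |(μ[f | m]) ω - (μ[g | m]) ω| ≤ c * (μ[h | m]) ω := by
  have hupper := condExp_mono (m := m) (hf.sub hg) (hh.const_mul c)
    (ae_of_all _ fun ω ↦ (abs_le.1 (hle ω)).2)
  have hlower := condExp_mono (m := m) (hg.sub hf) (hh.const_mul c)
    (ae_of_all _ fun ω ↦ by simpa using (abs_le.1 ((abs_sub_comm _ _).trans_le (hle ω))).2)
  filter_upwards [hupper, hlower, condExp_sub hf hg m, condExp_sub hg hf m,
    condExp_const_mul (μ := μ) (m := m) c h] with ω hu hl hfg hgf hc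
  rw [hfg, hc, Pi.sub_apply] at hu
  rw [hgf, hc, Pi.sub_apply] at hl
  exact abs_sub_le_iff.2 ⟨hu, hl⟩

-- The tangent line of `u ↦ u ^ (1 + ρ / 2)` at `t²`, evaluated at `y²`.
lemma rpow_mul_sub_le_abs_rpow (hρ : 0 ≤ ρ) (ht : 0 < t) (y : ℝ) :
    t ^ ρ * ((1 + ρ / 2) * y ^ 2 - ρ / 2 * t ^ 2) ≤ |y| ^ (2 + ρ) := by
  have hbernoulli := one_add_mul_self_le_rpow_one_add (s := y ^ 2 / t ^ 2 - 1) (p := 1 + ρ / 2)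
    (by linarith [show 0 ≤ y ^ 2 / t ^ 2 by positivity]) (by linarith)
  have hpow : (1 + (y ^ 2 / t ^ 2 - 1)) ^ (1 + ρ / 2) = |y| ^ (2 + ρ) / t ^ (2 + ρ) := by
    rw [add_sub_cancel, ← sq_abs, ← div_pow, ← Real.div_rpow (abs_nonneg _) ht.le,
      ← Real.rpow_natCast, ← Real.rpow_mul (by positivity)]
    congr 1
    push_cast
    ring
  rw [hpow, le_div_iff₀ (by positivity), Real.rpow_add ht, Real.rpow_two] at hbernoulli
  refine le_trans (le_of_eq ?_) hbernoulli
  field_simp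
  ring

lemma condExp_sq_le_sq_of_condExp_rpow_le [IsFiniteMeasure μ] (hm : m ≤ mΩ) (hρ : 0 < ρ)
    (ht : 0 < t) (hsq : Integrable (fun ω ↦ f ω ^ 2) μ)
    (hpow : Integrable (fun ω ↦ |f ω| ^ (2 + ρ)) μ)
    (hle : ∀ᵐ ω ∂μ, (μ[fun ω' ↦ |f ω'| ^ (2 + ρ) | m]) ω ≤ t ^ ρ * (μ[fun ω' ↦ f ω' ^ 2 | m]) ω) :
    ∀ᵐ ω ∂μ, (μ[fun ω' ↦ f ω' ^ 2 | m]) ω ≤ t ^ 2 := by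
  set a := t ^ ρ * (1 + ρ / 2)
  set b := t ^ ρ * (ρ / 2) * t ^ 2
  have hsub := condExp_mono (m := m) ((hsq.const_mul a).sub (integrable_const b)) hpow
    (ae_of_all _ fun ω ↦ le_trans (le_of_eq (by simp only [Pi.sub_apply, a, b]; ring))
      (rpow_mul_sub_le_abs_rpow hρ.le ht (f ω)))
  filter_upwards [hle, hsub, condExp_sub (hsq.const_mul a) (integrable_const b) m,
    condExp_const_mul (μ := μ) (m := m) a (fun ω ↦ f ω ^ 2)] with ω hle hsub hdiff hmul
  rw [hdiff, Pi.sub_apply, hmul, condExp_const hm] at hsub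
  refine le_of_mul_le_mul_left (?_ : t ^ ρ * (ρ / 2) * _ ≤ t ^ ρ * (ρ / 2) * t ^ 2) (by positivity)
  simp only [a, b] at hsub
  linarith

end ConditionalExpectation

/-- A martingale increment `y` over the σ-algebra `m` with conditional variance `W ≤ 1`, whose
conditional moment of order `2 + ρ` is at most `T * W`. -/
structure IsLyapunovIncrement {Ω : Type*} {mΩ : MeasurableSpace Ω} (P : Measure Ω)
    (m : MeasurableSpace Ω) (y W : Ω → ℝ) (ρ T : ℝ) : Prop where
  le : m ≤ mΩ
  measurable : Measurable[mΩ] y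
  integrable_sq : Integrable (fun ω ↦ y ω ^ 2) P
  integrable_rpow : Integrable (fun ω ↦ |y ω| ^ (2 + ρ)) P
  condExp_eq_zero : P[y | m] =ᵐ[P] 0
  condExp_sq : P[fun ω ↦ y ω ^ 2 | m] =ᵐ[P] W
  condExp_rpow : ∀ᵐ ω ∂P, (P[fun ω' ↦ |y ω'| ^ (2 + ρ) | m]) ω ≤ T * W ω
  variance_nonneg : ∀ ω, 0 ≤ W ω
  variance_le : ∀ ω, W ω ≤ T
  variance_le_one : ∀ ω, W ω ≤ 1
  exponent_nonneg : 0 ≤ ρ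
  exponent_le_one : ρ ≤ 1

section TiltedIncrement

variable {Ω : Type*}

/-- The conditional mean `E[e^ζ | m]` of the exponential weight, where `ζ = y - y² / 2`. -/
noncomputable def tiltMean (m : MeasurableSpace Ω) {_ : MeasurableSpace Ω} (P : Measure Ω)
    (y : Ω → ℝ) : Ω → ℝ :=
  P[fun ω ↦ Real.exp (tiltExponent (y ω)) | m]

/-- The normalized exponential weight `e^ζ / E[e^ζ | m]`, where `ζ = y - y² / 2`. -/
noncomputable def tiltDensity (m : MeasurableSpace Ω) {_ : MeasurableSpace Ω} (P : Measure Ω)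
    (y : Ω → ℝ) (ω : Ω) : ℝ :=
  Real.exp (tiltExponent (y ω)) / tiltMean m P y ω

/-- The drift `E[ζ e^ζ | m] / E[e^ζ | m]`, which is the conditional mean of `ζ = y - y² / 2`
under the tilted measure. -/
noncomputable def tiltDrift (m : MeasurableSpace Ω) {_ : MeasurableSpace Ω} (P : Measure Ω)
    (y : Ω → ℝ) (ω : Ω) : ℝ :=
  (P[fun ω' ↦ tiltExponent (y ω') * Real.exp (tiltExponent (y ω')) | m]) ω / tiltMean m P y ω

/-- The increment `ζ = y - y² / 2` centred at its drift under the tilted measure. -/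
noncomputable def tiltIncrement (m : MeasurableSpace Ω) {_ : MeasurableSpace Ω} (P : Measure Ω)
    (y : Ω → ℝ) (ω : Ω) : ℝ :=
  tiltExponent (y ω) - tiltDrift m P y ω

variable {m mΩ : MeasurableSpace Ω} {P : Measure Ω} {y f g : Ω → ℝ}

lemma stronglyMeasurable_tiltDrift : StronglyMeasurable[m] (tiltDrift m P y) :=
  (stronglyMeasurable_condExp.measurable.div
    stronglyMeasurable_condExp.measurable).stronglyMeasurable

lemma measurable_tiltDensity {m' : MeasurableSpace Ω} (hm : m ≤ m') (hy : Measurable[m'] y) :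
    Measurable[m'] (tiltDensity m P y) :=
  (Real.measurable_exp.comp (continuous_tiltExponent.measurable.comp hy)).div
    ((stronglyMeasurable_condExp.mono hm).measurable)

lemma measurable_tiltIncrement {m' : MeasurableSpace Ω} (hm : m ≤ m') (hy : Measurable[m'] y) :
    Measurable[m'] (tiltIncrement m P y) :=
  (continuous_tiltExponent.measurable.comp hy).sub
    ((stronglyMeasurable_tiltDrift.mono hm).measurable)

lemma stronglyMeasurable_abs_tiltDrift_rpow {ρ : ℝ} (hρ : 0 ≤ ρ) :
    StronglyMeasurable[m] fun ω ↦ |tiltDrift m P y ω| ^ (2 + ρ) :=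
  (continuous_abs.rpow_const fun _ ↦ Or.inr (by linarith)).comp_stronglyMeasurable
    stronglyMeasurable_tiltDrift

lemma tiltDensity_mul_eq (ω : Ω) :
    tiltDensity m P y ω * (g ω * f ω) =
      g ω / tiltMean m P y ω * (f ω * Real.exp (tiltExponent (y ω))) := by
  rw [tiltDensity]
  ring

lemma stronglyMeasurable_div_tiltMean (hg : StronglyMeasurable[m] g) :
    StronglyMeasurable[m] fun ω ↦ g ω / tiltMean m P y ω :=
  (hg.measurable.div stronglyMeasurable_condExp.measurable).stronglyMeasurable

end TiltedIncrement

namespace IsLyapunovIncrement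

variable {Ω : Type*} {m mΩ : MeasurableSpace Ω} {P : Measure Ω} {y W : Ω → ℝ} {ρ T : ℝ}

section Moments

lemma measurable_tiltExponent (h : IsLyapunovIncrement P m y W ρ T) :
    Measurable fun ω ↦ tiltExponent (y ω) :=
  continuous_tiltExponent.measurable.comp h.measurable

lemma measurable_exp_tiltExponent (h : IsLyapunovIncrement P m y W ρ T) :
    Measurable fun ω ↦ Real.exp (tiltExponent (y ω)) :=
  h.measurable_tiltExponent.exp

lemma integrable_tiltExponent_sq_mul_exp (h : IsLyapunovIncrement P m y W ρ T) :
    Integrable (fun ω ↦ tiltExponent (y ω) ^ 2 * Real.exp (tiltExponent (y ω))) P :=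
  integrable_of_abs_sub_le
    ((h.measurable_tiltExponent.pow_const 2).mul h.measurable_exp_tiltExponent).aestronglyMeasurable
    h.integrable_sq (h.integrable_rpow.const_mul 84) fun ω ↦
      abs_tiltExponent_sq_mul_exp_sub_le h.exponent_nonneg h.exponent_le_one (y ω)

lemma integrable_abs_tiltExponent_rpow_mul_exp (h : IsLyapunovIncrement P m y W ρ T) :
    Integrable (fun ω ↦ |tiltExponent (y ω)| ^ (2 + ρ) * Real.exp (tiltExponent (y ω))) P := by
  refine (h.integrable_rpow.const_mul 16).mono' ((h.measurable_tiltExponent.abs.pow_const _).mul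
    h.measurable_exp_tiltExponent).aestronglyMeasurable (ae_of_all _ fun ω ↦ ?_)
  rw [Real.norm_of_nonneg (by positivity)]
  exact abs_tiltExponent_rpow_mul_exp_le h.exponent_nonneg h.exponent_le_one _

lemma abs_condExp_tiltExponent_sq_mul_exp_sub_le (h : IsLyapunovIncrement P m y W ρ T) :
    ∀ᵐ ω ∂P,
      |(P[fun ω' ↦ tiltExponent (y ω') ^ 2 * Real.exp (tiltExponent (y ω')) | m]) ω - W ω| ≤
        84 * (T * W ω) := by
  filter_upwards [abs_condExp_sub_le_const_mul (m := m) h.integrable_tiltExponent_sq_mul_exp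
    h.integrable_sq h.integrable_rpow fun ω ↦
      abs_tiltExponent_sq_mul_exp_sub_le h.exponent_nonneg h.exponent_le_one (y ω),
    h.condExp_sq, h.condExp_rpow] with ω hle hsq hpow
  rw [hsq] at hle
  linarith

lemma condExp_abs_tiltExponent_rpow_mul_exp_le (h : IsLyapunovIncrement P m y W ρ T) :
    ∀ᵐ ω ∂P,
      (P[fun ω' ↦ |tiltExponent (y ω')| ^ (2 + ρ) * Real.exp (tiltExponent (y ω')) | m]) ω ≤
        16 * (T * W ω) := by
  filter_upwards [condExp_mono (m := m) h.integrable_abs_tiltExponent_rpow_mul_exp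
    (h.integrable_rpow.const_mul 16) (ae_of_all _ fun ω ↦
      abs_tiltExponent_rpow_mul_exp_le h.exponent_nonneg h.exponent_le_one _),
    condExp_const_mul (μ := P) (m := m) 16 (fun ω ↦ |y ω| ^ (2 + ρ)), h.condExp_rpow]
    with ω hle hmul hpow
  rw [hmul] at hle
  linarith

variable [IsFiniteMeasure P]

lemma integrable (h : IsLyapunovIncrement P m y W ρ T) : Integrable y P :=
  ((memLp_two_iff_integrable_sq h.measurable.aestronglyMeasurable).2 h.integrable_sq).integrable
    one_le_two

lemma integrable_exp_tiltExponent (h : IsLyapunovIncrement P m y W ρ T) :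
    Integrable (fun ω ↦ Real.exp (tiltExponent (y ω))) P :=
  .of_bound h.measurable_exp_tiltExponent.aestronglyMeasurable 2 (ae_of_all _ fun ω ↦ by
    rw [Real.norm_of_nonneg (Real.exp_pos _).le]
    exact exp_tiltExponent_le_two _)

lemma integrable_tiltExponent_mul_exp (h : IsLyapunovIncrement P m y W ρ T) :
    Integrable (fun ω ↦ tiltExponent (y ω) * Real.exp (tiltExponent (y ω))) P :=
  integrable_of_abs_sub_le
    (h.measurable_tiltExponent.mul h.measurable_exp_tiltExponent).aestronglyMeasurable
    h.integrable (h.integrable_sq.const_mul 21) fun ω ↦ abs_tiltExponent_mul_exp_sub_le (y ω)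

lemma condExp_one_add (h : IsLyapunovIncrement P m y W ρ T) :
    P[fun ω ↦ 1 + y ω | m] =ᵐ[P] 1 := by
  filter_upwards [condExp_add (integrable_const (1 : ℝ)) h.integrable m, h.condExp_eq_zero]
    with ω hadd hzero
  rw [show (fun ω ↦ 1 + y ω) = (fun _ ↦ (1 : ℝ)) + y from rfl, hadd, Pi.add_apply, hzero,
    condExp_const h.le, Pi.zero_apply, add_zero, Pi.one_apply]

lemma abs_tiltMean_sub_one_le (h : IsLyapunovIncrement P m y W ρ T) :
    ∀ᵐ ω ∂P, |tiltMean m P y ω - 1| ≤ 5 * W ω := by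
  filter_upwards [abs_condExp_sub_le_const_mul (m := m) h.integrable_exp_tiltExponent
    ((integrable_const 1).add h.integrable) h.integrable_sq fun ω ↦
      abs_exp_tiltExponent_sub_le (y ω), h.condExp_one_add, h.condExp_sq] with ω hle hone hsq
  rwa [hsq, show ((fun _ ↦ (1 : ℝ)) + y) = fun ω ↦ 1 + y ω from rfl, hone] at hle

lemma half_le_tiltMean (h : IsLyapunovIncrement P m y W ρ T) :
    ∀ᵐ ω ∂P, 1 / 2 ≤ tiltMean m P y ω := by
  have hlin : Integrable (fun ω ↦ 1 + y ω) P := (integrable_const _).add h.integrable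
  have hsq := h.integrable_sq.const_mul (1 / 2)
  have hmono := condExp_mono (m := m) (hlin.sub hsq) h.integrable_exp_tiltExponent
    (ae_of_all _ fun ω ↦ le_trans (le_of_eq (by simp only [Pi.sub_apply, tiltExponent]; ring))
      (Real.add_one_le_exp (tiltExponent (y ω))))
  filter_upwards [hmono, condExp_sub hlin hsq m, h.condExp_one_add, h.condExp_sq,
    condExp_const_mul (μ := P) (m := m) (1 / 2) (fun ω ↦ y ω ^ 2)] with ω hmono hsub hone hW hmul
  rw [hsub, Pi.sub_apply, hone, hmul, hW, Pi.one_apply] at hmono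
  exact le_trans (by linarith [h.variance_le_one ω]) hmono

lemma tiltMean_pos (h : IsLyapunovIncrement P m y W ρ T) : ∀ᵐ ω ∂P, 0 < tiltMean m P y ω :=
  h.half_le_tiltMean.mono fun _ ↦ one_half_pos.trans_le

lemma abs_tiltDrift_le (h : IsLyapunovIncrement P m y W ρ T) :
    ∀ᵐ ω ∂P, |tiltDrift m P y ω| ≤ 42 * W ω := by
  filter_upwards [abs_condExp_sub_le_const_mul (m := m) h.integrable_tiltExponent_mul_exp
    h.integrable h.integrable_sq fun ω ↦ abs_tiltExponent_mul_exp_sub_le (y ω),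
    h.condExp_eq_zero, h.condExp_sq, h.half_le_tiltMean] with ω hle hzero hsq hhalf
  rw [hzero, hsq, Pi.zero_apply, sub_zero] at hle
  exact (abs_div_le_two_mul hhalf _).trans (by linarith)

lemma abs_tiltDrift_le_const (h : IsLyapunovIncrement P m y W ρ T) :
    ∀ᵐ ω ∂P, |tiltDrift m P y ω| ≤ 42 := by
  filter_upwards [h.abs_tiltDrift_le] with ω hω
  linarith [h.variance_le_one ω]

end Moments

end IsLyapunovIncrement

lemma abs_div_sub_sq_sub_le {Z M b W T : ℝ} (hZ : |Z - W| ≤ 84 * (T * W)) (hM : |M - 1| ≤ 5 * W)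
    (hM2 : 1 / 2 ≤ M) (hb : |b| ≤ 42 * W) (hW : 0 ≤ W) (hWT : W ≤ T) :
    |Z / M - b ^ 2 - W| ≤ 2000 * (T * W) := by
  have hM0 : M ≠ 0 := (one_half_pos.trans_le hM2).ne'
  have hWW : W * W ≤ T * W := mul_le_mul_of_nonneg_right hWT hW
  have hsq : b ^ 2 ≤ 1764 * (T * W) := by
    rw [← sq_abs]
    nlinarith [pow_le_pow_left₀ (abs_nonneg b) hb 2]
  have hdrift : |(M - 1) * W / M| ≤ 10 * (T * W) := by
    refine (abs_div_le_two_mul hM2 _).trans ?_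
    rw [abs_mul, abs_of_nonneg hW]
    nlinarith [mul_le_mul_of_nonneg_right hM hW]
  have hmain := abs_le.1 ((abs_div_le_two_mul hM2 (Z - W)).trans (by linarith : _ ≤ 168 * (T * W)))
  have hsplit : Z / M - b ^ 2 - W = (Z - W) / M - (M - 1) * W / M - b ^ 2 := by
    field_simp [hM0]
    ring
  have := abs_le.1 hdrift
  have hTW : 0 ≤ T * W := mul_nonneg (hW.trans hWT) hW
  rw [hsplit]
  exact abs_le.2 ⟨by linarith [sq_nonneg b], by linarith [sq_nonneg b, hTW]⟩

lemma abs_rpow_two_add_le {b W T ρ : ℝ} (hρ : 0 ≤ ρ) (hρ1 : ρ ≤ 1) (hb : |b| ≤ 42 * W)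
    (hW : 0 ≤ W) (hW1 : W ≤ 1) (hWT : W ≤ T) : |b| ^ (2 + ρ) ≤ 42 ^ 3 * (T * W) :=
  calc |b| ^ (2 + ρ) ≤ (42 * W) ^ (2 + ρ) := Real.rpow_le_rpow (abs_nonneg _) hb (by linarith)
    _ = 42 ^ (2 + ρ) * W ^ (2 + ρ) := Real.mul_rpow (by norm_num) hW
    _ ≤ 42 ^ 3 * W ^ (2 : ℝ) :=
        mul_le_mul (rpow_two_add_le_pow_three hρ1 (by norm_num))
          (Real.rpow_le_rpow_of_exponent_ge' hW hW1 two_pos.le (by linarith)) (by positivity)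
          (by norm_num)
    _ ≤ 42 ^ 3 * (T * W) := by
        rw [Real.rpow_two, sq]
        gcongr

namespace IsLyapunovIncrement

variable {Ω : Type*} {m mΩ : MeasurableSpace Ω} {P : Measure Ω} [IsFiniteMeasure P]
  {y W f g : Ω → ℝ} {ρ T C : ℝ}

section TiltDensity

lemma tiltDensity_nonneg (h : IsLyapunovIncrement P m y W ρ T) :
    ∀ᵐ ω ∂P, 0 ≤ tiltDensity m P y ω := by
  filter_upwards [h.tiltMean_pos] with ω hω
  exact div_nonneg (Real.exp_pos _).le hω.le

lemma tiltDensity_le_four (h : IsLyapunovIncrement P m y W ρ T) :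
    ∀ᵐ ω ∂P, tiltDensity m P y ω ≤ 4 := by
  filter_upwards [h.half_le_tiltMean] with ω hω
  refine (le_abs_self _).trans ((abs_div_le_two_mul hω _).trans ?_)
  rw [abs_of_pos (Real.exp_pos _)]
  linarith [exp_tiltExponent_le_two (y ω)]

lemma integrable_tiltDensity_mul_mul (h : IsLyapunovIncrement P m y W ρ T)
    (hg : StronglyMeasurable[m] g) (hgC : ∀ᵐ ω ∂P, |g ω| ≤ C)
    (hf : Integrable (fun ω ↦ f ω * Real.exp (tiltExponent (y ω))) P) :
    Integrable (fun ω ↦ tiltDensity m P y ω * (g ω * f ω)) P := by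
  simp only [tiltDensity_mul_eq]
  refine hf.bdd_mul (c := 2 * C)
    ((stronglyMeasurable_div_tiltMean hg).mono h.le).aestronglyMeasurable ?_
  filter_upwards [h.half_le_tiltMean, hgC] with ω hhalf hω
  exact (abs_div_le_two_mul hhalf _).trans (by linarith)

lemma condExp_tiltDensity_mul_mul (h : IsLyapunovIncrement P m y W ρ T)
    (hg : StronglyMeasurable[m] g) (hgC : ∀ᵐ ω ∂P, |g ω| ≤ C)
    (hf : Integrable (fun ω ↦ f ω * Real.exp (tiltExponent (y ω))) P) :
    P[fun ω ↦ tiltDensity m P y ω * (g ω * f ω) | m] =ᵐ[P] fun ω ↦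
      g ω * ((P[fun ω' ↦ f ω' * Real.exp (tiltExponent (y ω')) | m]) ω / tiltMean m P y ω) := by
  have hint := h.integrable_tiltDensity_mul_mul hg hgC hf
  simp only [tiltDensity_mul_eq] at hint ⊢
  filter_upwards [condExp_mul_of_stronglyMeasurable_left (stronglyMeasurable_div_tiltMean hg)
    hint hf] with ω hω
  exact hω.trans (by simp only [Pi.mul_apply]; ring)

lemma integrable_tiltDensity_mul (h : IsLyapunovIncrement P m y W ρ T)
    (hf : Integrable (fun ω ↦ f ω * Real.exp (tiltExponent (y ω))) P) :
    Integrable (fun ω ↦ tiltDensity m P y ω * f ω) P := by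
  simpa using h.integrable_tiltDensity_mul_mul (g := fun _ ↦ 1) (C := 1)
    stronglyMeasurable_const (by simp) hf

lemma condExp_tiltDensity_mul (h : IsLyapunovIncrement P m y W ρ T)
    (hf : Integrable (fun ω ↦ f ω * Real.exp (tiltExponent (y ω))) P) :
    P[fun ω ↦ tiltDensity m P y ω * f ω | m] =ᵐ[P] fun ω ↦
      (P[fun ω' ↦ f ω' * Real.exp (tiltExponent (y ω')) | m]) ω / tiltMean m P y ω := by
  simpa using h.condExp_tiltDensity_mul_mul (g := fun _ ↦ 1) (C := 1)
    stronglyMeasurable_const (by simp) hf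

lemma integrable_tiltDensity_mul_stronglyMeasurable (h : IsLyapunovIncrement P m y W ρ T)
    (hg : StronglyMeasurable[m] g) (hgC : ∀ᵐ ω ∂P, |g ω| ≤ C) :
    Integrable (fun ω ↦ tiltDensity m P y ω * g ω) P := by
  simpa using h.integrable_tiltDensity_mul_mul (f := fun _ ↦ 1) hg hgC
    (by simpa using h.integrable_exp_tiltExponent)

lemma condExp_tiltDensity_mul_stronglyMeasurable (h : IsLyapunovIncrement P m y W ρ T)
    (hg : StronglyMeasurable[m] g) (hgC : ∀ᵐ ω ∂P, |g ω| ≤ C) :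
    P[fun ω ↦ tiltDensity m P y ω * g ω | m] =ᵐ[P] g := by
  have hpull := h.condExp_tiltDensity_mul_mul (f := fun _ ↦ 1) hg hgC
    (by simpa using h.integrable_exp_tiltExponent)
  simp only [one_mul, mul_one] at hpull
  filter_upwards [hpull, h.tiltMean_pos] with ω hω hpos
  rw [hω, ← tiltMean, div_self hpos.ne', mul_one]

lemma condExp_tiltDensity (h : IsLyapunovIncrement P m y W ρ T) :
    P[tiltDensity m P y | m] =ᵐ[P] 1 := by
  simpa using h.condExp_tiltDensity_mul_stronglyMeasurable (g := 1) (C := 1)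
    stronglyMeasurable_one (by simp)

end TiltDensity

section TiltIncrement

lemma integrable_tiltDensity_mul_tiltIncrement_and_condExp_eq_zero
    (h : IsLyapunovIncrement P m y W ρ T) :
    Integrable (fun ω ↦ tiltDensity m P y ω * tiltIncrement m P y ω) P ∧
      P[fun ω ↦ tiltDensity m P y ω * tiltIncrement m P y ω | m] =ᵐ[P] 0 := by
  have hexpand : (fun ω ↦ tiltDensity m P y ω * tiltIncrement m P y ω) =
      (fun ω ↦ tiltDensity m P y ω * tiltExponent (y ω)) -
        fun ω ↦ tiltDensity m P y ω * tiltDrift m P y ω := by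
    ext ω
    simp only [tiltIncrement, Pi.sub_apply]
    ring
  have hexp := h.integrable_tiltDensity_mul h.integrable_tiltExponent_mul_exp
  have hdrift := h.integrable_tiltDensity_mul_stronglyMeasurable stronglyMeasurable_tiltDrift
    h.abs_tiltDrift_le_const
  rw [hexpand]
  refine ⟨hexp.sub hdrift, ?_⟩
  filter_upwards [condExp_sub hexp hdrift m,
    h.condExp_tiltDensity_mul h.integrable_tiltExponent_mul_exp,
    h.condExp_tiltDensity_mul_stronglyMeasurable stronglyMeasurable_tiltDrift
      h.abs_tiltDrift_le_const] with ω hsub h1 h0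
  rw [hsub, Pi.sub_apply, h1, h0]
  exact sub_self _

lemma integrable_tiltDensity_mul_tiltIncrement_sq_and_condExp_eq
    (h : IsLyapunovIncrement P m y W ρ T) :
    Integrable (fun ω ↦ tiltDensity m P y ω * tiltIncrement m P y ω ^ 2) P ∧
      P[fun ω ↦ tiltDensity m P y ω * tiltIncrement m P y ω ^ 2 | m] =ᵐ[P] fun ω ↦
        (P[fun ω' ↦ tiltExponent (y ω') ^ 2 * Real.exp (tiltExponent (y ω')) | m]) ω /
          tiltMean m P y ω - tiltDrift m P y ω ^ 2 := by
  have hexpand : (fun ω ↦ tiltDensity m P y ω * tiltIncrement m P y ω ^ 2) =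
      (fun ω ↦ tiltDensity m P y ω * tiltExponent (y ω) ^ 2) -
        (fun ω ↦ tiltDensity m P y ω * (2 * tiltDrift m P y ω * tiltExponent (y ω))) +
        fun ω ↦ tiltDensity m P y ω * tiltDrift m P y ω ^ 2 := by
    ext ω
    simp only [tiltIncrement, Pi.add_apply, Pi.sub_apply]
    ring
  have hdrift : StronglyMeasurable[m] (tiltDrift m P y) := stronglyMeasurable_tiltDrift
  have hcross : ∀ᵐ ω ∂P, |2 * tiltDrift m P y ω| ≤ 84 := by
    filter_upwards [h.abs_tiltDrift_le_const] with ω hω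
    rw [abs_mul, abs_two]
    linarith
  have hsquare : ∀ᵐ ω ∂P, |tiltDrift m P y ω ^ 2| ≤ 42 ^ 2 := by
    filter_upwards [h.abs_tiltDrift_le_const] with ω hω
    rw [abs_pow]
    gcongr
  have h2 := h.integrable_tiltDensity_mul h.integrable_tiltExponent_sq_mul_exp
  have h1 := h.integrable_tiltDensity_mul_mul (hdrift.const_mul 2) hcross
    h.integrable_tiltExponent_mul_exp
  have h0 : Integrable (fun ω ↦ tiltDensity m P y ω * tiltDrift m P y ω ^ 2) P :=
    h.integrable_tiltDensity_mul_stronglyMeasurable (hdrift.pow 2) hsquare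
  have hc0 : P[fun ω ↦ tiltDensity m P y ω * tiltDrift m P y ω ^ 2 | m] =ᵐ[P] fun ω ↦
      tiltDrift m P y ω ^ 2 :=
    h.condExp_tiltDensity_mul_stronglyMeasurable (hdrift.pow 2) hsquare
  rw [hexpand]
  refine ⟨(h2.sub h1).add h0, ?_⟩
  filter_upwards [condExp_add (h2.sub h1) h0 m, condExp_sub h2 h1 m,
    h.condExp_tiltDensity_mul h.integrable_tiltExponent_sq_mul_exp,
    h.condExp_tiltDensity_mul_mul (hdrift.const_mul 2) hcross h.integrable_tiltExponent_mul_exp,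
    hc0] with ω hadd hsub hc2 hc1 hc0
  rw [hadd, Pi.add_apply, hsub, Pi.sub_apply, hc2, hc1, hc0, ← tiltDrift]
  ring

lemma abs_condExp_tiltDensity_mul_tiltIncrement_sq_sub_le (h : IsLyapunovIncrement P m y W ρ T) :
    ∀ᵐ ω ∂P, |(P[fun ω' ↦ tiltDensity m P y ω' * tiltIncrement m P y ω' ^ 2 | m]) ω - W ω| ≤
      2000 * (T * W ω) := by
  filter_upwards [h.integrable_tiltDensity_mul_tiltIncrement_sq_and_condExp_eq.2,
    h.abs_condExp_tiltExponent_sq_mul_exp_sub_le, h.abs_tiltMean_sub_one_le, h.half_le_tiltMean,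
    h.abs_tiltDrift_le] with ω hω hZ hM hM2 hb
  rw [hω]
  exact abs_div_sub_sq_sub_le hZ hM hM2 hb (h.variance_nonneg ω) (h.variance_le ω)

lemma tiltDensity_mul_abs_tiltIncrement_rpow_le (h : IsLyapunovIncrement P m y W ρ T) :
    ∀ᵐ ω ∂P, tiltDensity m P y ω * |tiltIncrement m P y ω| ^ (2 + ρ) ≤
      8 * (tiltDensity m P y ω * |tiltExponent (y ω)| ^ (2 + ρ) +
        tiltDensity m P y ω * |tiltDrift m P y ω| ^ (2 + ρ)) := by
  filter_upwards [h.tiltDensity_nonneg] with ω hω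
  refine (mul_le_mul_of_nonneg_left (abs_sub_rpow_le h.exponent_nonneg h.exponent_le_one
    (tiltExponent (y ω)) (tiltDrift m P y ω)) hω).trans (le_of_eq ?_)
  ring

lemma abs_tiltDrift_rpow_le (h : IsLyapunovIncrement P m y W ρ T) :
    ∀ᵐ ω ∂P, |(|tiltDrift m P y ω| ^ (2 + ρ))| ≤ 42 ^ (2 + ρ) := by
  filter_upwards [h.abs_tiltDrift_le_const] with ω hω
  rw [abs_of_nonneg (by positivity)]
  exact Real.rpow_le_rpow (abs_nonneg _) hω (by linarith [h.exponent_nonneg])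

lemma integrable_tiltDensity_mul_rpow_add (h : IsLyapunovIncrement P m y W ρ T) :
    Integrable ((fun ω ↦ tiltDensity m P y ω * |tiltExponent (y ω)| ^ (2 + ρ)) +
      fun ω ↦ tiltDensity m P y ω * |tiltDrift m P y ω| ^ (2 + ρ)) P :=
  (h.integrable_tiltDensity_mul h.integrable_abs_tiltExponent_rpow_mul_exp).add
    (h.integrable_tiltDensity_mul_stronglyMeasurable
      (stronglyMeasurable_abs_tiltDrift_rpow h.exponent_nonneg) h.abs_tiltDrift_rpow_le)

lemma integrable_tiltDensity_mul_abs_tiltIncrement_rpow (h : IsLyapunovIncrement P m y W ρ T) :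
    Integrable (fun ω ↦ tiltDensity m P y ω * |tiltIncrement m P y ω| ^ (2 + ρ)) P := by
  refine (h.integrable_tiltDensity_mul_rpow_add.const_mul 8).mono'
    ((measurable_tiltDensity h.le h.measurable).mul
      ((measurable_tiltIncrement h.le h.measurable).abs.pow_const _)).aestronglyMeasurable ?_
  filter_upwards [h.tiltDensity_mul_abs_tiltIncrement_rpow_le, h.tiltDensity_nonneg]
    with ω hω hnonneg
  rwa [Real.norm_of_nonneg (by positivity)]

lemma condExp_tiltDensity_mul_abs_tiltIncrement_rpow_le (h : IsLyapunovIncrement P m y W ρ T) :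
    ∀ᵐ ω ∂P, (P[fun ω' ↦ tiltDensity m P y ω' * |tiltIncrement m P y ω'| ^ (2 + ρ) | m]) ω ≤
      600000 * (T * W ω) := by
  have hexp := h.integrable_abs_tiltExponent_rpow_mul_exp
  have hdrift := stronglyMeasurable_abs_tiltDrift_rpow (m := m) (P := P) (y := y) h.exponent_nonneg
  filter_upwards [condExp_mono (m := m) h.integrable_tiltDensity_mul_abs_tiltIncrement_rpow
      (h.integrable_tiltDensity_mul_rpow_add.const_mul 8)
      h.tiltDensity_mul_abs_tiltIncrement_rpow_le,
    condExp_const_mul (μ := P) (m := m) 8 _,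
    condExp_add (h.integrable_tiltDensity_mul hexp)
      (h.integrable_tiltDensity_mul_stronglyMeasurable hdrift h.abs_tiltDrift_rpow_le) m,
    h.condExp_tiltDensity_mul hexp,
    h.condExp_tiltDensity_mul_stronglyMeasurable hdrift h.abs_tiltDrift_rpow_le,
    h.condExp_abs_tiltExponent_rpow_mul_exp_le, h.abs_tiltDrift_le, h.half_le_tiltMean]
    with ω hmono hmul hadd hcexp hcdrift hmoment hb hM
  rw [hmul, hadd, Pi.add_apply, hcexp, hcdrift] at hmono
  have hW := h.variance_nonneg ω
  have hTW : 0 ≤ T * W ω := mul_nonneg (hW.trans (h.variance_le ω)) hW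
  have hrpow := abs_rpow_two_add_le h.exponent_nonneg h.exponent_le_one hb hW
    (h.variance_le_one ω) (h.variance_le ω)
  have hquot := hmoment.trans
    (le_mul_of_one_le_right (by positivity) (by linarith : 1 ≤ 2 * tiltMean m P y ω))
  rw [← mul_assoc, ← div_le_iff₀ (one_half_pos.trans_le hM)] at hquot
  linarith

end TiltIncrement

end IsLyapunovIncrement

section Definitions

variable {Ω : Type*} {mΩ : MeasurableSpace Ω}

/-- The density increments `e^{ζ_i} / E[e^{ζ_i} | ℱ_i]` of the conjugate measure with parameter
`lam`, where `ζ_i = lam ξ_i - (lam ξ_i)² / 2`. -/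
noncomputable def conjugateDensity (P : Measure Ω) (ℱ : Filtration ℕ mΩ) (ξ : ℕ → Ω → ℝ) (lam : ℝ)
    (i : ℕ) : Ω → ℝ :=
  tiltDensity (ℱ i) P fun ω ↦ lam * ξ i ω

/-- The increments `ζ_i = lam ξ_i - (lam ξ_i)² / 2`, centred under the conjugate measure with
parameter `lam` and divided by `lam`. -/
noncomputable def conjugateIncrement (P : Measure Ω) (ℱ : Filtration ℕ mΩ) (ξ : ℕ → Ω → ℝ)
    (lam : ℝ) (i : ℕ) (ω : Ω) : ℝ :=
  tiltIncrement (ℱ i) P (fun ω' ↦ lam * ξ i ω') ω / lam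

end Definitions

namespace IsLyapunovMDS

variable {Ω : Type*} {mΩ : MeasurableSpace Ω} {P : Measure Ω} {ℱ : Filtration ℕ mΩ}
  {ξ w : ℕ → Ω → ℝ} {n i : ℕ} {ρ γ ε δ C C' lam : ℝ}

lemma mono_const (h : IsLyapunovMDS P ℱ ξ w n ρ γ ε δ C) (hC : C ≤ C') :
    IsLyapunovMDS P ℱ ξ w n ρ γ ε δ C' :=
  { h with
    condExp_rpow := fun i ↦ (h.condExp_rpow i).mono fun ω hω ↦ hω.trans <| by
      have := h.variance_nonneg i ω
      have := h.scale_pos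
      gcongr
    const_nonneg := h.const_nonneg.trans hC }

lemma measurable_increment_const_mul (h : IsLyapunovMDS P ℱ ξ w n ρ γ ε δ C) (lam : ℝ) (i : ℕ) :
    Measurable[ℱ (i + 1)] fun ω ↦ lam * ξ i ω :=
  (h.stronglyMeasurable_increment i).measurable.const_mul lam

lemma condExp_sq_eq (h : IsLyapunovMDS P ℱ ξ w n ρ γ 0 δ C) (i : ℕ) :
    P[fun ω ↦ ξ i ω ^ 2 | ℱ i] =ᵐ[P] w i := by
  filter_upwards [h.condExp_sq i] with ω hω
  rw [zero_mul] at hω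
  exact sub_eq_zero.1 (abs_nonpos_iff.1 hω)

lemma sq_le_rpow (h : IsLyapunovMDS P ℱ ξ w n ρ γ ε δ C) (hlam : 0 < lam)
    (hle : lam * γ ≤ 1) : (lam * γ) ^ 2 ≤ (lam * γ) ^ ρ := by
  rw [← Real.rpow_two]
  exact Real.rpow_le_rpow_of_exponent_ge (mul_pos hlam h.scale_pos) hle
    (h.exponent_le_one.trans one_le_two)

lemma isLyapunovIncrement_const_mul (h : IsLyapunovMDS P ℱ ξ w n ρ γ 0 δ 1) (hlam : 0 < lam)
    (hle : lam * γ ≤ 1) (i : ℕ) :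
    IsLyapunovIncrement P (ℱ i) (fun ω ↦ lam * ξ i ω) (fun ω ↦ lam ^ 2 * w i ω) ρ
      ((lam * γ) ^ ρ) := by
  have hscale : 0 ≤ lam * γ := (mul_pos hlam h.scale_pos).le
  have hvar (ω : Ω) : lam ^ 2 * w i ω ≤ (lam * γ) ^ 2 := by
    rw [mul_pow]
    exact mul_le_mul_of_nonneg_left (h.variance_le i ω) (sq_nonneg lam)
  have hsq : (fun ω ↦ (lam * ξ i ω) ^ 2) = fun ω ↦ lam ^ 2 * ξ i ω ^ 2 := by
    simp only [mul_pow]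
  have hrpow : (fun ω ↦ |lam * ξ i ω| ^ (2 + ρ)) =
      fun ω ↦ lam ^ (2 + ρ) * |ξ i ω| ^ (2 + ρ) := by
    simp only [abs_mul, abs_of_pos hlam, Real.mul_rpow hlam.le (abs_nonneg _)]
  refine
    { le := ℱ.le i
      measurable := (h.measurable_increment_const_mul lam i).mono (ℱ.le _) le_rfl
      integrable_sq := hsq ▸ (h.integrable_sq i).const_mul _
      integrable_rpow := hrpow ▸ (h.integrable_rpow i).const_mul _
      condExp_eq_zero := ?_
      condExp_sq := ?_
      condExp_rpow := ?_
      variance_nonneg := fun ω ↦ mul_nonneg (sq_nonneg lam) (h.variance_nonneg i ω)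
      variance_le := fun ω ↦ (hvar ω).trans (h.sq_le_rpow hlam hle)
      variance_le_one := fun ω ↦ (hvar ω).trans (pow_le_one₀ hscale hle)
      exponent_nonneg := h.exponent_pos.le
      exponent_le_one := h.exponent_le_one }
  · filter_upwards [condExp_const_mul (μ := P) (m := ℱ i) lam (ξ i), h.condExp_eq_zero i]
      with ω hmul hzero
    rw [hmul, hzero, Pi.zero_apply, mul_zero]
  · rw [hsq]
    filter_upwards [condExp_const_mul (μ := P) (m := ℱ i) (lam ^ 2) (fun ω ↦ ξ i ω ^ 2),
      h.condExp_sq_eq i] with ω hmul hvarw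
    rw [hmul, hvarw]
  · rw [hrpow]
    filter_upwards [condExp_const_mul (μ := P) (m := ℱ i) (lam ^ (2 + ρ))
      (fun ω ↦ |ξ i ω| ^ (2 + ρ)), h.condExp_rpow i] with ω hmul hmom
    calc _ = lam ^ (2 + ρ) * (P[fun ω' ↦ |ξ i ω'| ^ (2 + ρ) | ℱ i]) ω := hmul
      _ ≤ lam ^ (2 + ρ) * (1 * γ ^ ρ * w i ω) := by gcongr
      _ = (lam * γ) ^ ρ * (lam ^ 2 * w i ω) := by
        rw [Real.mul_rpow hlam.le h.scale_pos.le, Real.rpow_add hlam, Real.rpow_two]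
        ring

lemma conjugateIncrement_sq (lam : ℝ) (i : ℕ) (ω : Ω) :
    conjugateIncrement P ℱ ξ lam i ω ^ 2 =
      (lam ^ 2)⁻¹ * tiltIncrement (ℱ i) P (fun ω' ↦ lam * ξ i ω') ω ^ 2 := by
  rw [conjugateIncrement, div_pow, div_eq_inv_mul]

lemma abs_conjugateIncrement_rpow (hlam : 0 < lam) (i : ℕ) (ω : Ω) :
    |conjugateIncrement P ℱ ξ lam i ω| ^ (2 + ρ) =
      (lam ^ (2 + ρ))⁻¹ * |tiltIncrement (ℱ i) P (fun ω' ↦ lam * ξ i ω') ω| ^ (2 + ρ) := by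
  rw [conjugateIncrement, abs_div, abs_of_pos hlam, Real.div_rpow (abs_nonneg _) hlam.le,
    div_eq_inv_mul]

lemma stronglyMeasurable_tiltIncrement_const_mul (h : IsLyapunovMDS P ℱ ξ w n ρ γ ε δ C) (i : ℕ) :
    StronglyMeasurable[ℱ (i + 1)] (tiltIncrement (ℱ i) P fun ω ↦ lam * ξ i ω) :=
  (measurable_tiltIncrement (ℱ.mono i.le_succ)
    (h.measurable_increment_const_mul lam i)).stronglyMeasurable

variable [IsProbabilityMeasure P]

lemma isMultiplicativeMDS_conjugateDensity (h : IsLyapunovMDS P ℱ ξ w n ρ γ 0 δ 1)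
    (hξ : ∀ i, n ≤ i → ξ i = 0) (hlam : 0 < lam) (hle : lam * γ ≤ 1) :
    IsMultiplicativeMDS P ℱ (conjugateDensity P ℱ ξ lam) n 4 where
  stronglyMeasurable i := (measurable_tiltDensity (ℱ.mono i.le_succ)
    (h.measurable_increment_const_mul lam i)).stronglyMeasurable
  nonneg i := (h.isLyapunovIncrement_const_mul hlam hle i).tiltDensity_nonneg
  le_const i := (h.isLyapunovIncrement_const_mul hlam hle i).tiltDensity_le_four
  condExp_eq_one i := (h.isLyapunovIncrement_const_mul hlam hle i).condExp_tiltDensity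
  eq_one_of_le i hi := by
    ext ω
    simp [conjugateDensity, tiltDensity, tiltMean, hξ i hi, tiltExponent_zero,
      condExp_const (ℱ.le i)]

lemma condExp_conjugateIncrement (h : IsLyapunovMDS P ℱ ξ w n ρ γ 0 δ 1)
    (hξ : ∀ i, n ≤ i → ξ i = 0) (hlam : 0 < lam) (hle : lam * γ ≤ 1) (i : ℕ) :
    (conjugateMeasure P (conjugateDensity P ℱ ξ lam) n)[conjugateIncrement P ℱ ξ lam i | ℱ i]
      =ᵐ[conjugateMeasure P (conjugateDensity P ℱ ξ lam) n] 0 := by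
  obtain ⟨hint, hzero⟩ := (h.isLyapunovIncrement_const_mul hlam hle
    i).integrable_tiltDensity_mul_tiltIncrement_and_condExp_eq_zero
  have hscale : conjugateIncrement P ℱ ξ lam i =
      fun ω ↦ lam⁻¹ * tiltIncrement (ℱ i) P (fun ω' ↦ lam * ξ i ω') ω :=
    funext fun ω ↦ div_eq_inv_mul _ _
  rw [hscale]
  filter_upwards [(h.isMultiplicativeMDS_conjugateDensity hξ hlam
    hle).condExp_conjugateMeasure_const_mul lam⁻¹ (h.stronglyMeasurable_tiltIncrement_const_mul i)
      hint, (withDensity_absolutelyContinuous _ _).ae_le hzero] with ω hbayes hzero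
  exact hbayes.trans (by rw [conjugateDensity, hzero, Pi.zero_apply, mul_zero])

lemma abs_condExp_conjugateIncrement_sq_sub_le (h : IsLyapunovMDS P ℱ ξ w n ρ γ 0 δ 1)
    (hξ : ∀ i, n ≤ i → ξ i = 0) (hlam : 0 < lam) (hle : lam * γ ≤ 1) (i : ℕ) :
    ∀ᵐ ω ∂conjugateMeasure P (conjugateDensity P ℱ ξ lam) n,
      |((conjugateMeasure P (conjugateDensity P ℱ ξ lam) n)[
        fun ω' ↦ conjugateIncrement P ℱ ξ lam i ω' ^ 2 | ℱ i]) ω - w i ω| ≤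
        2000 * (lam * γ) ^ ρ * w i ω := by
  have hinc := h.isLyapunovIncrement_const_mul hlam hle i
  have hlam2 : 0 < lam ^ 2 := by positivity
  simp only [conjugateIncrement_sq]
  filter_upwards [(h.isMultiplicativeMDS_conjugateDensity hξ hlam
    hle).condExp_conjugateMeasure_const_mul (lam ^ 2)⁻¹
      (f := fun ω ↦ tiltIncrement (ℱ i) P (fun ω' ↦ lam * ξ i ω') ω ^ 2)
      ((h.stronglyMeasurable_tiltIncrement_const_mul i).pow 2)
      hinc.integrable_tiltDensity_mul_tiltIncrement_sq_and_condExp_eq.1,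
    (withDensity_absolutelyContinuous _ _).ae_le
      hinc.abs_condExp_tiltDensity_mul_tiltIncrement_sq_sub_le] with ω hbayes hsq
  rw [hbayes, inv_mul_eq_div, div_sub' hlam2.ne', abs_div, abs_of_pos hlam2, div_le_iff₀ hlam2]
  exact hsq.trans_eq (by ring)

lemma condExp_abs_conjugateIncrement_rpow_le (h : IsLyapunovMDS P ℱ ξ w n ρ γ 0 δ 1)
    (hξ : ∀ i, n ≤ i → ξ i = 0) (hlam : 0 < lam) (hle : lam * γ ≤ 1) (i : ℕ) :
    ∀ᵐ ω ∂conjugateMeasure P (conjugateDensity P ℱ ξ lam) n,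
      ((conjugateMeasure P (conjugateDensity P ℱ ξ lam) n)[
        fun ω' ↦ |conjugateIncrement P ℱ ξ lam i ω'| ^ (2 + ρ) | ℱ i]) ω ≤
        600000 * γ ^ ρ * w i ω := by
  have hinc := h.isLyapunovIncrement_const_mul hlam hle i
  have hcont : Continuous fun x : ℝ ↦ |x| ^ (2 + ρ) :=
    continuous_abs.rpow_const fun _ ↦ Or.inr (by linarith [h.exponent_pos])
  simp only [abs_conjugateIncrement_rpow hlam]
  filter_upwards [(h.isMultiplicativeMDS_conjugateDensity hξ hlam
    hle).condExp_conjugateMeasure_const_mul (lam ^ (2 + ρ))⁻¹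
      (hcont.comp_stronglyMeasurable (h.stronglyMeasurable_tiltIncrement_const_mul i))
      hinc.integrable_tiltDensity_mul_abs_tiltIncrement_rpow,
    (withDensity_absolutelyContinuous _ _).ae_le
      hinc.condExp_tiltDensity_mul_abs_tiltIncrement_rpow_le] with ω hbayes hmom
  rw [hbayes, inv_mul_eq_div, div_le_iff₀ (by positivity)]
  refine hmom.trans_eq ?_
  rw [Real.mul_rpow hlam.le h.scale_pos.le, Real.rpow_add hlam, Real.rpow_two]
  ring

lemma isLyapunovMDS_conjugateIncrement (h : IsLyapunovMDS P ℱ ξ w n ρ γ 0 δ 1)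
    (hξ : ∀ i, n ≤ i → ξ i = 0) (hlam : 0 < lam) (hle : lam * γ ≤ 1)
    (hsmall : 2000 * (lam * γ) ^ ρ ≤ 1) :
    IsLyapunovMDS (conjugateMeasure P (conjugateDensity P ℱ ξ lam) n) ℱ
      (conjugateIncrement P ℱ ξ lam) w n ρ γ (2000 * (lam * γ) ^ ρ) δ 600000 := by
  have hv := h.isMultiplicativeMDS_conjugateDensity hξ hlam hle
  have hinc := h.isLyapunovIncrement_const_mul hlam hle
  exact
    { stronglyMeasurable_increment := fun i ↦
        ((h.stronglyMeasurable_tiltIncrement_const_mul i).measurable.div_const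
          lam).stronglyMeasurable
      stronglyMeasurable_variance := h.stronglyMeasurable_variance
      variance_nonneg := h.variance_nonneg
      variance_le := h.variance_le
      variance_sum := (withDensity_absolutelyContinuous _ _).ae_le h.variance_sum
      integrable_sq := fun i ↦ by
        simp only [conjugateIncrement_sq]
        exact (hv.integrable_conjugateMeasure
          (hinc i).integrable_tiltDensity_mul_tiltIncrement_sq_and_condExp_eq.1).const_mul _
      integrable_rpow := fun i ↦ by
        simp only [abs_conjugateIncrement_rpow hlam]
        exact (hv.integrable_conjugateMeasure
          (hinc i).integrable_tiltDensity_mul_abs_tiltIncrement_rpow).const_mul _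
      condExp_eq_zero := h.condExp_conjugateIncrement hξ hlam hle
      condExp_sq := h.abs_condExp_conjugateIncrement_sq_sub_le hξ hlam hle
      condExp_rpow := h.condExp_abs_conjugateIncrement_rpow_le hξ hlam hle
      exponent_pos := h.exponent_pos
      exponent_le_one := h.exponent_le_one
      scale_pos := h.scale_pos
      error_nonneg := by positivity [h.scale_pos]
      error_le_one := hsmall
      const_nonneg := by norm_num }

lemma normalKolmogorovDist_partialSum_conjugateIncrement_le
    (h : IsLyapunovMDS P ℱ ξ w n ρ γ 0 δ 1) (hξ : ∀ i, n ≤ i → ξ i = 0) (hδ : 0 ≤ δ)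
    (hγ : γ ≤ 1 / 4) (hlam : 0 < lam) (hle : lam * γ ≤ 1) :
    normalKolmogorovDist (conjugateMeasure P (conjugateDensity P ℱ ξ lam) n)
        (partialSum (conjugateIncrement P ℱ ξ lam) n) ≤
      2000 * (berryEsseenConst ρ 600000 + 1) * ((lam * γ) ^ ρ + berryEsseenRate ρ γ + δ) := by
  have := (h.isMultiplicativeMDS_conjugateDensity hξ hlam
    hle).isProbabilityMeasure_conjugateMeasure
  have hγ0 := h.scale_pos
  have hK := berryEsseenConst_nonneg (C := 600000) h.exponent_pos.le (by norm_num)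
  have hrate := berryEsseenRate_nonneg (ρ := ρ) hγ0.le
  set K := berryEsseenConst ρ 600000
  set T := (lam * γ) ^ ρ
  set R := berryEsseenRate ρ γ
  have hT : 0 ≤ T := by positivity
  have hKR : 0 ≤ K * R := by positivity
  have hKδ : 0 ≤ K * δ := by positivity
  have hKT : 0 ≤ K * T := by positivity
  rcases le_or_gt (2000 * T) 1 with hsmall | hlarge
  · refine ((h.isLyapunovMDS_conjugateIncrement hξ hlam hle
      hsmall).normalKolmogorovDist_le hδ hγ).trans ?_
    nlinarith
  · refine (normalKolmogorovDist_le_one _).trans ?_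
    nlinarith

end IsLyapunovMDS

section ClippedVariance

variable {Ω : Type*} {mΩ : MeasurableSpace Ω} {P : Measure Ω} {ℱ : Filtration ℕ mΩ}
  {ξ : ℕ → Ω → ℝ} {n : ℕ} {ρ γ δ : ℝ}

/-- The conditional variance `E[ξ_i² | ℱ_i]`, clipped to `[0, γ²]` so that the bounds it satisfies
almost surely hold everywhere. -/
noncomputable def clippedVariance (P : Measure Ω) (ℱ : Filtration ℕ mΩ) (ξ : ℕ → Ω → ℝ) (γ : ℝ)
    (i : ℕ) (ω : Ω) : ℝ :=
  max 0 (min (γ ^ 2) ((P[fun ω' ↦ ξ i ω' ^ 2 | ℱ i]) ω))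

variable [IsFiniteMeasure P]

lemma condExp_sq_ae_eq_clippedVariance {i : ℕ} (hρ : 0 < ρ) (hγ : 0 < γ)
    (hsq : Integrable (fun ω ↦ ξ i ω ^ 2) P)
    (hrpow : Integrable (fun ω ↦ |ξ i ω| ^ (2 + ρ)) P)
    (hmoment : ∀ᵐ ω ∂P, (P[fun ω' ↦ |ξ i ω'| ^ (2 + ρ) | ℱ i]) ω ≤
      γ ^ ρ * (P[fun ω' ↦ ξ i ω' ^ 2 | ℱ i]) ω) :
    P[fun ω ↦ ξ i ω ^ 2 | ℱ i] =ᵐ[P] clippedVariance P ℱ ξ γ i := by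
  filter_upwards [condExp_sq_le_sq_of_condExp_rpow_le (ℱ.le i) hρ hγ hsq hrpow hmoment,
    condExp_nonneg (m := ℱ i) (ae_of_all P fun ω ↦ sq_nonneg (ξ i ω))] with ω hle hnonneg
  rw [clippedVariance, min_eq_right hle]
  exact (max_eq_right hnonneg).symm

lemma isLyapunovMDS_clippedVariance (hmeas : ∀ i, StronglyMeasurable[ℱ (i + 1)] (ξ i))
    (hsq : ∀ i, Integrable (fun ω ↦ ξ i ω ^ 2) P)
    (hrpow : ∀ i, Integrable (fun ω ↦ |ξ i ω| ^ (2 + ρ)) P)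
    (hzero : ∀ i, P[ξ i | ℱ i] =ᵐ[P] 0)
    (hmoment : ∀ i, ∀ᵐ ω ∂P, (P[fun ω' ↦ |ξ i ω'| ^ (2 + ρ) | ℱ i]) ω ≤
      γ ^ ρ * (P[fun ω' ↦ ξ i ω' ^ 2 | ℱ i]) ω)
    (hsum : ∀ᵐ ω ∂P, |partialSum (fun i ↦ P[fun ω' ↦ ξ i ω' ^ 2 | ℱ i]) n ω - 1| ≤ δ ^ 2)
    (hρ : 0 < ρ) (hρ1 : ρ ≤ 1) (hγ : 0 < γ) :
    IsLyapunovMDS P ℱ ξ (clippedVariance P ℱ ξ γ) n ρ γ 0 δ 1 := by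
  have hclip (i : ℕ) := condExp_sq_ae_eq_clippedVariance hρ hγ (hsq i) (hrpow i) (hmoment i)
  exact
    { stronglyMeasurable_increment := hmeas
      stronglyMeasurable_variance := fun i ↦
        (measurable_const.max (measurable_const.min
          stronglyMeasurable_condExp.measurable)).stronglyMeasurable
      variance_nonneg := fun i ω ↦ le_max_left _ _
      variance_le := fun i ω ↦ max_le (sq_nonneg γ) (min_le_left _ _)
      variance_sum := by
        filter_upwards [hsum, ae_all_iff.2 hclip] with ω hω hclip
        simpa only [partialSum, hclip] using hω
      integrable_sq := hsq
      integrable_rpow := hrpow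
      condExp_eq_zero := hzero
      condExp_sq := fun i ↦ by
        filter_upwards [hclip i] with ω hω
        simp [hω]
      condExp_rpow := fun i ↦ by
        filter_upwards [hmoment i, hclip i] with ω hω hclip
        rwa [one_mul, ← hclip]
      exponent_pos := hρ
      exponent_le_one := hρ1
      scale_pos := hγ
      error_nonneg := le_rfl
      error_le_one := zero_le_one
      const_nonneg := zero_le_one }

end ClippedVariance

@[to_additive sum_Icc_one_eq_sum_range]
lemma prod_Icc_one_eq_prod_range {M : Type*} [CommMonoid M] (f : ℕ → M) (n : ℕ) :
    ∏ i ∈ Finset.Icc 1 n, f i = ∏ i ∈ Finset.range n, f (i + 1) := by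
  rw [Finset.range_eq_Ico, Finset.prod_Ico_add' f 0 n 1]
  rfl

namespace MDS

variable {Ω : Type} [mΩ : MeasurableSpace Ω] {P : Measure Ω} {ρ γ δ lam : ℝ} {i : ℕ}

/-- The σ-algebras `F 0 ⊆ F 1 ⊆ …` as a filtration. -/
def filtration (A : MDS Ω P) : Filtration ℕ mΩ := ⟨A.F, A.F_mono, A.F_le⟩

/-- The normalized increments `ξ_{i+1}`, numbered from `0` and extended by zero from index `n` on,
where `MDS` says nothing about `X`. -/
noncomputable def increment (A : MDS Ω P) (i : ℕ) : Ω → ℝ := if i < A.n then A.xi (i + 1) else 0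

lemma Bsq_pos (A : MDS Ω P) : 0 < A.Bsq :=
  Finset.sum_pos (fun i hi ↦ A.var_pos i (Finset.mem_Icc.1 hi).1 (Finset.mem_Icc.1 hi).2)
    ⟨1, Finset.mem_Icc.2 ⟨le_rfl, A.npos⟩⟩

lemma increment_of_le (A : MDS Ω P) (hi : A.n ≤ i) : A.increment i = 0 := if_neg hi.not_gt

lemma increment_of_lt (A : MDS Ω P) (hi : i < A.n) :
    A.increment i = fun ω ↦ (√A.Bsq)⁻¹ * A.X (i + 1) ω := by
  ext ω
  rw [increment, if_pos hi, xi, div_eq_inv_mul]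

lemma increment_sq_of_lt (A : MDS Ω P) (hi : i < A.n) :
    (fun ω ↦ A.increment i ω ^ 2) = fun ω ↦ A.Bsq⁻¹ * A.X (i + 1) ω ^ 2 := by
  simp only [A.increment_of_lt hi, mul_pow, inv_pow, Real.sq_sqrt A.Bsq_pos.le]

lemma abs_increment_rpow_of_lt (A : MDS Ω P) (hi : i < A.n) (p : ℝ) :
    (fun ω ↦ |A.increment i ω| ^ p) = fun ω ↦ (√A.Bsq ^ p)⁻¹ * |A.X (i + 1) ω| ^ p := by
  have hB := Real.sqrt_nonneg A.Bsq
  simp only [A.increment_of_lt hi, abs_mul, abs_inv, abs_of_nonneg hB,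
    Real.mul_rpow (inv_nonneg.2 hB) (abs_nonneg _), Real.inv_rpow hB]

lemma stronglyMeasurable_increment (A : MDS Ω P) (i : ℕ) :
    StronglyMeasurable[A.filtration (i + 1)] (A.increment i) := by
  rcases lt_or_ge i A.n with hi | hi
  · rw [A.increment_of_lt hi]
    exact (A.meas (i + 1) i.succ_pos hi).const_mul _
  · rw [A.increment_of_le hi]
    exact stronglyMeasurable_zero

lemma integrable_increment_sq (A : MDS Ω P) (i : ℕ) :
    Integrable (fun ω ↦ A.increment i ω ^ 2) P := by
  rcases lt_or_ge i A.n with hi | hi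
  · rw [A.increment_sq_of_lt hi]
    exact (A.sq_int (i + 1) i.succ_pos hi).const_mul _
  · simp [A.increment_of_le hi]

lemma integrable_abs_increment_rpow (A : MDS Ω P) (hA : A.CondA4 ρ γ) (hρ : 0 < ρ) (i : ℕ) :
    Integrable (fun ω ↦ |A.increment i ω| ^ (2 + ρ)) P := by
  rcases lt_or_ge i A.n with hi | hi
  · rw [A.abs_increment_rpow_of_lt hi]
    exact (hA.2.2.1 (i + 1) i.succ_pos hi).const_mul _
  · simp [A.increment_of_le hi, Real.zero_rpow (by linarith : 2 + ρ ≠ 0)]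

lemma condExp_increment (A : MDS Ω P) (i : ℕ) : P[A.increment i | A.filtration i] =ᵐ[P] 0 := by
  rcases lt_or_ge i A.n with hi | hi
  · rw [A.increment_of_lt hi]
    have hmean := A.mean_zero (i + 1) i.succ_pos hi
    rw [Nat.add_sub_cancel] at hmean
    filter_upwards [condExp_const_mul (μ := P) (m := A.F i) (√A.Bsq)⁻¹ (A.X (i + 1)), hmean]
      with ω hmul hzero
    exact hmul.trans (by rw [hzero, Pi.zero_apply, mul_zero])
  · rw [A.increment_of_le hi, condExp_zero]

lemma condExp_increment_sq (A : MDS Ω P) (hi : i < A.n) :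
    P[fun ω ↦ A.increment i ω ^ 2 | A.filtration i] =ᵐ[P]
      fun ω ↦ A.Bsq⁻¹ * (P[fun ω' ↦ A.X (i + 1) ω' ^ 2 | A.F i]) ω := by
  rw [A.increment_sq_of_lt hi]
  exact condExp_const_mul _ _

lemma condExp_abs_increment_rpow_le (A : MDS Ω P) (hA : A.CondA4 ρ γ) (hρ : 0 < ρ) (i : ℕ) :
    ∀ᵐ ω ∂P, (P[fun ω' ↦ |A.increment i ω'| ^ (2 + ρ) | A.filtration i]) ω ≤
      γ ^ ρ * (P[fun ω' ↦ A.increment i ω' ^ 2 | A.filtration i]) ω := by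
  obtain ⟨hγ, -, -, hmoment⟩ := hA
  rcases lt_or_ge i A.n with hi | hi
  · have hB : 0 < √A.Bsq := Real.sqrt_pos.2 A.Bsq_pos
    rw [A.abs_increment_rpow_of_lt hi]
    filter_upwards [condExp_const_mul (μ := P) (m := A.filtration i) (√A.Bsq ^ (2 + ρ))⁻¹
      (fun ω ↦ |A.X (i + 1) ω| ^ (2 + ρ)), A.condExp_increment_sq hi,
      hmoment (i + 1) i.succ_pos hi] with ω hmul hsq hle
    rw [hmul, hsq, inv_mul_le_iff₀ (by positivity)]
    refine hle.trans_eq ?_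
    rw [Nat.add_sub_cancel, Real.mul_rpow hγ.le hB.le, Real.rpow_add hB, Real.rpow_two,
      Real.sq_sqrt A.Bsq_pos.le]
    field_simp [A.Bsq_pos.ne']
  · have hzero : (0 : ℝ) ^ (2 + ρ) = 0 := Real.zero_rpow (by linarith)
    simp [A.increment_of_le hi, hzero]

lemma abs_sum_condExp_increment_sq_sub_one_le (A : MDS Ω P) (hA : A.CondA1 δ) :
    ∀ᵐ ω ∂P, |partialSum (fun i ↦ P[fun ω' ↦ A.increment i ω' ^ 2 | A.filtration i]) A.n ω - 1| ≤
      δ ^ 2 := by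
  have hB := A.Bsq_pos
  have hvar : ∀ᵐ ω ∂P, ∀ i, i < A.n → (P[fun ω' ↦ A.increment i ω' ^ 2 | A.filtration i]) ω =
      A.Bsq⁻¹ * (P[fun ω' ↦ A.X (i + 1) ω' ^ 2 | A.F i]) ω :=
    ae_all_iff.2 fun i ↦ eventually_imp_distrib_left.2 fun hi ↦ A.condExp_increment_sq hi
  filter_upwards [hA.2.2, hvar] with ω hsum hvar
  have hCV : partialSum (fun i ↦ P[fun ω' ↦ A.increment i ω' ^ 2 | A.filtration i]) A.n ω =
      A.Bsq⁻¹ * A.CV ω := by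
    rw [CV, sum_Icc_one_eq_sum_range, Finset.mul_sum]
    exact Finset.sum_congr rfl fun i hi ↦ hvar i (Finset.mem_range.1 hi)
  rwa [hCV, inv_mul_eq_div, div_sub_one hB.ne', abs_div, abs_of_pos hB, div_le_iff₀ hB]

lemma isLyapunovMDS_increment [IsFiniteMeasure P] (A : MDS Ω P) (hA1 : A.CondA1 δ)
    (hA4 : A.CondA4 ρ γ) (hρ : 0 < ρ) (hρ1 : ρ ≤ 1) :
    IsLyapunovMDS P A.filtration A.increment (clippedVariance P A.filtration A.increment γ) A.n
      ρ γ 0 δ 1 :=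
  isLyapunovMDS_clippedVariance A.stronglyMeasurable_increment A.integrable_increment_sq
    (A.integrable_abs_increment_rpow hA4 hρ) A.condExp_increment
    (A.condExp_abs_increment_rpow_le hA4 hρ) (A.abs_sum_condExp_increment_sq_sub_one_le hA1)
    hρ hρ1 hA4.1

lemma zetaFn_eq_tiltExponent (A : MDS Ω P) (lam : ℝ) (hi : i < A.n) :
    A.zetaFn lam (i + 1) = fun ω ↦ tiltExponent (lam * A.increment i ω) := by
  ext ω
  rw [zetaFn, tiltExponent, increment, if_pos hi, mul_pow]

lemma Pconj_eq_conjugateMeasure (A : MDS Ω P) (lam : ℝ) :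
    A.Pconj lam = conjugateMeasure P (conjugateDensity P A.filtration A.increment lam) A.n := by
  have hZ : A.Zmult lam = partialProd (conjugateDensity P A.filtration A.increment lam) A.n := by
    ext ω
    rw [Zmult, prod_Icc_one_eq_prod_range]
    refine Finset.prod_congr rfl fun i hi ↦ ?_
    rw [A.zetaFn_eq_tiltExponent lam (Finset.mem_range.1 hi)]
    rfl
  rw [Pconj, conjugateMeasure, hZ]

lemma Ynorm_eq_partialSum (A : MDS Ω P) (hlam : lam ≠ 0) :
    A.Ynorm lam = partialSum (conjugateIncrement P A.filtration A.increment lam) A.n := by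
  ext ω
  rw [Ynorm, if_neg hlam, sum_Icc_one_eq_sum_range, Finset.sum_div]
  refine Finset.sum_congr rfl fun i hi ↦ ?_
  rw [bCoef, A.zetaFn_eq_tiltExponent lam (Finset.mem_range.1 hi)]
  rfl

lemma Ynorm_zero (A : MDS Ω P) : A.Ynorm 0 = partialSum A.increment A.n := by
  ext ω
  rw [Ynorm, if_pos rfl, sum_Icc_one_eq_sum_range]
  refine Finset.sum_congr rfl fun i hi ↦ ?_
  rw [increment, if_pos (Finset.mem_range.1 hi)]

lemma Pconj_zero [IsFiniteMeasure P] (A : MDS Ω P) : A.Pconj 0 = P := by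
  have hZ : A.Zmult 0 = 1 := by
    ext ω
    simp [Zmult, zetaFn, condExp_const (A.F_le _)]
  simp [Pconj, hZ]

theorem abs_Pconj_sub_stdNormalCDF_le [IsProbabilityMeasure P] (A : MDS Ω P) (hA1 : A.CondA1 δ)
    (hA4 : A.CondA4 ρ γ) (hρ : 0 < ρ) (hρ1 : ρ ≤ 1) (hlam : 0 ≤ lam) (hle : lam * γ ≤ 1) (x : ℝ) :
    |(A.Pconj lam {ω | A.Ynorm lam ω ≤ x}).toReal - Φ x| ≤
      2000 * (berryEsseenConst ρ 600000 + 1) * ((lam * γ) ^ ρ + berryEsseenRate ρ γ + δ) := by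
  have h := A.isLyapunovMDS_increment hA1 hA4 hρ hρ1
  obtain ⟨hδ, -⟩ := hA1
  obtain ⟨hγ, hγ4, -⟩ := hA4
  rcases hlam.eq_or_lt with rfl | hlam
  · have hK := berryEsseenConst_nonneg (C := 600000) hρ.le (by norm_num)
    have hrate := berryEsseenRate_nonneg (ρ := ρ) hγ.le
    have hprod : 0 ≤ (berryEsseenConst ρ 600000 + 1) * (berryEsseenRate ρ γ + δ) := by positivity
    rw [A.Pconj_zero, A.Ynorm_zero, zero_mul, Real.zero_rpow hρ.ne', zero_add]
    refine (abs_measureReal_sub_stdNormalCDF_le _ x).trans <|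
      ((h.mono_const (C' := 600000) (by norm_num)).normalKolmogorovDist_le hδ hγ4).trans ?_
    nlinarith
  · have := (h.isMultiplicativeMDS_conjugateDensity (fun _ ↦ A.increment_of_le) hlam
      hle).isProbabilityMeasure_conjugateMeasure
    rw [A.Pconj_eq_conjugateMeasure, A.Ynorm_eq_partialSum hlam.ne']
    exact (abs_measureReal_sub_stdNormalCDF_le _ x).trans
      (h.normalKolmogorovDist_partialSum_conjugateIncrement_le (fun _ ↦ A.increment_of_le)
        hδ hγ4 hlam hle)

end MDS

theorem berry_esseen_conjugate_martingale_general :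
    (∀ ρ : ℝ, 0 < ρ → ρ < 1 →
      ∃ c : ℝ, 0 < c ∧
        ∀ (Ω : Type) [MeasurableSpace Ω] (P : Measure Ω) [IsProbabilityMeasure P] (A : MDS Ω P)
          (δ γ lam : ℝ), A.CondA1 δ → A.CondA4 ρ γ → 0 ≤ lam → lam * γ ≤ 1 → ∀ x : ℝ,
            |(A.Pconj lam {ω | A.Ynorm lam ω ≤ x}).toReal - Φ x| ≤
              c * (lam ^ ρ * γ ^ ρ + γ ^ ρ + δ)) ∧
    (∃ c : ℝ, 0 < c ∧
        ∀ (Ω : Type) [MeasurableSpace Ω] (P : Measure Ω) [IsProbabilityMeasure P] (A : MDS Ω P)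
          (δ γ lam : ℝ), A.CondA1 δ → A.CondA4 1 γ → 0 ≤ lam → lam * γ ≤ 1 → ∀ x : ℝ,
            |(A.Pconj lam {ω | A.Ynorm lam ω ≤ x}).toReal - Φ x| ≤
              c * (lam * γ + γ * |Real.log γ| + δ)) := by
  refine ⟨fun ρ hρ hρ1 ↦ ?_, ?_⟩
  · have hK := berryEsseenConst_nonneg (C := 600000) hρ.le (by norm_num)
    have hκ : 1 ≤ 14 / (1 - ρ) := (one_le_div (sub_pos.2 hρ1)).2 (by linarith)
    refine ⟨2000 * (berryEsseenConst ρ 600000 + 1) * (14 / (1 - ρ)), by positivity,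
      fun Ω _ P _ A δ γ lam hA1 hA4 hlam hle x ↦ ?_⟩
    have hγ := hA4.1
    have hδ := hA1.1
    have hlamγ : 0 ≤ lam ^ ρ * γ ^ ρ := by positivity
    refine (A.abs_Pconj_sub_stdNormalCDF_le hA1 hA4 hρ hρ1.le hlam hle x).trans ?_
    rw [berryEsseenRate, if_pos hρ1, Real.mul_rpow hlam hγ.le, mul_assoc (2000 * _)]
    gcongr
    nlinarith
  · have hK := berryEsseenConst_nonneg (C := 600000) zero_le_one (by norm_num)
    refine ⟨2000 * (berryEsseenConst 1 600000 + 1) * 20, by positivity,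
      fun Ω _ P _ A δ γ lam hA1 hA4 hlam hle x ↦ ?_⟩
    have hγ := hA4.1
    have hδ := hA1.1
    have hlamγ : 0 ≤ lam * γ := by positivity
    refine (A.abs_Pconj_sub_stdNormalCDF_le hA1 hA4 one_pos le_rfl hlam hle x).trans ?_
    rw [berryEsseenRate, if_neg (lt_irrefl _), Real.rpow_one, Real.rpow_one, mul_assoc (2000 * _)]
    gcongr
    linarith

/-- Proposition 3.1: Berry–Esseen bounds for the conjugate martingale
`Y_n(λ)/λ` under the conjugate measure `P_λ`, assuming (A1) and (A4);
part [i] is the case `ρ ∈ (0,1)` and part [ii] the case `ρ = 1`. -/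
theorem berry_esseen_conjugate_martingale :
    (∀ ρ : ℝ, 0 < ρ → ρ < 1 →
      ∃ c : ℝ, 0 < c ∧
        ∀ (Ω : Type) [MeasurableSpace Ω] (P : Measure Ω), IsProbabilityMeasure P →
          ∀ (A : ℕ → MDS Ω P) (δ γ lam : ℕ → ℝ),
            (∀ n, (A n).CondA1 (δ n)) →
            (∀ n, (A n).CondA4 ρ (γ n)) →
            (∀ n, 0 ≤ lam n) →
            Tendsto (fun n => lam n * γ n) atTop (nhds 0) →
            ∀ᶠ n in atTop, ∀ x : ℝ,
              |((A n).Pconj (lam n) {ω | (A n).Ynorm (lam n) ω ≤ x}).toReal -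
                  stdNormalCDF x| ≤
                c * (lam n ^ ρ * γ n ^ ρ + γ n ^ ρ + δ n)) ∧
    (∃ c : ℝ, 0 < c ∧
        ∀ (Ω : Type) [MeasurableSpace Ω] (P : Measure Ω), IsProbabilityMeasure P →
          ∀ (A : ℕ → MDS Ω P) (δ γ lam : ℕ → ℝ),
            (∀ n, (A n).CondA1 (δ n)) →
            (∀ n, (A n).CondA4 1 (γ n)) →
            (∀ n, 0 ≤ lam n) →
            Tendsto (fun n => lam n * γ n) atTop (nhds 0) →
            ∀ᶠ n in atTop, ∀ x : ℝ,
              |((A n).Pconj (lam n) {ω | (A n).Ynorm (lam n) ω ≤ x}).toReal -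
                  stdNormalCDF x| ≤
                c * (lam n * γ n + γ n * |Real.log (γ n)| + δ n)) := by
  refine ⟨fun ρ hρ hρ1 ↦ ?_, ?_⟩
  · obtain ⟨c, hc, hbound⟩ := berry_esseen_conjugate_martingale_general.1 ρ hρ hρ1
    exact ⟨c, hc, fun Ω _ P _ A δ γ lam hA1 hA4 hlam hlim ↦
      (hlim.eventually_le_const zero_lt_one).mono fun n ↦
        hbound Ω P (A n) _ _ _ (hA1 n) (hA4 n) (hlam n)⟩
  · obtain ⟨c, hc, hbound⟩ := berry_esseen_conjugate_martingale_general.2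
    exact ⟨c, hc, fun Ω _ P _ A δ γ lam hA1 hA4 hlam hlim ↦
      (hlim.eventually_le_const zero_lt_one).mono fun n ↦
        hbound Ω P (A n) _ _ _ (hA1 n) (hA4 n) (hlam n)⟩
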